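/- arXiv:2501.18570 — 5 statements merged into one kernel-verified Lean document; each statement's English description precedes it below -/
import Mathlib

section
/- Let n ≥ 4 and let e, f be two vertex-disjoint edges of the complete graph K_n. The number of spanning trees of K_n containing both e and f equals 4·n^{n−4}; equivalently, the probability that a uniformly random spanning tree contains both e and f equals 4/n² = (2/n)·(2/n), so the events {e ∈ T} and {f ∈ T} are independent. -/
namespace ForestCount

open Finset SimpleGraph
open scoped Classical

variable {V : Type} [Fintype V]

/-- number of ordered adjacent pairs -/
noncomputable def dcard (F : SimpleGraph V) : ℕ := #{p : V × V | F.Adj p.1 p.2}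

/-- fiber -/
noncomputable def fib (π : V → V) (i : V) : Finset V := {w | π w = i}

/-- product of the component sizes -/
noncomputable def wt (π : V → V) : ℚ := ∏ i ∈ univ.image π, (#(fib π i) : ℚ)

/-- merge the components of `u` and `v` -/
noncomputable def mrg (π : V → V) (u v : V) : V → V := fun w => if π w = π v then π u else π w

/-- number of trees containing `F` -/
noncomputable def cnt (F : SimpleGraph V) : ℕ := Nat.card {T : SimpleGraph V // T.IsTree ∧ F ≤ T}

/-- `π` labels the components of the forest `F` -/
structure Inv (F : SimpleGraph V) (π : V → V) : Prop where
  acyc : F.IsAcyclic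
  reach : ∀ u v, F.Reachable u v ↔ π u = π v
  card : dcard F + 2 * #(univ.image π) = 2 * Fintype.card V

lemma dcard_eq (F : SimpleGraph V) : dcard F = 2 * #F.edgeFinset := by
  rw [← F.sum_degrees_eq_twice_card_edges, dcard, ← univ_product_univ,
    Finset.card_filter, Finset.sum_product]
  refine Finset.sum_congr rfl fun v _ => ?_
  rw [← card_neighborFinset_eq_degree, ← Finset.card_filter]
  congr 1
  ext w
  simp

lemma inv_bot : Inv (⊥ : SimpleGraph V) id := by
  refine ⟨isAcyclic_bot, fun u v => by simp [reachable_bot], ?_⟩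
  simp [dcard]

lemma mem_fib {π : V → V} {i w : V} : w ∈ fib π i ↔ π w = i := by simp [fib]

lemma fib_id (i : V) : fib (id : V → V) i = {i} := by
  ext w
  rw [mem_fib, mem_singleton, id]

lemma wt_id : wt (id : V → V) = 1 := by
  unfold wt
  refine Finset.prod_eq_one fun i _ => ?_
  simp [fib_id]

lemma image_mrg (π : V → V) (u v : V) (h : π u ≠ π v) :
    univ.image (mrg π u v) = (univ.image π).erase (π v) := by
  ext x
  simp only [mem_image, mem_univ, true_and, mem_erase, mrg]
  constructor
  · rintro ⟨w, rfl⟩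
    split_ifs with hw
    · exact ⟨h, u, rfl⟩
    · exact ⟨hw, w, rfl⟩
  · rintro ⟨hx, w, rfl⟩
    exact ⟨w, by simp [hx]⟩

lemma card_image_mrg (π : V → V) (u v : V) (h : π u ≠ π v) :
    #(univ.image (mrg π u v)) + 1 = #(univ.image π) := by
  rw [image_mrg π u v h]
  exact Finset.card_erase_add_one (by simp)

lemma fib_pos (π : V → V) (u : V) : (0 : ℚ) < #(fib π (π u)) := by
  have : u ∈ fib π (π u) := by simp [fib]
  exact_mod_cast Finset.card_pos.mpr ⟨u, this⟩

lemma wt_mrg (π : V → V) (u v : V) (h : π u ≠ π v) :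
    wt (mrg π u v) = wt π * (1 / #(fib π (π u)) + 1 / #(fib π (π v))) := by
  have hu := fib_pos π u
  have hv := fib_pos π v
  have hmv : π v ∈ univ.image π := by simp
  have hmu : π u ∈ (univ.image π).erase (π v) := by simp [h]
  unfold wt
  rw [image_mrg π u v h, ← Finset.mul_prod_erase _ _ hmv, ← Finset.mul_prod_erase _ _ hmu,
    ← Finset.mul_prod_erase _ _ hmu]
  have h1 : ∏ x ∈ ((univ.image π).erase (π v)).erase (π u), (#(fib (mrg π u v) x) : ℚ)
      = ∏ x ∈ ((univ.image π).erase (π v)).erase (π u), (#(fib π x) : ℚ) := by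
    refine Finset.prod_congr rfl fun x hx => ?_
    simp only [mem_erase] at hx
    congr 2
    ext w
    simp only [mem_fib, mrg]
    split_ifs with hw
    · constructor
      · intro h2; exact absurd h2.symm hx.1
      · intro h2; exact absurd (h2.symm.trans hw) hx.2.1
    · rfl
  have h2 : fib (mrg π u v) (π u) = fib π (π u) ∪ fib π (π v) := by
    ext w
    simp only [mem_fib, mrg, mem_union]
    split_ifs with hw <;> simp [hw]
  have h3 : Disjoint (fib π (π u)) (fib π (π v)) := by
    rw [Finset.disjoint_left]
    intro w hw hw'
    rw [mem_fib] at hw hw'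
    exact h (hw.symm.trans hw')
  rw [h1, h2, Finset.card_union_of_disjoint h3]
  push_cast
  field_simp
  ring

lemma Inv.step {F : SimpleGraph V} {π : V → V} (hI : Inv F π) {u v : V} (h : π u ≠ π v) :
    Inv (F ⊔ edge u v) (mrg π u v) := by
  have hnr : ¬ F.Reachable u v := fun hr => h ((hI.reach u v).1 hr)
  have hne : u ≠ v := fun e => h (by rw [e])
  have huv : (F ⊔ edge u v).Reachable u v := Adj.reachable (by simp [edge_adj, hne])
  have mono : ∀ {x y}, π x = π y → (F ⊔ edge u v).Reachable x y := fun {x y} e =>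
    ((hI.reach x y).2 e).mono le_sup_left
  refine ⟨hI.acyc.sup_edge_of_not_reachable hnr, fun x y => ⟨?_, ?_⟩, ?_⟩
  · rintro ⟨p⟩
    induction p with
    | nil => rfl
    | @cons x z y hxz _ ih =>
      rw [← ih]
      rw [sup_adj, edge_adj] at hxz
      rcases hxz with hxz | ⟨⟨rfl, rfl⟩ | ⟨rfl, rfl⟩, _⟩
      · simp [mrg, (hI.reach _ _).1 hxz.reachable]
      · simp [mrg]
      · simp [mrg]
  · intro e
    simp only [mrg] at e
    split_ifs at e with h1 h2 h2
    · exact mono (h1.trans h2.symm)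
    · exact (mono h1).trans (huv.symm.trans (mono e))
    · exact (mono e).trans (huv.trans (mono h2.symm))
    · exact mono e
  · have h1 := card_image_mrg π u v h
    have h2 := hI.card
    have h3 : #(F ⊔ edge u v).edgeFinset = #F.edgeFinset + 1 := by
      convert F.card_edgeFinset_sup_edge (fun ha => hnr ha.reachable) hne
    have h4 : dcard (F ⊔ edge u v) = 2 * (#F.edgeFinset + 1) := by
      rw [dcard_eq, ← h3]
      congr!
    rw [dcard_eq] at h2
    omega

lemma adj_of_tree {F T : SimpleGraph V} {π : V → V} (hI : Inv F π) (hT : T.IsTree) (hle : F ≤ T)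
    {u v : V} : F.Adj u v ↔ T.Adj u v ∧ π u = π v := by
  constructor
  · exact fun h => ⟨hle h, (hI.reach u v).1 h.reachable⟩
  · rintro ⟨h1, h2⟩
    have hb := isAcyclic_iff_forall_adj_isBridge.1 hT.isAcyclic h1
    exact (hb.anti hle).reachable_iff_adj.1 ((hI.reach u v).2 h2)

lemma tree_pairs {F T : SimpleGraph V} {π : V → V} (hI : Inv F π) (hT : T.IsTree) (hle : F ≤ T) :
    #{p : V × V | π p.1 ≠ π p.2 ∧ T.Adj p.1 p.2} + 2 = 2 * #(univ.image π) := by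
  have h1 := hI.card
  have h2 : dcard T + 2 = 2 * Fintype.card V := by
    rw [dcard_eq]; have := hT.card_edgeFinset; omega
  have h3 : dcard T = dcard F + #{p : V × V | π p.1 ≠ π p.2 ∧ T.Adj p.1 p.2} := by
    unfold dcard
    rw [← Finset.card_filter_add_card_filter_not (s := {p : V × V | T.Adj p.1 p.2})
      (fun p => π p.1 = π p.2), Finset.filter_filter, Finset.filter_filter]
    congr 2
    · ext p; simp [adj_of_tree hI hT hle]
    · ext p; simp [and_comm]
  omega

lemma cnt_eq (F : SimpleGraph V) :
    cnt F = #{T : SimpleGraph V | T.IsTree ∧ F ≤ T} := by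
  rw [cnt, Nat.card_eq_fintype_card, Fintype.card_subtype]

lemma double_count {F : SimpleGraph V} {π : V → V} (hI : Inv F π) :
    ∑ p : V × V with π p.1 ≠ π p.2, cnt (F ⊔ edge p.1 p.2) + 2 * cnt F
      = 2 * #(univ.image π) * cnt F := by
  have h1 : ∑ p : V × V with π p.1 ≠ π p.2, cnt (F ⊔ edge p.1 p.2)
      = ∑ T : SimpleGraph V with T.IsTree ∧ F ≤ T,
        #{p : V × V | π p.1 ≠ π p.2 ∧ T.Adj p.1 p.2} := by
    have h2 := Finset.sum_card_bipartiteAbove_eq_sum_card_bipartiteBelow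
      (s := ({p : V × V | π p.1 ≠ π p.2} : Finset (V × V)))
      (t := ({T : SimpleGraph V | T.IsTree ∧ F ≤ T} : Finset (SimpleGraph V)))
      (fun p T => T.Adj p.1 p.2)
    convert h2 using 1
    · refine Finset.sum_congr rfl fun p hp => ?_
      rw [cnt_eq, Finset.bipartiteAbove, Finset.filter_filter]
      congr 1
      ext T
      have hne : p.1 ≠ p.2 := fun e => (by simpa using hp : π p.1 ≠ π p.2) (by rw [e])
      simp [hne, and_assoc]
    · refine Finset.sum_congr rfl fun T hT => ?_
      rw [Finset.bipartiteBelow, Finset.filter_filter]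
  rw [h1, cnt_eq, mul_comm 2, ← smul_eq_mul, ← Finset.sum_const, ← Finset.sum_add_distrib,
    mul_comm _ (Finset.card _), ← smul_eq_mul, ← Finset.sum_const]
  refine Finset.sum_congr rfl fun T hT => ?_
  simp only [mem_filter, mem_univ, true_and] at hT
  exact tree_pairs hI hT.1 hT.2

lemma sum_inv (π : V → V) (i : V) :
    ∑ v : V with π i ≠ π v, (1 / #(fib π (π v)) : ℚ) + 1 = #(univ.image π) := by
  have h1 : ∀ j ∈ univ.image π, ∑ v : V with π v = j, (1 / #(fib π (π v)) : ℚ) = 1 := by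
    intro j hj
    obtain ⟨w, -, rfl⟩ := Finset.mem_image.1 hj
    have : ∑ v : V with π v = π w, (1 / #(fib π (π v)) : ℚ)
        = ∑ v : V with π v = π w, (1 / #(fib π (π w)) : ℚ) :=
      Finset.sum_congr rfl fun v hv => by rw [(Finset.mem_filter.1 hv).2]
    rw [this, Finset.sum_const, nsmul_eq_mul]
    have := fib_pos π w
    change (#(fib π (π w)) : ℚ) * _ = 1
    field_simp
  have h2 : ∑ v : V, (1 / #(fib π (π v)) : ℚ) = #(univ.image π) := by
    rw [← Finset.sum_fiberwise_of_maps_to (t := univ.image π) (g := π) (by simp),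
      Finset.sum_congr rfl h1]
    simp
  rw [← h2, ← Finset.sum_filter_add_sum_filter_not univ (fun v => π i ≠ π v)]
  congr 1
  refine (h1 (π i) (by simp)).symm.trans (Finset.sum_congr ?_ fun _ _ => rfl)
  ext v; simp [eq_comm]

lemma sum_pairs (π : V → V) :
    ∑ p : V × V with π p.1 ≠ π p.2, (1 / #(fib π (π p.1)) + 1 / #(fib π (π p.2)) : ℚ)
      = 2 * Fintype.card V * (#(univ.image π) - 1) := by
  have hs : ∑ p : V × V with π p.1 ≠ π p.2, (1 / #(fib π (π p.2)) : ℚ)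
      = Fintype.card V * (#(univ.image π) - 1) := by
    rw [Finset.sum_filter, ← univ_product_univ, Finset.sum_product]
    have : ∀ x ∈ (univ : Finset V), ∑ y : V, (if π x ≠ π y then (1 / #(fib π (π y)) : ℚ) else 0)
        = #(univ.image π) - 1 := by
      intro x _
      rw [← Finset.sum_filter, ← sum_inv π x]; ring
    rw [Finset.sum_congr rfl this]
    simp [mul_sub]
  have hs' : ∑ p : V × V with π p.1 ≠ π p.2, (1 / #(fib π (π p.1)) : ℚ)
      = Fintype.card V * (#(univ.image π) - 1) := by
    rw [← hs]
    refine Finset.sum_nbij' Prod.swap Prod.swap ?_ ?_ ?_ ?_ ?_ <;> simp [eq_comm]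
  rw [Finset.sum_add_distrib, hs, hs']; ring

theorem main (k : ℕ) : ∀ (F : SimpleGraph V) (π : V → V), Inv F π → #(univ.image π) = k + 1 →
    (Fintype.card V : ℚ) ^ 2 * cnt F = (Fintype.card V : ℚ) ^ (k + 1) * wt π := by
  induction k with
  | zero =>
    intro F π hI hk
    obtain ⟨x, hx⟩ := Finset.card_eq_one.1 hk
    have hπ : ∀ w, π w = x := fun w => by
      have : π w ∈ univ.image π := by simp
      rwa [hx, mem_singleton] at this
    have hF : F.IsTree := by
      haveI : Nonempty V := ⟨x⟩
      exact ⟨⟨fun u v => (hI.reach u v).2 (by rw [hπ, hπ])⟩, hI.acyc⟩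
    have hc : cnt F = 1 := by
      rw [cnt_eq, Finset.card_eq_one]
      refine ⟨F, ?_⟩
      ext T
      simp only [mem_filter, mem_univ, true_and, mem_singleton]
      constructor
      · rintro ⟨hT, hle⟩
        ext u v
        rw [adj_of_tree hI hT hle]
        simp [hπ]
      · rintro rfl
        exact ⟨hF, le_rfl⟩
    have hw : wt π = Fintype.card V := by
      simp [wt, hx, fib, hπ]
    rw [hc, hw]; push_cast; ring
  | succ k ih =>
    intro F π hI hk
    have hd : (∑ p : V × V with π p.1 ≠ π p.2, (cnt (F ⊔ edge p.1 p.2) : ℚ)) + 2 * cnt F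
      = 2 * #(univ.image π) * cnt F := by exact_mod_cast double_count hI
    have hs : (Fintype.card V : ℚ) ^ 2 * ∑ p : V × V with π p.1 ≠ π p.2,
        (cnt (F ⊔ edge p.1 p.2) : ℚ)
        = (Fintype.card V : ℚ) ^ (k + 1) * wt π *
          (2 * Fintype.card V * (#(univ.image π) - 1)) := by
      rw [← sum_pairs, Finset.mul_sum, Finset.mul_sum]
      refine Finset.sum_congr rfl fun p hp => ?_
      have hp' : π p.1 ≠ π p.2 := by simpa using hp
      rw [ih _ _ (hI.step hp') (by have := card_image_mrg π _ _ hp'; omega), wt_mrg π _ _ hp']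
      ring
    rw [hk] at hd hs
    push_cast at hd hs
    have hk0 : (2 * (k + 1) : ℚ) ≠ 0 := by positivity
    apply mul_left_cancel₀ hk0
    linear_combination (Fintype.card V : ℚ) ^ 2 * (-1) * hd + hs

lemma cnt_one (a b : V) (hab : a ≠ b) :
    (Fintype.card V : ℚ) ^ 2 * cnt (edge a b) = (Fintype.card V : ℚ) ^ (Fintype.card V - 1) * 2 := by
  have hI := (inv_bot (V := V)).step (u := a) (v := b) hab
  have hc := card_image_mrg (id : V → V) a b hab
  have hc' : #(univ.image (mrg (id : V → V) a b)) + 1 = Fintype.card V := by simpa using hc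
  have hpos : 0 < #(univ.image (mrg (id : V → V) a b)) := Finset.card_pos.2 ⟨mrg id a b a, by simp⟩
  have := main (#(univ.image (mrg (id : V → V) a b)) - 1) _ _ hI (by omega)
  rw [bot_sup_eq, wt_mrg _ _ _ hab, wt_id] at this
  rw [this]
  congr 1
  · congr 1; omega
  · simp [fib_id]; norm_num

lemma cnt_two (a b c d : V) (hab : a ≠ b) (hac : a ≠ c) (had : a ≠ d)
    (hbc : b ≠ c) (hbd : b ≠ d) (hcd : c ≠ d) :
    (Fintype.card V : ℚ) ^ 2 * cnt (edge a b ⊔ edge c d)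
      = (Fintype.card V : ℚ) ^ (Fintype.card V - 2) * 4 := by
  have hI := (inv_bot (V := V)).step (u := a) (v := b) hab
  have e1 : mrg (id : V → V) a b c = c := by simp [mrg, hbc.symm]
  have e2 : mrg (id : V → V) a b d = d := by simp [mrg, hbd.symm]
  have hcd' : mrg (id : V → V) a b c ≠ mrg (id : V → V) a b d := by rwa [e1, e2]
  have hI2 := hI.step hcd'
  have hc := card_image_mrg (id : V → V) a b hab
  have hc' : #(univ.image (mrg (id : V → V) a b)) + 1 = Fintype.card V := by simpa using hc
  have hc2 := card_image_mrg _ c d hcd'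
  have hpos : 0 < #(univ.image (mrg (mrg (id : V → V) a b) c d)) :=
    Finset.card_pos.2 ⟨mrg (mrg id a b) c d a, by simp⟩
  have := main (#(univ.image (mrg (mrg (id : V → V) a b) c d)) - 1) _ _ hI2 (by omega)
  have f1 : fib (mrg (id : V → V) a b) c = {c} := by
    ext w; simp only [mem_fib, mrg, mem_singleton, id]
    split_ifs with h
    · subst h; simp [hac, hbc]
    · rfl
  have f2 : fib (mrg (id : V → V) a b) d = {d} := by
    ext w; simp only [mem_fib, mrg, mem_singleton, id]
    split_ifs with h
    · subst h; simp [had, hbd]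
    · rfl
  rw [bot_sup_eq, wt_mrg _ _ _ hcd', wt_mrg _ _ _ hab, wt_id, e1, e2, f1, f2] at this
  rw [this]
  congr 1
  · congr 1; omega
  · simp [fib_id]; norm_num

end ForestCount

/-- For `n ≥ 4` and two vertex-disjoint edges `{a,b}`, `{c,d}` of `K_n`,
the number of spanning trees of `K_n` containing both edges equals `4 · n^(n-4)` (read in
`ℚ`, with an integer power of `n`); equivalently, the probability that a uniformly random
spanning tree contains both edges equals `4/n² = (2/n)·(2/n)`, i.e. the events
`{e ∈ T}` and `{f ∈ T}` are independent. -/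
theorem spanning_trees_containing_two_disjoint_edges (n : ℕ) (hn : 4 ≤ n)
    (a b c d : Fin n) (hab : a ≠ b) (hac : a ≠ c) (had : a ≠ d)
    (hbc : b ≠ c) (hbd : b ≠ d) (hcd : c ≠ d) :
    (Nat.card {T : SimpleGraph (Fin n) // T.IsTree ∧ T.Adj a b ∧ T.Adj c d} : ℚ) =
        4 * (n : ℚ) ^ ((n : ℤ) - 4) ∧
      (Nat.card {T : SimpleGraph (Fin n) // T.IsTree ∧ T.Adj a b ∧ T.Adj c d} : ℚ) /
          (n : ℚ) ^ (n - 2) = 4 / n ^ 2 ∧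
      (Nat.card {T : SimpleGraph (Fin n) // T.IsTree ∧ T.Adj a b ∧ T.Adj c d} : ℚ) /
          (n : ℚ) ^ (n - 2) =
        ((Nat.card {T : SimpleGraph (Fin n) // T.IsTree ∧ T.Adj a b} : ℚ) /
            (n : ℚ) ^ (n - 2)) *
          ((Nat.card {T : SimpleGraph (Fin n) // T.IsTree ∧ T.Adj c d} : ℚ) /
            (n : ℚ) ^ (n - 2)) := by
  have hn0 : (n : ℚ) ≠ 0 := by
    have : n ≠ 0 := by omega
    exact_mod_cast this
  have one : ∀ x y : Fin n, x ≠ y →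
      (Nat.card {T : SimpleGraph (Fin n) // T.IsTree ∧ T.Adj x y} : ℚ)
        = 2 * (n : ℚ) ^ ((n : ℤ) - 3) := by
    intro x y hxy
    have h := ForestCount.cnt_one x y hxy
    have e : ForestCount.cnt (SimpleGraph.edge x y)
        = Nat.card {T : SimpleGraph (Fin n) // T.IsTree ∧ T.Adj x y} := by
      simp [ForestCount.cnt, hxy]
    rw [e, Fintype.card_fin] at h
    apply mul_left_cancel₀ (pow_ne_zero 2 hn0)
    rw [h, ← zpow_natCast, ← zpow_natCast, mul_left_comm, ← zpow_add₀ hn0, mul_comm]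
    congr 2
    push_cast [show 1 ≤ n by omega]
    ring
  have two : (Nat.card {T : SimpleGraph (Fin n) // T.IsTree ∧ T.Adj a b ∧ T.Adj c d} : ℚ)
        = 4 * (n : ℚ) ^ ((n : ℤ) - 4) := by
    have h := ForestCount.cnt_two a b c d hab hac had hbc hbd hcd
    have e : ForestCount.cnt (SimpleGraph.edge a b ⊔ SimpleGraph.edge c d)
        = Nat.card {T : SimpleGraph (Fin n) // T.IsTree ∧ T.Adj a b ∧ T.Adj c d} := by
      simp [ForestCount.cnt, hab, hcd]
    rw [e, Fintype.card_fin] at h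
    apply mul_left_cancel₀ (pow_ne_zero 2 hn0)
    rw [h, ← zpow_natCast, ← zpow_natCast, mul_left_comm, ← zpow_add₀ hn0, mul_comm]
    congr 2
    push_cast [show 2 ≤ n by omega]
    ring
  rw [one a b hab, one c d hcd, two]
  obtain ⟨m, rfl⟩ : ∃ m, n = m + 4 := ⟨n - 4, by omega⟩
  have z4 : ((m + 4 : ℕ) : ℤ) - 4 = (m : ℕ) := by push_cast; ring
  have z3 : ((m + 4 : ℕ) : ℤ) - 3 = (m + 1 : ℕ) := by push_cast; ring
  have z2 : m + 4 - 2 = m + 2 := by omega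
  rw [z4, z3, z2, zpow_natCast, zpow_natCast]
  refine ⟨rfl, ?_, ?_⟩
  · field_simp
    ring
  · field_simp
    ring
end

section
/- Fix a positive integer r. There exists a constant C > 0 such that for all n ≥ 2, the r-th moment of X_n satisfies |E(X_n^r) − e^{−2} Σ_{k≥0} 2^k k^r / k!| ≤ C/n. In particular, E(X_n^r) converges as n → ∞ to the r-th moment e^{−2} Σ_{k≥0} 2^k k^r / k! of a Poisson random variable with expected value 2. -/
open Classical in
/-- The `r`-th moment `E(Xₙʳ)` of the number `Xₙ` of common edges of two spanning trees
of `K_n` chosen independently and uniformly at random: the sum of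
`|E(T₁) ∩ E(T₂)|^r` over all ordered pairs of spanning trees of `K_n`, divided by the
number `n^(2(n-2))` of such pairs. -/
noncomputable def commonEdgesMoment (n r : ℕ) : ℝ :=
  (∑ p : SimpleGraph (Fin n) × SimpleGraph (Fin n),
      if p.1.IsTree ∧ p.2.IsTree then (Nat.card (p.1 ⊓ p.2).edgeSet : ℝ) ^ r else 0) /
    (n : ℝ) ^ (2 * (n - 2))

open Classical in
/-- number of spanning trees containing `F`. -/
noncomputable def numTreesAbove {V : Type} [Fintype V] [DecidableEq V] (F : SimpleGraph V) : ℕ :=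
  (Finset.univ.filter fun T : SimpleGraph V => T.IsTree ∧ F ≤ T).card

/-- fibre size of a labelling. -/
def fibSize {V : Type} [Fintype V] [DecidableEq V] (f : V → V) (l : V) : ℕ :=
  (Finset.univ.filter fun w => f w = l).card

/-- number of labels. -/
def numLab {V : Type} [Fintype V] [DecidableEq V] (f : V → V) : ℕ := (Finset.univ.image f).card

/-- product of fibre sizes. -/
def prodLab {V : Type} [Fintype V] [DecidableEq V] (f : V → V) : ℕ := ∏ l, max (fibSize f l) 1

/-- merging label `b` into label `a`. -/
def mergeLab {V : Type} [DecidableEq V] (f : V → V) (a b : V) : V → V :=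
  fun w => if f w = b then a else f w

/-- `f` labels the components of `F`. -/
def IsLab {V : Type} (F : SimpleGraph V) (f : V → V) : Prop :=
  ∀ u v, F.Reachable u v ↔ f u = f v

section lab
set_option linter.unusedSectionVars false
variable {V : Type} [Fintype V] [DecidableEq V]

lemma fibSize_pos (f : V → V) (u : V) : 0 < fibSize f (f u) :=
  Finset.card_pos.2 ⟨u, by simp⟩

lemma sum_fibSize (f : V → V) : ∑ l, fibSize f l = Fintype.card V := by
  unfold fibSize
  rw [← Finset.card_eq_sum_card_fiberwise (by simp)]
  rfl

lemma fibSize_merge_left (f : V → V) {a b : V} (hab : a ≠ b) :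
    fibSize (mergeLab f a b) a = fibSize f a + fibSize f b := by
  unfold fibSize mergeLab
  rw [← Finset.card_union_of_disjoint]
  · congr 1; ext w; simp only [Finset.mem_filter, Finset.mem_univ, true_and, Finset.mem_union]
    split_ifs <;> simp_all
  · rw [Finset.disjoint_left]; intro w; simp; intro h; rw [h]; exact hab

lemma fibSize_merge_right (f : V → V) {a b : V} (hab : a ≠ b) :
    fibSize (mergeLab f a b) b = 0 := by
  unfold fibSize mergeLab
  rw [Finset.card_eq_zero, Finset.filter_eq_empty_iff]
  intro w _
  split_ifs <;> simp_all

lemma fibSize_merge_other (f : V → V) {a b l : V} (ha : l ≠ a) (hb : l ≠ b) :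
    fibSize (mergeLab f a b) l = fibSize f l := by
  unfold fibSize mergeLab
  congr 1; ext w; simp only [Finset.mem_filter, Finset.mem_univ, true_and]
  split_ifs with h
  · simp [h, ha.symm, hb.symm]
  · rfl

lemma prodLab_merge (f : V → V) {u v : V} (h : f u ≠ f v) :
    (prodLab (mergeLab f (f u) (f v)) : ℝ) =
      prodLab f * (1 / (fibSize f (f u) : ℝ) + 1 / (fibSize f (f v) : ℝ)) := by
  have hu : (0:ℝ) < fibSize f (f u) := by exact_mod_cast fibSize_pos f u
  have hv : (0:ℝ) < fibSize f (f v) := by exact_mod_cast fibSize_pos f v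
  have hu1 : (1:ℝ) ≤ fibSize f (f u) := by exact_mod_cast fibSize_pos f u
  have hv1 : (1:ℝ) ≤ fibSize f (f v) := by exact_mod_cast fibSize_pos f v
  have hpos : ∀ l, (0:ℝ) < max (fibSize f l : ℝ) 1 := fun l => lt_max_of_lt_right one_pos
  have key : ∏ l, (max (fibSize (mergeLab f (f u) (f v)) l : ℝ) 1 / max (fibSize f l : ℝ) 1)
      = (fibSize f (f u) + fibSize f (f v)) / fibSize f (f u) * (1 / fibSize f (f v)) := by
    rw [Finset.prod_eq_mul (f u) (f v) h]
    · rw [fibSize_merge_left f h, fibSize_merge_right f h, max_eq_left hu1, max_eq_left hv1]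
      push_cast
      rw [max_eq_left (by linarith), max_eq_right (by norm_num)]
    · rintro l - ⟨h1, h2⟩
      rw [fibSize_merge_other f h1 h2]
      exact div_self (hpos l).ne'
    · simp
    · simp
  rw [Finset.prod_div_distrib, div_eq_iff (Finset.prod_pos fun l _ => hpos l).ne'] at key
  unfold prodLab
  push_cast
  rw [key]
  field_simp
  ring

lemma numLab_merge (f : V → V) {u v : V} (h : f u ≠ f v) :
    numLab (mergeLab f (f u) (f v)) + 1 = numLab f := by
  unfold numLab
  have : Finset.univ.image (mergeLab f (f u) (f v)) = (Finset.univ.image f).erase (f v) := by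
    ext l
    simp only [Finset.mem_image, Finset.mem_univ, true_and, Finset.mem_erase, mergeLab]
    constructor
    · rintro ⟨w, rfl⟩
      split_ifs with hw
      · exact ⟨h, u, rfl⟩
      · exact ⟨hw, w, rfl⟩
    · rintro ⟨hl, w, rfl⟩
      exact ⟨w, by simp [hl]⟩
  rw [this, Finset.card_erase_add_one]
  simp

lemma prodLab_le (f : V → V) : prodLab f * 2 ^ numLab f ≤ 2 ^ Fintype.card V := by
  have h1 : numLab f = ∑ l, min (fibSize f l) 1 := by
    unfold numLab
    rw [Finset.card_eq_sum_ones, ← Finset.sum_subset (Finset.subset_univ (Finset.univ.image f))]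
    · refine Finset.sum_congr rfl fun l hl => ?_
      simp only [Finset.mem_image, Finset.mem_univ, true_and] at hl
      obtain ⟨w, rfl⟩ := hl
      have := fibSize_pos f w
      omega
    · intro l _ hl
      simp only [Finset.mem_image, Finset.mem_univ, true_and, not_exists] at hl
      have : fibSize f l = 0 := by
        unfold fibSize
        rw [Finset.card_eq_zero, Finset.filter_eq_empty_iff]
        intro w _; exact hl w
      omega
  rw [h1, ← sum_fibSize f, ← Finset.prod_pow_eq_pow_sum, ← Finset.prod_pow_eq_pow_sum, prodLab,
    ← Finset.prod_mul_distrib]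
  refine Finset.prod_le_prod' fun l _ => ?_
  rcases Nat.eq_zero_or_pos (fibSize f l) with h | h
  · simp [h]
  · rw [max_eq_left h, min_eq_right h]
    obtain ⟨m, hm⟩ := Nat.exists_eq_add_of_lt h
    rw [hm]
    have := Nat.lt_two_pow_self (n := m)
    rw [pow_one, pow_succ]
    have : 0 + m + 1 ≤ 2 ^ (0 + m) := by simpa using this
    omega

lemma sum_inv_fibSize (f : V → V) : ∑ u, 1 / (fibSize f (f u) : ℝ) = numLab f := by
  rw [Finset.sum_comp (fun l => 1 / (fibSize f l : ℝ)) f]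
  unfold numLab
  rw [Finset.card_eq_sum_ones]
  push_cast
  refine Finset.sum_congr rfl fun l hl => ?_
  simp only [Finset.mem_image, Finset.mem_univ, true_and] at hl
  obtain ⟨w, rfl⟩ := hl
  have : (0:ℝ) < fibSize f (f w) := by exact_mod_cast fibSize_pos f w
  change (_ : ℕ) • _ = _
  rw [nsmul_eq_mul]
  change (fibSize f (f w) : ℝ) * _ = _
  field_simp

lemma sum_pairs (f : V → V) :
    ∑ u, ∑ v, (if f u ≠ f v then (1 / (fibSize f (f u) : ℝ) + 1 / (fibSize f (f v) : ℝ)) else 0)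
      = 2 * (Fintype.card V * (numLab f - 1)) := by
  have h1 : ∑ u, ∑ v, (if f u ≠ f v then 1 / (fibSize f (f u) : ℝ) else 0)
      = Fintype.card V * (numLab f - 1) := by
    have : ∀ u, ∑ v, (if f u ≠ f v then 1 / (fibSize f (f u) : ℝ) else 0)
        = Fintype.card V * (1 / (fibSize f (f u) : ℝ)) - 1 := by
      intro u
      have hp : (0:ℝ) < fibSize f (f u) := by exact_mod_cast fibSize_pos f u
      have e : ∀ v, (if f u ≠ f v then 1 / (fibSize f (f u) : ℝ) else 0)
        = 1 / (fibSize f (f u) : ℝ) - (if f v = f u then 1 / (fibSize f (f u) : ℝ) else 0) := by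
        intro v
        by_cases h : f u = f v
        · simp [h]
        · simp [h, Ne.symm h]
      simp_rw [e]
      rw [Finset.sum_sub_distrib, ← Finset.sum_filter, Finset.sum_const, Finset.sum_const,
        nsmul_eq_mul, nsmul_eq_mul]
      congr 1
      change (fibSize f (f u) : ℝ) * _ = _
      field_simp
    simp_rw [this]
    rw [Finset.sum_sub_distrib, ← Finset.mul_sum, sum_inv_fibSize]
    simp; ring
  have h2 : ∑ u, ∑ v, (if f u ≠ f v then 1 / (fibSize f (f v) : ℝ) else 0)
      = Fintype.card V * (numLab f - 1) := by
    rw [Finset.sum_comm, ← h1]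
    simp_rw [ne_comm]
  rw [two_mul]
  nth_rw 1 [← h1]
  rw [← h2, ← Finset.sum_add_distrib]
  simp_rw [← Finset.sum_add_distrib]
  refine Finset.sum_congr rfl fun u _ => Finset.sum_congr rfl fun v _ => ?_
  split_ifs <;> simp

lemma exists_isLab (F : SimpleGraph V) : ∃ f, IsLab F f := by
  classical
  refine ⟨fun u => (F.connectedComponentMk u).out, fun u v => ?_⟩
  rw [← SimpleGraph.ConnectedComponent.eq]
  constructor
  · intro h; simp only [h]
  · intro h
    have := congrArg F.connectedComponentMk h
    have e : ∀ w, F.connectedComponentMk (F.connectedComponentMk w).out = F.connectedComponentMk w :=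
      fun w => Quot.out_eq _
    rwa [e, e] at this

lemma IsLab.merge {F : SimpleGraph V} {f : V → V} (hf : IsLab F f) {u v : V} (h : f u ≠ f v) :
    IsLab (F ⊔ SimpleGraph.edge u v) (mergeLab f (f u) (f v)) := by
  have huv : u ≠ v := fun e => h (by rw [e])
  intro x y
  constructor
  · rintro ⟨p⟩
    induction p with
    | nil => rfl
    | @cons a b c hab p ih =>
      rw [← ih]
      rw [SimpleGraph.sup_adj, SimpleGraph.edge_adj] at hab
      rcases hab with hab | ⟨⟨rfl, rfl⟩ | ⟨rfl, rfl⟩, -⟩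
      · simp [mergeLab, (hf a b).1 hab.reachable]
      · simp [mergeLab]
      · simp [mergeLab]
  · have h1 : ∀ x y, f x = f y → (F ⊔ SimpleGraph.edge u v).Reachable x y := fun x y e =>
      ((hf x y).2 e).mono le_sup_left
    have h2 : (F ⊔ SimpleGraph.edge u v).Reachable u v :=
      SimpleGraph.Adj.reachable (Or.inr (by simp [SimpleGraph.edge_adj, huv]))
    intro e
    simp only [mergeLab] at e
    split_ifs at e with hx hy hy
    · exact h1 _ _ (hx.trans hy.symm)
    · exact ((h1 _ _ hx).trans h2.symm).trans (h1 _ _ e)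
    · exact ((h1 _ _ e).trans h2).trans (h1 _ _ hy.symm)
    · exact h1 _ _ e

lemma numLab_pos [Nonempty V] (f : V → V) : 0 < numLab f :=
  Finset.card_pos.2 (Finset.univ_nonempty.image f)

lemma isTree_of_numLab [Nonempty V] {F : SimpleGraph V} {f : V → V} (hF : F.IsAcyclic)
    (hf : IsLab F f) (h : numLab f = 1) : F.IsTree := by
  refine ⟨⟨fun u v => (hf u v).2 ?_⟩, hF⟩
  exact Finset.card_le_one.1 h.le _ (by simp) _ (by simp)

open Classical in
lemma card_edges [Nonempty V] : ∀ (c : ℕ) (F : SimpleGraph V) (f : V → V), F.IsAcyclic →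
    IsLab F f → numLab f = c + 1 → F.edgeFinset.card + numLab f = Fintype.card V := by
  intro c
  induction c with
  | zero =>
    intro F f hF hf h
    rw [h]
    exact (isTree_of_numLab hF hf h).card_edgeFinset
  | succ c ih =>
    intro F f hF hf h
    have : 1 < (Finset.univ.image f).card := by unfold numLab at h; omega
    obtain ⟨a, ha, b, hb, hab⟩ := Finset.one_lt_card.1 this
    simp only [Finset.mem_image, Finset.mem_univ, true_and] at ha hb
    obtain ⟨u, rfl⟩ := ha
    obtain ⟨v, rfl⟩ := hb
    have hm := numLab_merge f hab
    have hr : ¬ F.Reachable u v := fun h => hab ((hf u v).1 h)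
    have := ih _ _ (hF.sup_edge_of_not_reachable hr) (hf.merge hab) (by omega)
    have e := SimpleGraph.card_edgeFinset_sup_edge F (fun h => hr h.reachable)
      (fun e => hab (by rw [e]))
    have e2 : ∀ G : SimpleGraph V, G = F ⊔ SimpleGraph.edge u v →
        G.edgeFinset.card = F.edgeFinset.card + 1 := by
      rintro _ rfl
      convert e
    have e3 := e2 _ rfl
    omega

lemma adj_diff {F T : SimpleGraph V} (hT : T.IsAcyclic) (hFT : F ≤ T) {u v : V}
    (h : T.Adj u v) (h' : ¬ F.Adj u v) : ¬ F.Reachable u v := by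
  intro hr
  have : (F ⊔ SimpleGraph.edge u v).IsAcyclic :=
    hT.anti (sup_le hFT ((SimpleGraph.edge_le_iff _).2 (Or.inr h)))
  rw [SimpleGraph.isAcyclic_sup_fromEdgeSet_iff] at this
  rcases this.2 hr with h1 | h1
  · exact h.ne h1
  · exact h' h1

open Classical in
lemma double_count [Nonempty V] {F : SimpleGraph V} {f : V → V} (hF : F.IsAcyclic)
    (hf : IsLab F f) :
    2 * ((numLab f : ℝ) - 1) * numTreesAbove F =
      ∑ u, ∑ v, if f u ≠ f v then (numTreesAbove (F ⊔ SimpleGraph.edge u v) : ℝ) else 0 := by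
  have hc := card_edges (numLab f - 1) F f hF hf (by have := numLab_pos f; omega)
  have key : ∀ T : SimpleGraph V, T.IsTree ∧ F ≤ T →
      (∑ u, ∑ v, if f u ≠ f v ∧ T.Adj u v then (1:ℝ) else 0) = 2 * ((numLab f : ℝ) - 1) := by
    rintro T ⟨hT, hFT⟩
    have e : ∀ u v, (if f u ≠ f v ∧ T.Adj u v then (1:ℝ) else 0)
        = (if T.Adj u v then 1 else 0) - (if F.Adj u v then 1 else 0) := by
      intro u v
      by_cases h1 : T.Adj u v
      · by_cases h2 : F.Adj u v
        · simp [h1, h2, (hf u v).1 h2.reachable]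
        · have := adj_diff hT.isAcyclic hFT h1 h2
          rw [hf u v] at this
          simp [h1, h2, this]
      · have h2 : ¬ F.Adj u v := fun h => h1 (hFT h)
        simp [h1, h2]
    have d : ∀ G : SimpleGraph V, (∑ u, ∑ v, if G.Adj u v then (1:ℝ) else 0)
        = 2 * G.edgeFinset.card := by
      intro G
      have := G.sum_degrees_eq_twice_card_edges
      have h2 : (∑ v, (G.degree v : ℝ)) = 2 * G.edgeFinset.card := by exact_mod_cast this
      rw [← h2]
      refine Finset.sum_congr rfl fun u _ => ?_
      rw [← SimpleGraph.card_neighborFinset_eq_degree, SimpleGraph.neighborFinset_eq_filter]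
      simp
    simp_rw [e, Finset.sum_sub_distrib, d]
    have h3 := hT.card_edgeFinset
    have h4 : (T.edgeFinset.card : ℝ) + 1 = F.edgeFinset.card + numLab f := by
      exact_mod_cast h3.trans hc.symm
    linarith
  have lhs : 2 * ((numLab f : ℝ) - 1) * numTreesAbove F =
      ∑ T ∈ Finset.univ.filter (fun T : SimpleGraph V => T.IsTree ∧ F ≤ T),
        ∑ u, ∑ v, if f u ≠ f v ∧ T.Adj u v then (1:ℝ) else 0 := by
    rw [Finset.sum_congr rfl (fun T hT => key T (Finset.mem_filter.1 hT).2), Finset.sum_const,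
      nsmul_eq_mul, numTreesAbove]
    ring
  rw [lhs, Finset.sum_comm]
  refine Finset.sum_congr rfl fun u _ => ?_
  rw [Finset.sum_comm]
  refine Finset.sum_congr rfl fun v _ => ?_
  split_ifs with h
  · simp only [h, ne_eq, not_false_iff, true_and]
    rw [← Finset.sum_filter, Finset.filter_filter, Finset.sum_const, nsmul_eq_mul, mul_one,
      numTreesAbove]
    congr 2
    ext T
    simp only [Finset.mem_filter, Finset.mem_univ, true_and, sup_le_iff, SimpleGraph.edge_le_iff]
    have : u ≠ v := fun e => h (by rw [e])
    tauto
  · simp [h]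

open Classical in
/-- Number of spanning trees of the complete graph containing a given forest. -/
lemma numTrees_formula [Nonempty V] : ∀ (c : ℕ) (F : SimpleGraph V) (f : V → V), F.IsAcyclic →
    IsLab F f → numLab f = c + 1 →
    (Fintype.card V : ℝ) ^ 2 * numTreesAbove F = (Fintype.card V : ℝ) ^ numLab f * prodLab f := by
  intro c
  induction c with
  | zero =>
    intro F f hF hf h
    have hT := isTree_of_numLab hF hf h
    have h1 : numTreesAbove F = 1 := by
      rw [numTreesAbove, Finset.card_eq_one]
      refine ⟨F, ?_⟩
      ext T
      simp only [Finset.mem_filter, Finset.mem_univ, true_and, Finset.mem_singleton]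
      constructor
      · rintro ⟨hT', hle⟩
        refine le_antisymm (fun u v huv => ?_) hle
        by_contra hn
        exact adj_diff hT'.isAcyclic hle huv hn (hT.connected u v)
      · rintro rfl
        exact ⟨hT, le_rfl⟩
    have hP : prodLab f = Fintype.card V := by
      obtain ⟨u⟩ := ‹Nonempty V›
      have hall : ∀ w, f w = f u := fun w => Finset.card_le_one.1 h.le _ (by simp) _ (by simp)
      unfold prodLab
      rw [Finset.prod_eq_single (f u)]
      · have : fibSize f (f u) = Fintype.card V := by
          unfold fibSize; simp [hall]
        rw [this]
        exact max_eq_left (Fintype.card_pos_iff.2 ⟨u⟩)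
      · intro l _ hl
        have : fibSize f l = 0 := by
          unfold fibSize; simp [hall, hl.symm]
        simp [this]
      · simp
    rw [h, h1, hP]; push_cast; ring
  | succ c ih =>
    intro F f hF hf h
    have hn : (Fintype.card V : ℝ) ≠ 0 := by exact_mod_cast Fintype.card_ne_zero
    have hc : (numLab f : ℝ) - 1 = c + 1 := by rw [h]; push_cast; ring
    have hd := double_count hF hf
    have hs : ∀ u v, (Fintype.card V : ℝ) ^ 2 *
        (if f u ≠ f v then (numTreesAbove (F ⊔ SimpleGraph.edge u v) : ℝ) else 0)
        = (Fintype.card V : ℝ) ^ (c + 1) * prodLab f *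
        (if f u ≠ f v then (1 / (fibSize f (f u) : ℝ) + 1 / (fibSize f (f v) : ℝ)) else 0) := by
      intro u v
      split_ifs with huv
      · have hm := numLab_merge f huv
        have hr : ¬ F.Reachable u v := fun h => huv ((hf u v).1 h)
        rw [ih _ _ (hF.sup_edge_of_not_reachable hr) (hf.merge huv) (by omega),
          prodLab_merge f huv, show numLab (mergeLab f (f u) (f v)) = c + 1 by omega]
        ring
      · simp
    have h2 := congrArg (fun t => (Fintype.card V : ℝ) ^ 2 * t) hd
    simp only [Finset.mul_sum, hs] at h2
    simp only [← Finset.mul_sum, sum_pairs] at h2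
    rw [hc] at h2
    have hc0 : (2 * ((c:ℝ) + 1)) ≠ 0 := by positivity
    apply mul_left_cancel₀ hc0
    rw [h]
    linear_combination h2

end lab

section tuples
set_option linter.unusedSectionVars false
variable {V : Type} [Fintype V] [DecidableEq V]

open Classical in
/-- number of trees containing all edges of a tuple. -/
noncomputable def numTreesTuple {k : ℕ} (x : Fin k → V × V) : ℕ :=
  (Finset.univ.filter fun T : SimpleGraph V => T.IsTree ∧ ∀ i, T.Adj (x i).1 (x i).2).card

lemma numTreesTuple_le [Nonempty V] {k : ℕ} (x : Fin k → V × V)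
    (hx : Function.Injective fun i => s((x i).1, (x i).2)) :
    (Fintype.card V : ℝ) ^ (k + 2) * numTreesTuple x
      ≤ (Fintype.card V : ℝ) ^ (Fintype.card V) * 2 ^ k := by
  classical
  rcases Nat.eq_zero_or_pos (numTreesTuple x) with h0 | h0
  · rw [h0]; simp
  obtain ⟨T, hT⟩ := Finset.card_pos.1 h0
  simp only [Finset.mem_filter, Finset.mem_univ, true_and] at hT
  obtain ⟨hT, hTx⟩ := hT
  set F : SimpleGraph V := SimpleGraph.fromEdgeSet (Set.range fun i => s((x i).1, (x i).2)) with hFdef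
  have hle : ∀ T' : SimpleGraph V, F ≤ T' ↔ ∀ i, T'.Adj (x i).1 (x i).2 := by
    intro T'
    constructor
    · intro h i
      apply h
      rw [hFdef, SimpleGraph.fromEdgeSet_adj]
      exact ⟨⟨i, rfl⟩, (hTx i).ne⟩
    · intro h u v huv
      rw [hFdef, SimpleGraph.fromEdgeSet_adj] at huv
      obtain ⟨⟨i, hi⟩, -⟩ := huv
      have := h i
      rw [← SimpleGraph.mem_edgeSet] at this ⊢
      rwa [← hi]
  have hN : numTreesTuple x = numTreesAbove F := by
    unfold numTreesTuple numTreesAbove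
    simp only [hle]
  have hF : F.IsAcyclic := hT.isAcyclic.anti ((hle T).2 hTx)
  have hE : F.edgeFinset.card = k := by
    have : F.edgeFinset = Finset.univ.image (fun i => s((x i).1, (x i).2)) := by
      ext e
      simp only [SimpleGraph.mem_edgeFinset, hFdef, SimpleGraph.edgeSet_fromEdgeSet, Set.mem_sdiff,
        Set.mem_range, Finset.mem_image, Finset.mem_univ, true_and]
      constructor
      · exact fun h => h.1
      · rintro ⟨i, rfl⟩
        exact ⟨⟨i, rfl⟩, by simpa using (hTx i).ne⟩
    rw [this, Finset.card_image_of_injective _ hx]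
    simp
  obtain ⟨f, hf⟩ := exists_isLab F
  have hp := numLab_pos f
  have h1 := card_edges (numLab f - 1) F f hF hf (by omega)
  have h2 := numTrees_formula (numLab f - 1) F f hF hf (by omega)
  have h3 := prodLab_le f
  have h1 : k + numLab f = Fintype.card V := by
    rw [← h1, ← hE]
    congr!
  have h4 : prodLab f ≤ 2 ^ k := by
    rw [← h1, pow_add] at h3
    exact Nat.le_of_mul_le_mul_right h3 (by positivity)
  have h5 : (prodLab f : ℝ) ≤ 2 ^ k := by exact_mod_cast h4
  rw [hN]
  calc (Fintype.card V : ℝ) ^ (k + 2) * numTreesAbove F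
      = (Fintype.card V : ℝ) ^ k * ((Fintype.card V : ℝ) ^ 2 * numTreesAbove F) := by ring
    _ = (Fintype.card V : ℝ) ^ (k + numLab f) * prodLab f := by rw [h2]; ring
    _ ≤ _ := by rw [h1]; gcongr

lemma matching_aux [Nonempty V] {k : ℕ} (x : Fin k → V × V)
    (hx : Function.Injective fun p : Fin k × Bool => if p.2 then (x p.1).1 else (x p.1).2)
    (s : Finset (Fin k)) :
    ∃ (F : SimpleGraph V) (f : V → V), F.IsAcyclic ∧ IsLab F f ∧ prodLab f = 2 ^ s.card ∧
      numLab f + s.card = Fintype.card V ∧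
      (∀ T : SimpleGraph V, F ≤ T ↔ ∀ i ∈ s, T.Adj (x i).1 (x i).2) ∧
      (∀ w, (∀ i ∈ s, w ≠ (x i).1 ∧ w ≠ (x i).2) → ∀ z, f z = f w → z = w) := by
  have x11 : ∀ i j, i ≠ j → (x i).1 ≠ (x j).1 := fun i j hij h => hij (by
    have := @hx (i, true) (j, true) (by simpa using h); simpa using this)
  have x22 : ∀ i j, i ≠ j → (x i).2 ≠ (x j).2 := fun i j hij h => hij (by
    have := @hx (i, false) (j, false) (by simpa using h); simpa using this)
  have x12 : ∀ i j, (x i).1 ≠ (x j).2 := fun i j h => by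
    have := @hx (i, true) (j, false) (by simpa using h); simp at this
  induction s using Finset.induction_on with
  | empty =>
    refine ⟨⊥, id, by simp, ?_, ?_, ?_, by simp, by simp⟩
    · intro u v; simp
    · simp [prodLab, fibSize, Finset.filter_eq']
    · simp [numLab]
  | @insert j s hj ih =>
    obtain ⟨F, f, hF, hf, hP, hc, hle, hiso⟩ := ih
    have hne : ∀ i ∈ s, j ≠ i := fun i hi e => hj (e ▸ hi)
    have iso1 := hiso (x j).1 (fun i hi => ⟨x11 _ _ (hne i hi), x12 _ _⟩)
    have iso2 := hiso (x j).2 (fun i hi => ⟨(x12 _ _).symm, x22 _ _ (hne i hi)⟩)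
    have hn : f (x j).1 ≠ f (x j).2 := fun h => x12 j j (iso2 _ h)
    have fib : ∀ w, (∀ z, f z = f w → z = w) → fibSize f (f w) = 1 := by
      intro w hw
      unfold fibSize
      rw [Finset.card_eq_one]
      refine ⟨w, ?_⟩
      ext z
      simp only [Finset.mem_filter, Finset.mem_univ, true_and, Finset.mem_singleton]
      exact ⟨hw z, fun h => by rw [h]⟩
    refine ⟨F ⊔ SimpleGraph.edge (x j).1 (x j).2, mergeLab f (f (x j).1) (f (x j).2),
      hF.sup_edge_of_not_reachable (fun h => hn ((hf _ _).1 h)), hf.merge hn, ?_, ?_, ?_, ?_⟩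
    · have := prodLab_merge f hn
      rw [fib _ iso1, fib _ iso2, hP] at this
      rw [Finset.card_insert_of_notMem hj]
      have h2 : (prodLab (mergeLab f (f (x j).1) (f (x j).2)) : ℝ) = ((2 ^ (s.card + 1) : ℕ) : ℝ) := by
        rw [this]; push_cast; ring
      exact_mod_cast h2
    · have := numLab_merge f hn
      rw [Finset.card_insert_of_notMem hj]
      omega
    · intro T
      rw [sup_le_iff, hle, SimpleGraph.edge_le_iff, Finset.forall_mem_insert]
      have := x12 j j
      tauto
    · intro w hw z hz
      rw [Finset.forall_mem_insert] at hw
      have h0 := hiso w hw.2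
      simp only [mergeLab] at hz
      split_ifs at hz with h1 h2 h2
      · exact absurd (iso2 _ h2) hw.1.2
      · exact absurd (h0 _ hz) (Ne.symm hw.1.1)
      · exact absurd (iso2 _ h2) hw.1.2
      · exact h0 _ hz

lemma numTreesTuple_matching [Nonempty V] {k : ℕ} (x : Fin k → V × V)
    (hx : Function.Injective fun p : Fin k × Bool => if p.2 then (x p.1).1 else (x p.1).2) :
    (Fintype.card V : ℝ) ^ (k + 2) * numTreesTuple x
      = (Fintype.card V : ℝ) ^ (Fintype.card V) * 2 ^ k := by
  classical
  obtain ⟨F, f, hF, hf, hP, hc, hle, -⟩ := matching_aux x hx Finset.univ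
  have hp := numLab_pos f
  have h2 := numTrees_formula (numLab f - 1) F f hF hf (by omega)
  simp only [Finset.card_univ, Fintype.card_fin] at hP hc
  have hN : numTreesTuple x = numTreesAbove F := by
    unfold numTreesTuple numTreesAbove
    simp only [hle, Finset.mem_univ, true_imp_iff]
  rw [hN]
  calc (Fintype.card V : ℝ) ^ (k + 2) * numTreesAbove F
      = (Fintype.card V : ℝ) ^ k * ((Fintype.card V : ℝ) ^ 2 * numTreesAbove F) := by ring
    _ = (Fintype.card V : ℝ) ^ (numLab f + k) * prodLab f := by rw [h2]; ring
    _ = _ := by rw [hc, hP]; push_cast; rfl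

lemma matching_inj {k : ℕ} (x : Fin k → V × V)
    (hx : Function.Injective fun p : Fin k × Bool => if p.2 then (x p.1).1 else (x p.1).2) :
    Function.Injective fun i => s((x i).1, (x i).2) := by
  intro i j h
  simp only [Sym2.eq_iff] at h
  rcases h with h | h
  · have := @hx (i, true) (j, true) (by simpa using h.1)
    simpa using this
  · have := @hx (i, true) (j, false) (by simpa using h.1)
    simp at this

open Classical in
lemma card_matchings (k : ℕ) :
    (Finset.univ.filter fun x : Fin k → V × V =>
      Function.Injective fun p : Fin k × Bool => if p.2 then (x p.1).1 else (x p.1).2).card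
      = (Fintype.card V).descFactorial (2 * k) := by
  have h1 : Fintype.card (Fin k × Bool ↪ V) = (Fintype.card V).descFactorial (2 * k) := by
    rw [Fintype.card_embedding_eq]
    simp [mul_comm]
  rw [← h1, ← Finset.card_univ]
  symm
  refine Finset.card_bij (fun g _ => fun i => (g (i, true), g (i, false))) ?_ ?_ ?_
  · intro g _
    simp only [Finset.mem_filter, Finset.mem_univ, true_and]
    have : (fun p : Fin k × Bool => if p.2 then g (p.1, true) else g (p.1, false)) = g := by
      funext ⟨i, b⟩; cases b <;> simp
    simp only [this]
    exact g.injective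
  · intro g _ g' _ h
    ext ⟨i, b⟩
    have := congrFun h i
    simp only [Prod.mk.injEq] at this
    cases b
    · exact this.2
    · exact this.1
  · intro x hx
    simp only [Finset.mem_filter, Finset.mem_univ, true_and] at hx
    exact ⟨⟨_, hx⟩, Finset.mem_univ _, by ext i <;> simp⟩

open Classical in
lemma card_tuples (G : SimpleGraph V) (k : ℕ) :
    (Finset.univ.filter fun x : Fin k → V × V =>
      (Function.Injective fun i => s((x i).1, (x i).2)) ∧ ∀ i, G.Adj (x i).1 (x i).2).card
      = 2 ^ k * (Nat.card G.edgeSet).descFactorial k := by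
  have h1 : Fintype.card (Fin k ↪ G.edgeSet) = (Nat.card G.edgeSet).descFactorial k := by
    rw [Fintype.card_embedding_eq]
    simp [Nat.card_eq_fintype_card]
  rw [← h1, ← Finset.card_univ]
  rw [Finset.card_eq_sum_card_fiberwise (f := fun x : Fin k → V × V => fun i => s((x i).1, (x i).2))
    (t := Finset.univ.image (fun g : Fin k ↪ G.edgeSet => fun i => (g i : Sym2 V)))]
  · have hinj : Function.Injective (fun g : Fin k ↪ G.edgeSet => fun i => (g i : Sym2 V)) := by
      intro g g' h
      refine DFunLike.ext _ _ fun i => Subtype.ext ?_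
      exact congrFun h i
    rw [Finset.sum_image (fun a _ b _ h => hinj h), Finset.sum_const_nat (m := 2 ^ k)]
    · ring
    intro g _
    have e : (Finset.filter (fun x : Fin k → V × V => (fun i => s((x i).1, (x i).2)) = fun i => (g i : Sym2 V))
        (Finset.univ.filter fun x : Fin k → V × V =>
      (Function.Injective fun i => s((x i).1, (x i).2)) ∧ ∀ i, G.Adj (x i).1 (x i).2))
      = Fintype.piFinset (fun i => Finset.univ.filter fun p : V × V => s(p.1, p.2) = (g i : Sym2 V)) := by
      ext x
      simp only [Finset.mem_filter, Finset.mem_univ, true_and, Fintype.mem_piFinset]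
      constructor
      · rintro ⟨_, h⟩ i
        exact congrFun h i
      · intro h
        have h' : (fun i => s((x i).1, (x i).2)) = fun i => (g i : Sym2 V) := funext h
        refine ⟨⟨?_, fun i => ?_⟩, h'⟩
        · rw [h']
          exact Subtype.val_injective.comp g.injective
        · rw [← SimpleGraph.mem_edgeSet, h i]
          exact (g i).2
    rw [e, Fintype.card_piFinset, Finset.prod_congr rfl (g := fun _ => 2)]
    · simp
    intro i _
    obtain ⟨e, he⟩ := g i
    induction e with
    | _ a b =>
      have hab : a ≠ b := SimpleGraph.Adj.ne he
      rw [Finset.card_eq_two]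
      refine ⟨(a, b), (b, a), by simp [hab], ?_⟩
      ext ⟨c, d⟩
      simp
  · intro x hx
    simp only [Finset.coe_filter, Finset.mem_univ, true_and, Set.mem_ofPred_eq] at hx
    simp only [Finset.coe_image, Finset.coe_univ, Set.image_univ, Set.mem_range]
    exact ⟨⟨fun i => ⟨s((x i).1, (x i).2), hx.2 i⟩, fun i j h => hx.1 (congrArg Subtype.val h)⟩, rfl⟩

end tuples

lemma exists_stirling (r : ℕ) : ∃ c : ℕ → ℝ, ∀ m : ℕ,
    (m : ℝ) ^ r = ∑ j ∈ Finset.range (r + 1), c j * (m.descFactorial j : ℝ) := by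
  induction r with
  | zero => exact ⟨fun _ => 1, by simp⟩
  | succ r ih =>
    obtain ⟨c, hc⟩ := ih
    refine ⟨fun j => (if j = 0 then 0 else c (j - 1)) + (if j ≤ r then j * c j else 0), fun m => ?_⟩
    have hm : ∀ j, (m : ℝ) * m.descFactorial j = m.descFactorial (j + 1) + j * m.descFactorial j := by
      intro j
      rw [Nat.descFactorial_succ]
      rcases le_or_gt j m with h | h
      · push_cast [h]; ring
      · simp [Nat.descFactorial_of_lt h]
    rw [pow_succ, hc m, Finset.sum_mul]
    simp only [add_mul, Finset.sum_add_distrib]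
    rw [Finset.sum_range_succ' _ (r + 1)]
    rw [Finset.sum_range_succ (fun j => (if j ≤ r then (j:ℝ) * c j else 0) * (m.descFactorial j : ℝ))]
    simp only [Nat.add_eq_zero_iff, one_ne_zero, and_false, if_false, Nat.add_sub_cancel, if_true,
      zero_mul, add_zero, Nat.not_succ_le_self]
    rw [← Finset.sum_add_distrib]
    refine Finset.sum_congr rfl fun j hj => ?_
    have : j ≤ r := by have := Finset.mem_range.1 hj; omega
    rw [if_pos this]
    linear_combination c j * hm j

lemma poisson_fact (j : ℕ) : HasSum (fun k : ℕ => (2:ℝ) ^ k * (k.descFactorial j : ℝ) / k.factorial)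
    (2 ^ j * Real.exp 2) := by
  rw [← hasSum_nat_add_iff' j]
  have h0 : ∑ i ∈ Finset.range j, (2:ℝ) ^ i * (i.descFactorial j : ℝ) / i.factorial = 0 := by
    refine Finset.sum_eq_zero fun i hi => ?_
    simp [Nat.descFactorial_of_lt (Finset.mem_range.1 hi)]
  rw [h0, sub_zero]
  have h1 := (NormedSpace.expSeries_div_hasSum_exp (2:ℝ)).mul_left ((2:ℝ) ^ j)
  rw [← Real.exp_eq_exp_ℝ] at h1
  refine h1.congr_fun ?_
  intro k
  have h2 := Nat.factorial_mul_descFactorial (Nat.le_add_left j k)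
  rw [Nat.add_sub_cancel] at h2
  have h3 : ((k + j).factorial : ℝ) = k.factorial * (k + j).descFactorial j := by exact_mod_cast h2.symm
  have h4 : (k.factorial : ℝ) ≠ 0 := by positivity
  have h5 : ((k + j).descFactorial j : ℝ) ≠ 0 := by
    intro h; rw [h] at h3; simp at h3; exact (Nat.factorial_ne_zero _) (by exact_mod_cast h3)
  rw [h3]
  field_simp
  ring

lemma descFactorial_lower (n : ℕ) (m : ℕ) :
    (n : ℝ) * (n : ℝ) ^ m - m ^ 2 * (n:ℝ) ^ m ≤ n * n.descFactorial m := by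
  induction m with
  | zero => simp
  | succ m ih =>
    have h1 : (n : ℝ) - m ≤ ((n - m : ℕ) : ℝ) := by
      rw [sub_le_iff_le_add]; exact_mod_cast (by omega : n ≤ n - m + m)
    have h2 : (n.descFactorial m : ℝ) ≤ n ^ m := by exact_mod_cast Nat.descFactorial_le_pow n m
    have h3 : (0:ℝ) ≤ n.descFactorial m := by positivity
    have hn : (0:ℝ) ≤ n := by positivity
    rw [Nat.descFactorial_succ]
    push_cast
    have h4 := mul_le_mul_of_nonneg_right h1 h3
    have h5 := mul_le_mul_of_nonneg_left h4 hn
    have h6 := mul_le_mul_of_nonneg_left ih hn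
    have h7 := mul_le_mul_of_nonneg_left h2 (mul_nonneg hn (Nat.cast_nonneg m : (0:ℝ) ≤ m))
    have h8 : (0:ℝ) ≤ n * n ^ m * (m + 1) := by positivity
    rw [pow_succ]
    nlinarith

open Classical in
/-- unnormalised factorial moment. -/
noncomputable def factSum (n k : ℕ) : ℝ :=
  ∑ p : SimpleGraph (Fin n) × SimpleGraph (Fin n),
      if p.1.IsTree ∧ p.2.IsTree then ((Nat.card (p.1 ⊓ p.2).edgeSet).descFactorial k : ℝ) else 0

open Classical in
lemma factSum_eq (n k : ℕ) : 2 ^ k * factSum n k =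
    ∑ x : Fin k → Fin n × Fin n,
      if (Function.Injective fun i => s((x i).1, (x i).2)) then (numTreesTuple x : ℝ) ^ 2 else 0 := by
  unfold factSum
  have h1 : ∀ p : SimpleGraph (Fin n) × SimpleGraph (Fin n),
      2 ^ k * (if p.1.IsTree ∧ p.2.IsTree then
        ((Nat.card (p.1 ⊓ p.2).edgeSet).descFactorial k : ℝ) else 0) =
      ∑ x : Fin k → Fin n × Fin n, if (Function.Injective fun i => s((x i).1, (x i).2)) then
        (if (p.1.IsTree ∧ ∀ i, p.1.Adj (x i).1 (x i).2) ∧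
          (p.2.IsTree ∧ ∀ i, p.2.Adj (x i).1 (x i).2) then (1:ℝ) else 0) else 0 := by
    intro p
    by_cases hp : p.1.IsTree ∧ p.2.IsTree
    · have := card_tuples (p.1 ⊓ p.2) k
      rw [if_pos hp]
      have h2 : (2:ℝ) ^ k * ((Nat.card (p.1 ⊓ p.2).edgeSet).descFactorial k : ℝ)
        = ((2 ^ k * (Nat.card (p.1 ⊓ p.2).edgeSet).descFactorial k : ℕ) : ℝ) := by push_cast; rfl
      rw [h2, ← this, Finset.card_filter]
      push_cast
      refine Finset.sum_congr rfl fun x _ => ?_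
      rw [← ite_and]
      congr 1
      simp only [hp.1, hp.2, true_and, SimpleGraph.inf_adj, forall_and]
    · rw [if_neg hp, mul_zero]
      symm
      refine Finset.sum_eq_zero fun x _ => ?_
      split_ifs <;> tauto
  rw [Finset.mul_sum, Finset.sum_congr rfl fun p _ => h1 p, Finset.sum_comm]
  refine Finset.sum_congr rfl fun x _ => ?_
  split_ifs with hx
  · rw [← Finset.sum_filter, Finset.sum_const, nsmul_eq_mul, mul_one, ← Finset.univ_product_univ,
      Finset.filter_product (fun T : SimpleGraph (Fin n) => T.IsTree ∧ ∀ i, T.Adj (x i).1 (x i).2)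
        (fun T : SimpleGraph (Fin n) => T.IsTree ∧ ∀ i, T.Adj (x i).1 (x i).2),
      Finset.card_product, numTreesTuple]
    push_cast
    ring
  · simp

lemma factMoment_upper (n k : ℕ) (hn : 2 ≤ n) :
    factSum n k / (n : ℝ) ^ (2 * (n - 2)) ≤ 2 ^ k := by
  classical
  have : Nonempty (Fin n) := ⟨⟨0, by omega⟩⟩
  have hn0 : (0:ℝ) < n := by exact_mod_cast (by omega : 0 < n)
  obtain ⟨m, rfl⟩ : ∃ m, n = m + 2 := ⟨n - 2, by omega⟩
  rw [div_le_iff₀ (by positivity), Nat.add_sub_cancel]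
  set N : ℝ := ((m + 2 : ℕ) : ℝ) with hN
  have hb : ∀ x : Fin k → Fin (m + 2) × Fin (m + 2),
      (if (Function.Injective fun i => s((x i).1, (x i).2)) then (numTreesTuple x : ℝ) ^ 2 else 0)
        ≤ (N ^ m * 2 ^ k / N ^ k) ^ 2 := by
    intro x
    split_ifs with hx
    · have := numTreesTuple_le x hx
      rw [Fintype.card_fin, ← hN, pow_add, pow_add] at this
      have h2 : N ^ k * (numTreesTuple x : ℝ) ≤ N ^ m * 2 ^ k := by
        have h3 : 0 < N ^ 2 := by positivity
        nlinarith
      gcongr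
      rw [le_div_iff₀ (by positivity)]
      linarith
    · positivity
  have h1 := Finset.sum_le_sum fun x (_ : x ∈ Finset.univ) => hb x
  rw [← factSum_eq, Finset.sum_const, nsmul_eq_mul] at h1
  have h2 : ((Finset.univ : Finset (Fin k → Fin (m + 2) × Fin (m + 2))).card : ℝ) = (N ^ k) ^ 2 := by
    simp only [Finset.card_univ, Fintype.card_fun, Fintype.card_prod, Fintype.card_fin]
    rw [hN]; push_cast; rw [← pow_two, ← pow_mul, ← pow_mul, mul_comm]
  rw [h2] at h1
  have hNk : N ^ k ≠ 0 := by positivity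
  have h3 : (N ^ k) ^ 2 * (N ^ m * 2 ^ k / N ^ k) ^ 2 = 2 ^ k * (2 ^ k * N ^ (2 * m)) := by
    field_simp
    ring
  rw [h3] at h1
  exact le_of_mul_le_mul_left h1 (by positivity)

lemma factMoment_lower (n k : ℕ) (hn : 2 ≤ n) :
    2 ^ k - 2 ^ k * (2 * k) ^ 2 / n ≤ factSum n k / (n : ℝ) ^ (2 * (n - 2)) := by
  classical
  have : Nonempty (Fin n) := ⟨⟨0, by omega⟩⟩
  have hn0 : (0:ℝ) < n := by exact_mod_cast (by omega : 0 < n)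
  obtain ⟨m, rfl⟩ : ∃ m, n = m + 2 := ⟨n - 2, by omega⟩
  rw [le_div_iff₀ (by positivity), Nat.add_sub_cancel]
  have hd := descFactorial_lower (m + 2) (2 * k)
  set N : ℝ := ((m + 2 : ℕ) : ℝ) with hN
  have hNk : 0 < N ^ k := by positivity
  have hb : ∀ x : Fin k → Fin (m + 2) × Fin (m + 2),
      (if (Function.Injective fun p : Fin k × Bool => if p.2 then (x p.1).1 else (x p.1).2)
        then (N ^ m * 2 ^ k / N ^ k) ^ 2 else 0) ≤
      (if (Function.Injective fun i => s((x i).1, (x i).2)) then (numTreesTuple x : ℝ) ^ 2 else 0) := by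
    intro x
    split_ifs with hx hx' hx'
    · have := numTreesTuple_matching x hx
      rw [Fintype.card_fin, ← hN, pow_add, pow_add] at this
      have h3 : N ^ 2 ≠ 0 := by positivity
      have h2 : N ^ k * (numTreesTuple x : ℝ) = N ^ m * 2 ^ k := by
        apply mul_left_cancel₀ h3
        linear_combination this
      apply le_of_eq
      congr 1
      rw [div_eq_iff hNk.ne']
      linarith
    · exact absurd (matching_inj x hx) hx'
    · positivity
    · exact le_rfl
  have h1 := Finset.sum_le_sum fun x (_ : x ∈ Finset.univ) => hb x
  rw [← factSum_eq, ← Finset.sum_filter, Finset.sum_const, nsmul_eq_mul, card_matchings,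
    Fintype.card_fin] at h1
  set d : ℝ := ((m + 2).descFactorial (2 * k) : ℝ)
  have h3 : d * (N ^ m * 2 ^ k / N ^ k) ^ 2 = 2 ^ k * (2 ^ k * N ^ (2 * m) * (d / N ^ (2 * k))) := by
    field_simp
    ring
  rw [h3] at h1
  refine le_trans ?_ (le_of_mul_le_mul_left h1 (by positivity))
  have h4 : 1 - (2 * k) ^ 2 / N ≤ d / N ^ (2 * k) := by
    rw [le_div_iff₀ (by positivity)]
    push_cast at hd
    have : (1 - (2 * k) ^ 2 / N) * N ^ (2 * k) = (N * N ^ (2 * k) - (2 * k) ^ 2 * N ^ (2 * k)) / N := by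
      field_simp
    rw [this, div_le_iff₀ hn0]
    linarith
  have h5 : (0:ℝ) ≤ 2 ^ k * N ^ (2 * m) := by positivity
  have h6 := mul_le_mul_of_nonneg_left h4 h5
  calc _ = 2 ^ k * N ^ (2 * m) * (1 - (2 * k) ^ 2 / N) := by ring
    _ ≤ _ := h6

/-- For every fixed positive integer `r` there is a constant `C > 0`
such that for all `n ≥ 2`, the `r`-th moment of `Xₙ` differs from
`e⁻² ∑_{k≥0} 2^k k^r / k!` (the `r`-th moment of a Poisson variable of mean `2`)
by at most `C/n`; in particular `E(Xₙʳ)` converges to this value as `n → ∞`. -/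
theorem moment_convergence (r : ℕ) (hr : 0 < r) :
    ∃ C : ℝ, 0 < C ∧ ∀ n : ℕ, 2 ≤ n →
      |commonEdgesMoment n r -
          Real.exp (-2) * ∑' k : ℕ, 2 ^ k * (k : ℝ) ^ r / k.factorial| ≤ C / n := by
  classical
  obtain ⟨c, hc⟩ := exists_stirling r
  have hP : Real.exp (-2) * ∑' k : ℕ, 2 ^ k * (k : ℝ) ^ r / k.factorial
      = ∑ j ∈ Finset.range (r + 1), c j * 2 ^ j := by
    have h1 : HasSum (fun k : ℕ => (2:ℝ) ^ k * (k : ℝ) ^ r / k.factorial)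
        (∑ j ∈ Finset.range (r + 1), c j * (2 ^ j * Real.exp 2)) := by
      have := hasSum_sum (s := Finset.range (r + 1)) fun j _ => (poisson_fact j).mul_left (c j)
      refine this.congr_fun ?_
      intro k
      rw [hc k, Finset.mul_sum, Finset.sum_div]
      refine Finset.sum_congr rfl fun j _ => ?_
      ring
    rw [h1.tsum_eq, Finset.mul_sum]
    refine Finset.sum_congr rfl fun j _ => ?_
    have : Real.exp (-2) * Real.exp 2 = 1 := by rw [← Real.exp_add]; simp
    linear_combination c j * 2 ^ j * this
  have hM : ∀ n, commonEdgesMoment n r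
      = ∑ j ∈ Finset.range (r + 1), c j * (factSum n j / (n : ℝ) ^ (2 * (n - 2))) := by
    intro n
    unfold commonEdgesMoment factSum
    simp_rw [← mul_div_assoc]
    rw [← Finset.sum_div]
    congr 1
    simp_rw [Finset.mul_sum]
    rw [Finset.sum_comm]
    refine Finset.sum_congr rfl fun p _ => ?_
    split_ifs
    · rw [hc]
    · simp
  refine ⟨1 + ∑ j ∈ Finset.range (r + 1), |c j| * (2 ^ j * (2 * j) ^ 2), ?_, ?_⟩
  · have : 0 ≤ ∑ j ∈ Finset.range (r + 1), |c j| * ((2:ℝ) ^ j * (2 * j) ^ 2) :=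
      Finset.sum_nonneg fun j _ => by positivity
    linarith
  intro n hn
  have hn0 : (0:ℝ) < n := by exact_mod_cast (by omega : 0 < n)
  rw [hP, hM, ← Finset.sum_sub_distrib]
  refine (Finset.abs_sum_le_sum_abs _ _).trans ?_
  rw [add_div, Finset.sum_div]
  refine le_trans (Finset.sum_le_sum (g := fun j : ℕ => |c j| * ((2:ℝ) ^ j * (2 * j) ^ 2) / n)
    fun j _ => ?_) ?_
  · rw [← mul_sub, abs_mul, mul_div_assoc]
    refine mul_le_mul_of_nonneg_left ?_ (abs_nonneg _)
    have h1 := factMoment_upper n j hn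
    have h2 := factMoment_lower n j hn
    have h3 : (0:ℝ) ≤ 2 ^ j * (2 * j) ^ 2 / n := by positivity
    rw [abs_le]
    constructor <;> linarith
  · have : (0:ℝ) ≤ 1 / n := by positivity
    linarith
end

section
/- For every fixed nonnegative integer m, the probability that two independent uniformly random spanning trees of K_n have exactly m edges in common converges to 2^m e^{−2} / m! as n → ∞. That is, X_n converges in distribution to a Poisson distribution with expected value 2. -/
/-- `P(Xₙ = m)`: the number of ordered pairs `(T₁, T₂)` of spanning trees of `K_n`
with exactly `m` common edges, divided by the number `n^(2(n-2))` of such pairs. -/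
noncomputable def probCommonEdgesEq (n m : ℕ) : ℝ :=
  (Nat.card {p : SimpleGraph (Fin n) × SimpleGraph (Fin n) //
      p.1.IsTree ∧ p.2.IsTree ∧ Nat.card (p.1 ⊓ p.2).edgeSet = m} : ℝ) /
    (n : ℝ) ^ (2 * (n - 2))

section TreePoisson
open Finset SimpleGraph
open scoped Classical

set_option linter.unusedSectionVars false

variable {V : Type} [Fintype V]

/-- number of edges -/
noncomputable def ecnt (G : SimpleGraph V) : ℕ := Nat.card G.edgeSet

/-- size of the component of `v` -/
noncomputable def csz (F : SimpleGraph V) (v : V) : ℝ := (#{w | F.Reachable v w} : ℝ)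

/-- sum over components of `φ (size)` -/
noncomputable def cPhi (φ : ℝ → ℝ) (F : SimpleGraph V) : ℝ := ∑ v, φ (csz F v) / csz F v

lemma csz_pos (F : SimpleGraph V) (v : V) : 0 < csz F v := by
  unfold csz
  exact_mod_cast card_pos.mpr ⟨v, by simp⟩

lemma one_le_csz (F : SimpleGraph V) (v : V) : 1 ≤ csz F v := by
  unfold csz
  exact_mod_cast card_pos.mpr ⟨v, by simp⟩

lemma csz_congr (F : SimpleGraph V) {v w : V} (h : F.Reachable v w) : csz F v = csz F w := by
  unfold csz
  congr 2
  ext x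
  simp only [mem_filter, mem_univ, true_and]
  exact ⟨fun h' => h.symm.trans h', fun h' => h.trans h'⟩

lemma reach_sup_edge (F : SimpleGraph V) (u v x y : V) :
    (F ⊔ edge u v).Reachable x y ↔ F.Reachable x y ∨ (F.Reachable x u ∧ F.Reachable v y) ∨
      (F.Reachable x v ∧ F.Reachable u y) := by
  constructor
  · intro h
    rw [reachable_iff_reflTransGen] at h
    induction h with
    | refl => exact Or.inl (Reachable.refl _)
    | tail _ hbc ih =>
      rename_i b c
      rw [sup_adj, edge_adj] at hbc
      rcases hbc with hbc | ⟨⟨rfl, rfl⟩ | ⟨rfl, rfl⟩, _⟩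
      · have := hbc.reachable
        rcases ih with h | ⟨h1, h2⟩ | ⟨h1, h2⟩
        · exact Or.inl (h.trans this)
        · exact Or.inr (Or.inl ⟨h1, h2.trans this⟩)
        · exact Or.inr (Or.inr ⟨h1, h2.trans this⟩)
      · rcases ih with h | ⟨h1, h2⟩ | ⟨h1, h2⟩
        · exact Or.inr (Or.inl ⟨h, Reachable.refl _⟩)
        · exact Or.inr (Or.inl ⟨h1, Reachable.refl _⟩)
        · exact Or.inl h1
      · rcases ih with h | ⟨h1, h2⟩ | ⟨h1, h2⟩
        · exact Or.inr (Or.inr ⟨h, Reachable.refl _⟩)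
        · exact Or.inl h1
        · exact Or.inr (Or.inr ⟨h1, Reachable.refl _⟩)
  · have hm : ∀ {a b}, F.Reachable a b → (F ⊔ edge u v).Reachable a b :=
      fun h => h.mono le_sup_left
    have huv : (F ⊔ edge u v).Reachable u v := by
      by_cases h : u = v
      · subst h; exact Reachable.refl _
      · exact Adj.reachable (by rw [sup_adj, edge_adj]; simp [h])
    rintro (h | ⟨h1, h2⟩ | ⟨h1, h2⟩)
    · exact hm h
    · exact (hm h1).trans (huv.trans (hm h2))
    · exact (hm h1).trans (huv.symm.trans (hm h2))

lemma csz_sup_edge (F : SimpleGraph V) (u v w : V) (huv : ¬ F.Reachable u v) :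
    csz (F ⊔ edge u v) w =
      if F.Reachable u w ∨ F.Reachable v w then csz F u + csz F v else csz F w := by
  unfold csz
  split_ifs with h
  · rw [← Nat.cast_add, ← card_union_of_disjoint]
    · congr 2
      ext x
      simp only [mem_filter, mem_univ, true_and, mem_union, reach_sup_edge]
      rcases h with h | h
      · constructor
        · rintro (h' | ⟨_, h'⟩ | ⟨_, h'⟩)
          · exact Or.inl (h.trans h')
          · exact Or.inr h'
          · exact Or.inl h'
        · rintro (h' | h')
          · exact Or.inl (h.symm.trans h')
          · exact Or.inr (Or.inl ⟨h.symm, h'⟩)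
      · constructor
        · rintro (h' | ⟨_, h'⟩ | ⟨_, h'⟩)
          · exact Or.inr (h.trans h')
          · exact Or.inr h'
          · exact Or.inl h'
        · rintro (h' | h')
          · exact Or.inr (Or.inr ⟨h.symm, h'⟩)
          · exact Or.inl (h.symm.trans h')
    · rw [Finset.disjoint_left]
      intro x hx hx'
      simp only [mem_filter, mem_univ, true_and] at hx hx'
      exact huv (hx.trans hx'.symm)
  · congr 2
    ext x
    simp only [mem_filter, mem_univ, true_and, reach_sup_edge]
    constructor
    · rintro (h' | ⟨h', _⟩ | ⟨h', _⟩)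
      · exact h'
      · exact absurd (Or.inl h'.symm) h
      · exact absurd (Or.inr h'.symm) h
    · exact Or.inl

lemma cPhi_sup_edge (φ : ℝ → ℝ) (F : SimpleGraph V) (u v : V) (huv : ¬ F.Reachable u v) :
    cPhi φ (F ⊔ edge u v) =
      cPhi φ F + (φ (csz F u + csz F v) - φ (csz F u) - φ (csz F v)) := by
  have ha := csz_pos F u
  have hb := csz_pos F v
  set a := csz F u with hadef
  set b := csz F v with hbdef
  have key : ∀ w, φ (csz (F ⊔ edge u v) w) / csz (F ⊔ edge u v) w = φ (csz F w) / csz F w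
      + ((if F.Reachable u w then (φ (a + b) / (a + b) - φ a / a) else 0)
      + (if F.Reachable v w then (φ (a + b) / (a + b) - φ b / b) else 0)) := by
    intro w
    rw [csz_sup_edge F u v w huv]
    by_cases h1 : F.Reachable u w
    · have h2 : ¬ F.Reachable v w := fun h => huv (h1.trans h.symm)
      rw [← csz_congr F h1]
      simp [h1, h2, ← hadef, ← hbdef]
    · by_cases h2 : F.Reachable v w
      · rw [← csz_congr F h2]
        simp [h1, h2, ← hadef, ← hbdef]
      · simp [h1, h2]
  unfold cPhi
  rw [sum_congr rfl (fun w _ => key w), sum_add_distrib, sum_add_distrib, ← sum_filter,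
    ← sum_filter, sum_const, sum_const, nsmul_eq_mul, nsmul_eq_mul]
  change _ + (a * _ + b * _) = _
  field_simp
  ring

/-- number of components -/
noncomputable def cnum (F : SimpleGraph V) : ℝ := cPhi (fun _ => 1) F
/-- product of component sizes -/
noncomputable def cprod (F : SimpleGraph V) : ℝ := Real.exp (cPhi Real.log F)

lemma cnum_sup_edge (F : SimpleGraph V) (u v : V) (huv : ¬ F.Reachable u v) :
    cnum (F ⊔ edge u v) = cnum F - 1 := by
  unfold cnum
  rw [cPhi_sup_edge _ F u v huv]
  ring

lemma cprod_sup_edge (F : SimpleGraph V) (u v : V) (huv : ¬ F.Reachable u v) :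
    cprod (F ⊔ edge u v) = cprod F * (1 / csz F u + 1 / csz F v) := by
  unfold cprod
  have ha := csz_pos F u
  have hb := csz_pos F v
  rw [cPhi_sup_edge _ F u v huv, Real.exp_add, Real.exp_sub, Real.exp_sub, Real.exp_log ha,
    Real.exp_log hb, Real.exp_log (by positivity)]
  congr 1
  field_simp
  ring

lemma csz_bot (v : V) : csz (⊥ : SimpleGraph V) v = 1 := by
  unfold csz
  simp [reachable_bot, filter_eq]

lemma cnum_bot : cnum (⊥ : SimpleGraph V) = Fintype.card V := by
  simp [cnum, cPhi, csz_bot]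

lemma cprod_bot : cprod (⊥ : SimpleGraph V) = 1 := by
  simp [cprod, cPhi, csz_bot]

lemma csz_conn (F : SimpleGraph V) (h : F.Connected) (v : V) : csz F v = Fintype.card V := by
  unfold csz
  rw [filter_true_of_mem (fun w _ => h.preconnected v w), card_univ]

lemma cprod_conn (F : SimpleGraph V) (h : F.Connected) : cprod F = Fintype.card V := by
  have := h.nonempty
  have hc : (0 : ℝ) < Fintype.card V := by exact_mod_cast Fintype.card_pos
  simp only [cprod, cPhi, csz_conn F h, sum_const, card_univ, nsmul_eq_mul]
  rw [mul_div_cancel₀ _ hc.ne', Real.exp_log hc]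

lemma ecnt_eq (G : SimpleGraph V) : ecnt G = #G.edgeFinset := by
  unfold ecnt
  rw [Nat.card_eq_fintype_card, edgeFinset_card]

lemma ecnt_sup_edge (F : SimpleGraph V) (u v : V) (huv : ¬ F.Reachable u v) :
    ecnt (F ⊔ edge u v) = ecnt F + 1 := by
  rw [ecnt_eq, ecnt_eq]
  convert! F.card_edgeFinset_sup_edge (fun h => huv h.reachable)
    (fun h => huv (h ▸ Reachable.refl _))

/-- deleting an edge of a forest -/
lemma sdiff_edge_facts (F : SimpleGraph V) (hF : F.IsAcyclic) {u v : V} (h : F.Adj u v) :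
    (F \ edge u v).IsAcyclic ∧ ¬ (F \ edge u v).Reachable u v ∧ (F \ edge u v) ⊔ edge u v = F := by
  refine ⟨hF.anti sdiff_le, ?_, ?_⟩
  · have := (isAcyclic_iff_forall_adj_isBridge.mp hF) h
    rw [isBridge_iff] at this
    exact this
  · rw [sdiff_sup_cancel]
    rw [edge_le_iff]
    exact Or.inr h

lemma sup_sdiff_edge (F : SimpleGraph V) {u v : V} (h : ¬ F.Reachable u v) :
    (F ⊔ edge u v) \ edge u v = F := by
  rw [sup_sdiff_right_self, sdiff_eq_left, disjoint_comm]
  have hne : u ≠ v := fun e => h (e ▸ Reachable.refl _)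
  rw [← disjoint_edgeSet, edgeSet_edge_of_ne hne]
  simp only [Set.disjoint_singleton_left, mem_edgeSet]
  exact fun h' => h h'.reachable

lemma ecnt_zero {F : SimpleGraph V} (h : ecnt F = 0) : F = ⊥ := by
  rw [ecnt_eq] at h
  simpa using h

lemma exists_adj_of_ecnt {F : SimpleGraph V} (h : ecnt F ≠ 0) : ∃ u v, F.Adj u v := by
  by_contra hc
  push Not at hc
  apply h
  have : F = ⊥ := by
    ext u v
    simp [hc]
  rw [ecnt_eq]
  subst this
  simp

lemma cnum_eq (F : SimpleGraph V) (hF : F.IsAcyclic) : cnum F = Fintype.card V - ecnt F := by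
  induction hk : ecnt F generalizing F with
  | zero => rw [ecnt_zero hk, cnum_bot]; simp
  | succ k ih =>
    obtain ⟨u, v, h⟩ := exists_adj_of_ecnt (F := F) (by omega)
    obtain ⟨h1, h2, h3⟩ := sdiff_edge_facts F hF h
    have h4 := ecnt_sup_edge _ u v h2
    have h5 := cnum_sup_edge _ u v h2
    rw [h3] at h4 h5
    rw [h5, ih _ h1 (by omega)]
    push_cast
    ring

lemma two_mul_ecnt (G : SimpleGraph V) : #{p : V × V | G.Adj p.1 p.2} = 2 * ecnt G := by
  rw [ecnt_eq]
  have := G.two_mul_card_edgeFinset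
  rw [this]

/-- pairs of vertices in different components -/
noncomputable def nrp (F : SimpleGraph V) : Finset (V × V) := {p | ¬ F.Reachable p.1 p.2}

lemma mem_nrp (F : SimpleGraph V) (p : V × V) : p ∈ nrp F ↔ ¬ F.Reachable p.1 p.2 := by
  simp [nrp]

lemma sum_nrp_fst (F : SimpleGraph V) (g : V → ℝ) :
    ∑ p ∈ nrp F, g p.1 = ∑ u, g u * (Fintype.card V - csz F u) := by
  unfold nrp
  rw [sum_filter, ← univ_product_univ, sum_product]
  refine sum_congr rfl fun u _ => ?_
  have : ∀ v, (if ¬ F.Reachable u v then g u else 0) =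
      g u - (if F.Reachable u v then g u else 0) := by
    intro v; split_ifs <;> simp_all
  simp only [this, sum_sub_distrib, sum_const, ← sum_filter, nsmul_eq_mul, card_univ]
  unfold csz
  ring

lemma sum_nrp_snd (F : SimpleGraph V) (g : V → ℝ) :
    ∑ p ∈ nrp F, g p.2 = ∑ p ∈ nrp F, g p.1 := by
  refine sum_nbij' Prod.swap Prod.swap ?_ ?_ ?_ ?_ ?_ <;>
  simp [nrp, reachable_comm]

lemma sum_nrp_mul (F : SimpleGraph V) :
    ∑ p ∈ nrp F, 1 / csz F p.1 * (1 / csz F p.2) = cnum F ^ 2 - cnum F := by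
  unfold nrp
  rw [sum_filter, ← univ_product_univ, sum_product]
  have : ∀ u v, (if ¬ F.Reachable u v then 1 / csz F u * (1 / csz F v) else 0) =
      1 / csz F u * (1 / csz F v) - (if F.Reachable u v then (1 / csz F u) ^ 2 else 0) := by
    intro u v
    by_cases h : F.Reachable u v
    · simp [h, ← csz_congr F h, sq]
    · simp [h]
  simp only [this, sum_sub_distrib, sum_const, ← sum_filter, nsmul_eq_mul, card_univ]
  rw [sq, cnum, cPhi, sum_mul_sum]
  congr 1
  refine sum_congr rfl fun u _ => ?_
  have := csz_pos F u
  change csz F u * _ = _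
  field_simp

lemma sum_nrp_one (F : SimpleGraph V) :
    ∑ p ∈ nrp F, (1 / csz F p.1 + 1 / csz F p.2) = 2 * Fintype.card V * (cnum F - 1) := by
  rw [sum_add_distrib, sum_nrp_snd F (fun v => 1 / csz F v), sum_nrp_fst F (fun v => 1 / csz F v)]
  have : ∀ u, 1 / csz F u * (Fintype.card V - csz F u) = Fintype.card V * (1 / csz F u) - 1 := by
    intro u
    have := csz_pos F u
    field_simp
  simp only [this, sum_sub_distrib, ← mul_sum]
  rw [cnum, cPhi]
  simp
  ring

lemma sum_nrp_two (F : SimpleGraph V) :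
    ∑ p ∈ nrp F, (1 / csz F p.1 + 1 / csz F p.2) ^ 2 =
      2 * (Fintype.card V * ∑ u, (1 / csz F u) ^ 2 + cnum F ^ 2 - 2 * cnum F) := by
  have e : ∀ p : V × V, (1 / csz F p.1 + 1 / csz F p.2) ^ 2 =
      (1 / csz F p.1) ^ 2 + (1 / csz F p.2) ^ 2 + 2 * (1 / csz F p.1 * (1 / csz F p.2)) := by
    intro p; ring
  simp only [e]
  rw [sum_add_distrib, sum_add_distrib, ← mul_sum, sum_nrp_mul,
    sum_nrp_snd F (fun v => (1 / csz F v) ^ 2), sum_nrp_fst F (fun v => (1 / csz F v) ^ 2)]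
  have : ∀ u, (1 / csz F u) ^ 2 * (Fintype.card V - csz F u) =
      Fintype.card V * (1 / csz F u) ^ 2 - 1 / csz F u := by
    intro u
    have := csz_pos F u
    field_simp
  simp only [this, sum_sub_distrib, ← mul_sum]
  rw [show (∑ u, 1 / csz F u) = cnum F from rfl]
  ring

lemma cnum_le (F : SimpleGraph V) : cnum F ≤ Fintype.card V := by
  rw [cnum, cPhi]
  calc _ ≤ ∑ _v : V, (1 : ℝ) := sum_le_sum fun v _ => by
        rw [div_le_one (csz_pos F v)]; exact one_le_csz F v
    _ = _ := by simp

lemma nrp_two_upper (F : SimpleGraph V) :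
    ∑ p ∈ nrp F, (1 / csz F p.1 + 1 / csz F p.2) ^ 2 ≤ 4 * (Fintype.card V : ℝ) ^ 2 := by
  rw [sum_nrp_two]
  have h0 : 0 ≤ cnum F := by
    rw [cnum, cPhi]; exact sum_nonneg fun v _ => by have := csz_pos F v; positivity
  have h1 := cnum_le F
  have h2 : ∑ u, (1 / csz F u) ^ 2 ≤ cnum F := by
    rw [cnum, cPhi]
    refine sum_le_sum fun v _ => ?_
    have hle : 1 / csz F v ≤ 1 := by
      rw [div_le_one (csz_pos F v)]; exact one_le_csz F v
    have hp : 0 ≤ 1 / csz F v := by have := csz_pos F v; positivity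
    nlinarith
  nlinarith

lemma nrp_two_lower (F : SimpleGraph V) :
    4 * (cnum F ^ 2 - cnum F) ≤ ∑ p ∈ nrp F, (1 / csz F p.1 + 1 / csz F p.2) ^ 2 := by
  rw [sum_nrp_two]
  have h := sq_sum_le_card_mul_sum_sq (s := (univ : Finset V)) (f := fun u => 1 / csz F u)
  rw [card_univ] at h
  rw [show (∑ u, 1 / csz F u) = cnum F from rfl] at h
  nlinarith

/-- forests with `k` edges -/
noncomputable def fors (V : Type) [Fintype V] (k : ℕ) : Finset (SimpleGraph V) :=
  {F | F.IsAcyclic ∧ ecnt F = k}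

lemma mem_fors (k : ℕ) (F : SimpleGraph V) : F ∈ fors V k ↔ F.IsAcyclic ∧ ecnt F = k := by
  simp [fors]

lemma double_count_s6 (g : SimpleGraph V → ℝ) (k : ℕ) :
    ∑ F ∈ fors V k, ∑ p ∈ nrp F, g (F ⊔ edge p.1 p.2) =
      2 * (k + 1) * ∑ F ∈ fors V (k + 1), g F := by
  have h : ∀ F ∈ fors V (k + 1), ∑ p : V × V with F.Adj p.1 p.2, g F = 2 * (k + 1) * g F := by
    intro F hF
    rw [sum_const, two_mul_ecnt, ((mem_fors _ _).mp hF).2, nsmul_eq_mul]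
    push_cast
    ring
  rw [mul_sum, ← sum_congr rfl h, sum_sigma', sum_sigma']
  refine sum_bij' (fun x _ => ⟨x.1 ⊔ edge x.2.1 x.2.2, x.2⟩)
    (fun x _ => ⟨x.1 \ edge x.2.1 x.2.2, x.2⟩) ?_ ?_ ?_ ?_ ?_
  · rintro ⟨F, u, v⟩ hx
    simp only [mem_sigma, mem_fors, mem_nrp, mem_filter, mem_univ, true_and] at hx ⊢
    obtain ⟨⟨h1, h2⟩, h3⟩ := hx
    refine ⟨⟨h1.sup_edge_of_not_reachable h3, by rw [ecnt_sup_edge F u v h3, h2]⟩, ?_⟩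
    have hne : u ≠ v := fun e => h3 (e ▸ Reachable.refl _)
    rw [sup_adj, edge_adj]
    simp [hne]
  · rintro ⟨F, u, v⟩ hx
    simp only [mem_sigma, mem_fors, mem_nrp, mem_filter, mem_univ, true_and] at hx ⊢
    obtain ⟨⟨h1, h2⟩, h3⟩ := hx
    obtain ⟨h4, h5, h6⟩ := sdiff_edge_facts F h1 h3
    refine ⟨⟨h4, ?_⟩, h5⟩
    have := ecnt_sup_edge _ u v h5
    rw [h6] at this
    omega
  · rintro ⟨F, u, v⟩ hx
    simp only [mem_sigma, mem_fors, mem_nrp] at hx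
    simp [sup_sdiff_edge F hx.2]
  · rintro ⟨F, u, v⟩ hx
    simp only [mem_sigma, mem_fors, mem_filter, mem_univ, true_and] at hx
    have := (sdiff_edge_facts F hx.1.1 hx.2).2.2
    simp [this]
  · rintro ⟨F, u, v⟩ hx
    rfl

/-- trees containing `F` -/
noncomputable def trees (F : SimpleGraph V) : Finset (SimpleGraph V) :=
  {T | T.IsTree ∧ F ≤ T}

lemma mem_trees (F T : SimpleGraph V) : T ∈ trees F ↔ T.IsTree ∧ F ≤ T := by
  simp [trees]

lemma tree_ecnt {T : SimpleGraph V} (h : T.IsTree) : ecnt T + 1 = Fintype.card V := by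
  rw [ecnt_eq]
  exact h.card_edgeFinset

lemma trees_rec (F : SimpleGraph V) :
    ∑ p ∈ nrp F, (#(trees (F ⊔ edge p.1 p.2)) : ℝ) =
      2 * (Fintype.card V - 1 - ecnt F) * #(trees F) := by
  have h1 : ∀ p ∈ nrp F, (#(trees (F ⊔ edge p.1 p.2)) : ℝ) =
      ∑ T ∈ trees F, if T.Adj p.1 p.2 then (1 : ℝ) else 0 := by
    intro p hp
    rw [mem_nrp] at hp
    have hne : p.1 ≠ p.2 := fun e => hp (e ▸ Reachable.refl _)
    rw [← sum_filter, sum_const, nsmul_eq_mul, mul_one]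
    congr 2
    ext T
    simp [mem_trees, edge_le_iff, hne, and_assoc]
  rw [sum_congr rfl h1, sum_comm]
  have h2 : ∀ T ∈ trees F, (∑ p ∈ nrp F, if T.Adj p.1 p.2 then (1 : ℝ) else 0) =
      2 * (Fintype.card V - 1 - ecnt F) := by
    intro T hT
    rw [mem_trees] at hT
    have hsub : ({p : V × V | F.Adj p.1 p.2} : Finset (V × V)) ⊆
      ({p : V × V | T.Adj p.1 p.2} : Finset (V × V)) := by
      intro p
      simp only [mem_filter, mem_univ, true_and]
      exact fun h => hT.2 h
    have he : (nrp F).filter (fun p => T.Adj p.1 p.2) =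
        ({p : V × V | T.Adj p.1 p.2} : Finset (V × V)) \ ({p : V × V | F.Adj p.1 p.2} : Finset (V × V)) := by
      ext p
      simp only [mem_filter, mem_nrp, mem_sdiff, mem_univ, true_and]
      constructor
      · rintro ⟨h1, h2⟩
        exact ⟨h2, fun h => h1 h.reachable⟩
      · rintro ⟨h1, h2⟩
        refine ⟨fun hr => ?_, h1⟩
        refine (sdiff_edge_facts T hT.1.isAcyclic h1).2.1 (hr.mono ?_)
        intro x y hxy
        rw [sdiff_adj]
        refine ⟨hT.2 hxy, fun h => h2 ?_⟩
        rw [edge_adj] at h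
        rcases h with ⟨⟨rfl, rfl⟩ | ⟨rfl, rfl⟩, _⟩
        · exact hxy
        · exact hxy.symm
    rw [← sum_filter, sum_const, nsmul_eq_mul, mul_one, he, cast_card_sdiff hsub, two_mul_ecnt,
      two_mul_ecnt, ← tree_ecnt hT.1]
    push_cast
    ring
  rw [sum_congr rfl h2, sum_const, nsmul_eq_mul]
  ring

lemma eq_of_le_of_ecnt {F T : SimpleGraph V} (h : F ≤ T) (h' : ecnt T ≤ ecnt F) : F = T := by
  rw [ecnt_eq, ecnt_eq] at h'
  exact edgeFinset_inj.mp (eq_of_subset_of_card_le (edgeFinset_mono h) h')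

lemma trees_count [Nonempty V] (d : ℕ) (F : SimpleGraph V) (hF : F.IsAcyclic)
    (hd : ecnt F + d + 1 = Fintype.card V) :
    (#(trees F) : ℝ) * (Fintype.card V : ℝ) ^ (ecnt F + 2) =
      (Fintype.card V : ℝ) ^ (Fintype.card V) * cprod F := by
  have hn : (0 : ℝ) < Fintype.card V := by exact_mod_cast Fintype.card_pos
  induction d generalizing F with
  | zero =>
    have hc : F.Connected := by
      refine ⟨fun u v => ?_⟩
      by_contra h
      have h1 := cnum_sup_edge F u v h
      rw [cnum_eq F hF, ← hd] at h1
      push_cast at h1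
      have h2 : 0 < cnum (F ⊔ edge u v) := by
        rw [cnum, cPhi]
        exact sum_pos (fun w _ => by have := csz_pos (F ⊔ edge u v) w; positivity)
          univ_nonempty
      linarith
    have ht : trees F = {F} := by
      ext T
      rw [mem_trees, mem_singleton]
      constructor
      · rintro ⟨h1, h2⟩
        have := tree_ecnt h1
        exact (eq_of_le_of_ecnt h2 (by omega)).symm
      · rintro rfl
        exact ⟨⟨hc, hF⟩, le_rfl⟩
    rw [ht, cprod_conn F hc, card_singleton, ← hd]
    push_cast
    ring
  | succ d ih =>
    have h1 := trees_rec F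
    have h2 : ∀ p ∈ nrp F, (#(trees (F ⊔ edge p.1 p.2)) : ℝ) * (Fintype.card V : ℝ) ^ (ecnt F + 3) =
      (Fintype.card V : ℝ) ^ (Fintype.card V) * (cprod F * (1 / csz F p.1 + 1 / csz F p.2)) := by
      intro p hp
      rw [mem_nrp] at hp
      have e := ecnt_sup_edge F p.1 p.2 hp
      have := ih _ (hF.sup_edge_of_not_reachable hp) (by rw [e]; omega)
      rw [e, cprod_sup_edge F _ _ hp] at this
      exact this
    have h3 := sum_congr rfl h2
    rw [← sum_mul, h1, ← mul_sum, ← mul_sum, sum_nrp_one, cnum_eq F hF] at h3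
    have h4 : ((Fintype.card V : ℝ) - ecnt F - 1) = d + 1 := by
      rw [← hd]; push_cast; ring
    have h5 : ((Fintype.card V : ℝ) - 1 - ecnt F) = d + 1 := by
      rw [← h4]; ring
    rw [h4, h5] at h3
    have h6 : (2 * ((d : ℝ) + 1) * Fintype.card V) ≠ 0 := by positivity
    apply mul_left_cancel₀ h6
    rw [pow_succ] at h3
    linear_combination h3

lemma choose_ecnt (G : SimpleGraph V) (k : ℕ) :
    (ecnt G).choose k = #{F : SimpleGraph V | F ≤ G ∧ ecnt F = k} := by
  rw [ecnt_eq, ← card_powersetCard]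
  symm
  refine card_bij (fun F _ => F.edgeFinset) ?_ ?_ ?_
  · intro F hF
    simp only [mem_filter, mem_univ, true_and, ecnt_eq] at hF
    rw [mem_powersetCard]
    exact ⟨edgeFinset_mono hF.1, hF.2⟩
  · intro F _ F' _ h
    exact edgeFinset_inj.mp h
  · intro s hs
    rw [mem_powersetCard] at hs
    have hsub : ∀ e ∈ s, e ∈ G.edgeSet := fun e he => mem_edgeFinset.mp (hs.1 he)
    obtain ⟨H, hH⟩ : ∃ H : SimpleGraph V, H.edgeSet = s := by
      refine ⟨fromEdgeSet (s : Set (Sym2 V)), ?_⟩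
      ext e
      rw [edgeSet_fromEdgeSet]
      simp only [Set.mem_sdiff, mem_coe]
      constructor
      · exact fun h => h.1
      · exact fun h => ⟨h, fun h' => G.not_isDiag_of_mem_edgeSet (hsub e h) (by simpa using h')⟩
    have he : H.edgeFinset = s := by
      ext e
      rw [mem_edgeFinset, hH, mem_coe]
    refine ⟨H, ?_, he⟩
    simp only [mem_filter, mem_univ, true_and, ecnt_eq]
    refine ⟨?_, by rw [he]; exact hs.2⟩
    rw [← edgeFinset_subset_edgeFinset, he]
    exact hs.1

/-- all ordered pairs of trees -/
noncomputable def tpairs (V : Type) [Fintype V] : Finset (SimpleGraph V × SimpleGraph V) :=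
  {p | p.1.IsTree ∧ p.2.IsTree}

lemma moment_eq (k : ℕ) :
    ∑ p ∈ tpairs V, ((ecnt (p.1 ⊓ p.2)).choose k : ℝ) =
      ∑ F ∈ fors V k, (#(trees F) : ℝ) ^ 2 := by
  have h1 : ∀ p ∈ tpairs V, ((ecnt (p.1 ⊓ p.2)).choose k : ℝ) =
      ∑ F ∈ fors V k, if F ≤ p.1 ∧ F ≤ p.2 then (1 : ℝ) else 0 := by
    intro p hp
    simp only [tpairs, mem_filter, mem_univ, true_and] at hp
    rw [choose_ecnt, ← sum_filter, sum_const, nsmul_eq_mul, mul_one]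
    congr 2
    ext F
    simp only [mem_filter, mem_univ, true_and, mem_fors, le_inf_iff]
    constructor
    · rintro ⟨h1, h2⟩
      exact ⟨⟨hp.1.isAcyclic.anti h1.1, h2⟩, h1⟩
    · rintro ⟨⟨_, h2⟩, h1⟩
      exact ⟨h1, h2⟩
  rw [sum_congr rfl h1, sum_comm]
  refine sum_congr rfl fun F _ => ?_
  rw [← sum_filter, sum_const, nsmul_eq_mul, mul_one, sq, ← Nat.cast_mul, ← card_product]
  congr 2
  ext p
  simp only [tpairs, mem_filter, mem_univ, true_and, mem_product, mem_trees]
  tauto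

/-- sum over forests of squared weights -/
noncomputable def wsum (n k : ℕ) : ℝ := ∑ F ∈ fors (Fin n) k, cprod F ^ 2

lemma wsum_rec (n k : ℕ) : 2 * ((k : ℝ) + 1) * wsum n (k + 1) =
    ∑ F ∈ fors (Fin n) k, cprod F ^ 2 * ∑ p ∈ nrp F, (1 / csz F p.1 + 1 / csz F p.2) ^ 2 := by
  unfold wsum
  rw [← double_count_s6]
  refine sum_congr rfl fun F _ => ?_
  rw [mul_sum]
  refine sum_congr rfl fun p hp => ?_
  rw [mem_nrp] at hp
  rw [cprod_sup_edge F _ _ hp, mul_pow]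

lemma wsum_upper (n k : ℕ) : 2 * ((k : ℝ) + 1) * wsum n (k + 1) ≤ 4 * (n : ℝ) ^ 2 * wsum n k := by
  rw [wsum_rec, wsum, mul_sum]
  refine sum_le_sum fun F _ => ?_
  rw [mul_comm]
  refine mul_le_mul_of_nonneg_right ?_ (sq_nonneg _)
  simpa using nrp_two_upper F

lemma wsum_lower (n k : ℕ) : 4 * (((n : ℝ) - k) ^ 2 - (n - k)) * wsum n k ≤
    2 * ((k : ℝ) + 1) * wsum n (k + 1) := by
  rw [wsum_rec, wsum, mul_sum]
  refine sum_le_sum fun F hF => ?_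
  rw [mem_fors] at hF
  rw [mul_comm (cprod F ^ 2)]
  refine mul_le_mul_of_nonneg_right ?_ (sq_nonneg _)
  have := nrp_two_lower F
  rw [cnum_eq F hF.1, hF.2] at this
  simpa using this

lemma wsum_zero (n : ℕ) : wsum n 0 = 1 := by
  have : fors (Fin n) 0 = {⊥} := by
    ext F
    rw [mem_fors, mem_singleton]
    constructor
    · exact fun h => ecnt_zero h.2
    · rintro rfl
      exact ⟨isAcyclic_bot, by rw [ecnt_eq]; simp⟩
  rw [wsum, this, sum_singleton, cprod_bot]
  norm_num

/-- normalized binomial moments -/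
noncomputable def bmom (n k : ℕ) : ℝ := wsum n k / (n : ℝ) ^ (2 * k)

lemma bmom_tendsto (k : ℕ) :
    Filter.Tendsto (fun n => bmom n k) Filter.atTop (nhds (2 ^ k / (k.factorial : ℝ))) := by
  induction k with
  | zero => simp [bmom, wsum_zero]
  | succ k ih =>
    have hinv : Filter.Tendsto (fun n : ℕ => (1 : ℝ) / n) Filter.atTop (nhds 0) :=
      tendsto_one_div_atTop_nhds_zero_nat
    have hup : Filter.Tendsto (fun n => 2 / ((k : ℝ) + 1) * bmom n k) Filter.atTop
        (nhds (2 ^ (k + 1) / ((k + 1).factorial : ℝ))) := by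
      have := ih.const_mul (2 / ((k : ℝ) + 1))
      convert this using 2
      rw [Nat.factorial_succ]
      push_cast
      have : (k.factorial : ℝ) ≠ 0 := by positivity
      field_simp
      ring
    have hlo : Filter.Tendsto (fun n : ℕ => ((1 - k * ((1 : ℝ) / n)) ^ 2 - ((1 : ℝ) / n) *
        (1 - k * ((1 : ℝ) / n))) * (2 / ((k : ℝ) + 1) * bmom n k)) Filter.atTop
        (nhds (2 ^ (k + 1) / ((k + 1).factorial : ℝ))) := by
      have h1 : Filter.Tendsto (fun n : ℕ => 1 - k * ((1 : ℝ) / n)) Filter.atTop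
          (nhds (1 - k * 0)) := (hinv.const_mul (k : ℝ)).const_sub 1
      have := ((h1.pow 2).sub (hinv.mul h1)).mul hup
      simpa using this
    refine tendsto_of_tendsto_of_tendsto_of_le_of_le' hlo hup ?_ ?_
    · filter_upwards [Filter.eventually_gt_atTop 0] with n hn
      have hn' : (0 : ℝ) < n := by exact_mod_cast hn
      have h := wsum_lower n k
      unfold bmom
      rw [le_div_iff₀ (by positivity)]
      have e : ((1 - k * ((1 : ℝ) / n)) ^ 2 - ((1 : ℝ) / n) *
        (1 - k * ((1 : ℝ) / n))) * (2 / ((k : ℝ) + 1) * (wsum n k / (n : ℝ) ^ (2 * k))) *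
        (n : ℝ) ^ (2 * (k + 1)) = (4 * (((n : ℝ) - k) ^ 2 - (n - k)) * wsum n k) /
          (2 * ((k : ℝ) + 1)) := by
        field_simp
        ring
      rw [e, div_le_iff₀ (by positivity)]
      linarith
    · filter_upwards [Filter.eventually_gt_atTop 0] with n hn
      have hn' : (0 : ℝ) < n := by exact_mod_cast hn
      have h := wsum_upper n k
      unfold bmom
      rw [div_le_iff₀ (by positivity)]
      have e : (2 / ((k : ℝ) + 1) * (wsum n k / (n : ℝ) ^ (2 * k))) *
        (n : ℝ) ^ (2 * (k + 1)) = (4 * (n : ℝ) ^ 2 * wsum n k) /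
          (2 * ((k : ℝ) + 1)) := by
        field_simp
        ring
      rw [e, le_div_iff₀ (by positivity)]
      linarith

lemma moment_bmom (n k : ℕ) (hn : 2 ≤ n) :
    (∑ p ∈ tpairs (Fin n), ((ecnt (p.1 ⊓ p.2)).choose k : ℝ)) / (n : ℝ) ^ (2 * (n - 2)) =
      bmom n k := by
  have : Nonempty (Fin n) := ⟨⟨0, by omega⟩⟩
  have hn' : (0 : ℝ) < n := by exact_mod_cast (by omega : 0 < n)
  rw [moment_eq, bmom, wsum, sum_div, sum_div]
  refine sum_congr rfl fun F hF => ?_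
  rw [mem_fors] at hF
  have hpos : 0 < cnum F := by
    rw [cnum, cPhi]
    exact sum_pos (fun w _ => by have := csz_pos F w; positivity) univ_nonempty
  rw [cnum_eq F hF.1, hF.2, Fintype.card_fin, sub_pos] at hpos
  have hkn : k < n := by exact_mod_cast hpos
  have h := trees_count (n - 1 - k) F hF.1 (by rw [hF.2, Fintype.card_fin]; omega)
  rw [hF.2, Fintype.card_fin] at h
  obtain ⟨r, rfl⟩ := Nat.exists_eq_add_of_le hn
  rw [div_eq_div_iff (by positivity) (by positivity)]
  have e2 : 2 + r - 2 = r := by omega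
  rw [e2]
  have h4 : ((2 + r : ℕ) : ℝ) ^ 4 ≠ 0 := by positivity
  apply mul_left_cancel₀ h4
  have h' := congrArg (fun x => x ^ 2) h
  rw [mul_pow, mul_pow] at h'
  calc _ = (#(trees F) : ℝ) ^ 2 * (((2 + r : ℕ) : ℝ) ^ (k + 2)) ^ 2 := by ring
    _ = _ := h'
    _ = _ := by ring

lemma alt_sum (y J : ℕ) : ∑ j ∈ range (J + 1), (-1 : ℝ) ^ j * ((y + 1).choose j : ℝ) =
    (-1) ^ J * (y.choose J : ℝ) := by
  induction J with
  | zero => simp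
  | succ J ih =>
    rw [sum_range_succ, ih, Nat.choose_succ_succ]
    push_cast
    ring

lemma alt_bound (y J : ℕ) : |(if y = 0 then (1 : ℝ) else 0) -
    ∑ j ∈ range J, (-1 : ℝ) ^ j * (y.choose j : ℝ)| ≤ (y.choose J : ℝ) := by
  rcases J with _ | J
  · simp only [range_zero, sum_empty, Nat.choose_zero_right, sub_zero]
    split_ifs <;> simp
  · rcases y with _ | y
    · rw [sum_range_succ']
      simp
    · rw [alt_sum]
      simp only [Nat.add_eq_zero_iff, one_ne_zero, and_false, if_false, zero_sub, abs_neg, abs_mul,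
        abs_pow, abs_one, one_pow, one_mul, Nat.abs_cast]
      rw [Nat.choose_succ_succ]
      push_cast
      have : (0 : ℝ) ≤ (y.choose (J + 1) : ℝ) := by positivity
      linarith

lemma choose_fact (x m j : ℕ) : (x.choose (m + j) : ℝ) * ((m + j).choose m : ℝ) =
    (x.choose m : ℝ) * ((x - m).choose j : ℝ) := by
  have := Nat.choose_mul (n := x) (k := m + j) (s := m) (by omega)
  rw [Nat.add_sub_cancel_left] at this
  exact_mod_cast this

lemma ind_bound (x m J : ℕ) : |(if x = m then (1 : ℝ) else 0) -
    ∑ j ∈ range J, (-1 : ℝ) ^ j * ((m + j).choose m : ℝ) * (x.choose (m + j) : ℝ)| ≤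
      ((m + J).choose m : ℝ) * (x.choose (m + J) : ℝ) := by
  have e1 : ∀ j, (-1 : ℝ) ^ j * ((m + j).choose m : ℝ) * (x.choose (m + j) : ℝ) =
      (x.choose m : ℝ) * ((-1 : ℝ) ^ j * ((x - m).choose j : ℝ)) := by
    intro j
    linear_combination (-1 : ℝ) ^ j * choose_fact x m j
  have e2 : (if x = m then (1 : ℝ) else 0) = (x.choose m : ℝ) * (if x - m = 0 then 1 else 0) := by
    rcases lt_trichotomy x m with h | h | h
    · simp [h.ne, Nat.choose_eq_zero_of_lt h]
    · simp [h]
    · have : x - m ≠ 0 := by omega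
      simp [h.ne', this]
  rw [mul_comm ((m + J).choose m : ℝ), choose_fact, e2]
  simp only [e1]
  rw [← mul_sum, ← mul_sub, abs_mul, Nat.abs_cast]
  exact mul_le_mul_of_nonneg_left (alt_bound _ _) (by positivity)

end TreePoisson

section TreePoissonMain
open Finset
open scoped Classical

lemma prob_eq (n m : ℕ) : probCommonEdgesEq n m =
    (∑ p ∈ tpairs (Fin n), if ecnt (p.1 ⊓ p.2) = m then (1 : ℝ) else 0) /
      (n : ℝ) ^ (2 * (n - 2)) := by
  unfold probCommonEdgesEq
  congr 1
  rw [← sum_filter, sum_const, nsmul_eq_mul, mul_one, Nat.card_eq_fintype_card,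
    Fintype.card_subtype]
  congr 2
  ext p
  rw [mem_filter, mem_filter, tpairs, mem_filter]
  simp only [mem_univ, true_and, and_assoc]
  exact Iff.rfl

lemma prob_bound (n m J : ℕ) (hn : 2 ≤ n) :
    |probCommonEdgesEq n m - ∑ j ∈ range J, (-1 : ℝ) ^ j * ((m + j).choose m : ℝ) * bmom n (m + j)|
      ≤ ((m + J).choose m : ℝ) * bmom n (m + J) := by
  have hD : (0 : ℝ) < (n : ℝ) ^ (2 * (n - 2)) := by
    have : (0 : ℝ) < n := by exact_mod_cast (by omega : 0 < n)
    positivity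
  rw [prob_eq]
  simp only [← moment_bmom n _ hn, ← mul_div_assoc]
  rw [← sum_div, ← sub_div, abs_div, abs_of_pos hD]
  refine div_le_div_of_nonneg_right ?_ hD.le
  simp only [mul_sum]
  rw [sum_comm, ← sum_sub_distrib]
  refine (abs_sum_le_sum_abs _ _).trans (sum_le_sum fun p _ => ?_)
  exact ind_bound _ m J

lemma coef_eq (m j : ℕ) : ((m + j).choose m : ℝ) * (2 ^ (m + j) / ((m + j).factorial : ℝ)) =
    2 ^ m / (m.factorial : ℝ) * (2 ^ j / (j.factorial : ℝ)) := by
  have h : (((m + j).choose m * m.factorial * j.factorial : ℕ) : ℝ) = ((m + j).factorial : ℕ) := by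
    have := Nat.choose_mul_factorial_mul_factorial (n := m + j) (k := m) (by omega)
    rw [Nat.add_sub_cancel_left] at this
    rw [this]
  push_cast at h
  have h1 : (m.factorial : ℝ) ≠ 0 := by positivity
  have h2 : (j.factorial : ℝ) ≠ 0 := by positivity
  have h3 : ((m + j).factorial : ℝ) ≠ 0 := by positivity
  field_simp
  rw [pow_add]
  linear_combination (2 ^ m * 2 ^ j) * h

end TreePoissonMain

theorem common_edges_poisson_limit (m : ℕ) :
    Filter.Tendsto (fun n => probCommonEdgesEq n m) Filter.atTop
      (nhds (2 ^ m * Real.exp (-2) / m.factorial)) := by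
  have hexp : Filter.Tendsto (fun J => ∑ j ∈ Finset.range J,
      (-1 : ℝ) ^ j * ((m + j).choose m : ℝ) * (2 ^ (m + j) / ((m + j).factorial : ℝ)))
      Filter.atTop (nhds (2 ^ m * Real.exp (-2) / m.factorial)) := by
    have h := (NormedSpace.expSeries_div_hasSum_exp (𝔸 := ℝ) (-2)).tendsto_sum_nat
    rw [← Real.exp_eq_exp_ℝ] at h
    have h' := h.const_mul ((2 : ℝ) ^ m / (m.factorial : ℝ))
    convert h' using 2 with J
    · rw [Finset.mul_sum]
      refine Finset.sum_congr rfl fun j _ => ?_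
      rw [mul_assoc, coef_eq, show (-2 : ℝ) = -1 * 2 by norm_num, mul_pow]
      ring
    · ring
  have herr : Filter.Tendsto (fun J => ((m + J).choose m : ℝ) *
      (2 ^ (m + J) / ((m + J).factorial : ℝ))) Filter.atTop (nhds 0) := by
    simp only [coef_eq]
    have := (FloorSemiring.tendsto_pow_div_factorial_atTop (2 : ℝ)).const_mul
      ((2 : ℝ) ^ m / (m.factorial : ℝ))
    simpa using this
  rw [Metric.tendsto_atTop]
  intro ε hε
  obtain ⟨J, hJ1, hJ2⟩ := ((hexp.eventually (Metric.ball_mem_nhds _ (half_pos (half_pos hε)))).and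
    (herr.eventually (gt_mem_nhds (half_pos (half_pos hε))))).exists
  have hs : Filter.Tendsto (fun n => ∑ j ∈ Finset.range J,
      (-1 : ℝ) ^ j * ((m + j).choose m : ℝ) * bmom n (m + j)) Filter.atTop
      (nhds (∑ j ∈ Finset.range J,
      (-1 : ℝ) ^ j * ((m + j).choose m : ℝ) * (2 ^ (m + j) / ((m + j).factorial : ℝ)))) :=
    tendsto_finsetSum _ fun j _ => (bmom_tendsto (m + j)).const_mul _
  have he := (bmom_tendsto (m + J)).const_mul ((m + J).choose m : ℝ)
  have hev := ((hs.eventually (Metric.ball_mem_nhds _ (half_pos (half_pos hε)))).and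
    (he.eventually (gt_mem_nhds hJ2))).and (Filter.eventually_ge_atTop 2)
  rw [Filter.eventually_atTop] at hev
  obtain ⟨N, hN⟩ := hev
  refine ⟨N, fun n hn => ?_⟩
  obtain ⟨⟨h1, h2⟩, h3⟩ := hN n hn
  have h4 := prob_bound n m J h3
  simp only [Metric.mem_ball, Real.dist_eq] at h1 hJ1 ⊢
  rw [abs_lt] at h1 hJ1 ⊢
  rw [abs_le] at h4
  constructor <;> linarith [h1.1, h1.2, hJ1.1, hJ1.2, h4.1, h4.2]
end

section
/- For every n ≥ 2, the variance of the number of common edges of two independent uniformly random spanning trees of K_n equals exactly V(X_n) = (n−1)(n−2)(2n−3)/n³. -/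
open Classical in
/-- The `r`-th moment `E(Xₙʳ)` (as a rational number) of the number `Xₙ` of common
edges of two spanning trees of `K_n` chosen independently and uniformly at random. -/
noncomputable def commonEdgesMomentQ (n r : ℕ) : ℚ :=
  (∑ p : SimpleGraph (Fin n) × SimpleGraph (Fin n),
      if p.1.IsTree ∧ p.2.IsTree then (Nat.card (p.1 ⊓ p.2).edgeSet : ℚ) ^ r else 0) /
    (n : ℚ) ^ (2 * (n - 2))

namespace CE
open Finset Classical

variable {n : ℕ}

noncomputable def cc (κ : Fin n → Fin n) (i : Fin n) : ℚ := ((univ.filter (fun w => κ w = i)).card : ℚ)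
noncomputable def PP (κ : Fin n → Fin n) : ℚ := ∏ i ∈ univ.image κ, cc κ i
noncomputable def mg (κ : Fin n → Fin n) (u v : Fin n) : Fin n → Fin n :=
  fun w => if κ w = κ v then κ u else κ w
noncomputable def DD (F : SimpleGraph (Fin n)) : ℚ := ∑ u, ∑ v, if F.Adj u v then 1 else 0
noncomputable def Nt (F : SimpleGraph (Fin n)) : ℚ :=
  ∑ T : SimpleGraph (Fin n), if T.IsTree ∧ F ≤ T then 1 else 0
def Good (F : SimpleGraph (Fin n)) (κ : Fin n → Fin n) : Prop :=
  (∀ a b, F.Reachable a b ↔ κ a = κ b) ∧ DD F + 2 * ((univ.image κ).card : ℚ) = 2 * n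

lemma DD_eq (F : SimpleGraph (Fin n)) : DD F = 2 * (Nat.card F.edgeSet : ℚ) := by
  have h := F.sum_degrees_eq_twice_card_edges
  have h2 : Nat.card F.edgeSet = #F.edgeFinset := by
    rw [Nat.card_eq_fintype_card, SimpleGraph.edgeFinset, Set.toFinset_card]
  rw [h2]
  have : ((∑ v, F.degree v : ℕ) : ℚ) = DD F := by
    unfold DD
    push_cast
    refine sum_congr rfl fun v _ => ?_
    rw [← SimpleGraph.card_neighborFinset_eq_degree, SimpleGraph.neighborFinset_eq_filter]
    simp
  rw [← this, h]; push_cast; rfl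

lemma cc_pos (κ : Fin n → Fin n) (u : Fin n) : 0 < cc κ (κ u) := by
  unfold cc
  exact_mod_cast card_pos.2 ⟨u, by simp⟩

lemma mg_image (κ : Fin n → Fin n) {u v : Fin n} (h : κ u ≠ κ v) :
    univ.image (mg κ u v) = (univ.image κ).erase (κ v) := by
  ext i
  simp only [mem_image, mem_univ, true_and, mem_erase, mg]
  constructor
  · rintro ⟨w, rfl⟩
    split_ifs with hw
    · exact ⟨h, u, rfl⟩
    · exact ⟨hw, w, rfl⟩
  · rintro ⟨h1, w, rfl⟩
    exact ⟨w, by simp [h1]⟩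

lemma mg_cc_u (κ : Fin n → Fin n) {u v : Fin n} (h : κ u ≠ κ v) :
    cc (mg κ u v) (κ u) = cc κ (κ u) + cc κ (κ v) := by
  unfold cc
  rw [← Nat.cast_add, ← card_union_of_disjoint]
  · congr 2
    ext w
    simp only [mem_filter, mem_univ, true_and, mem_union]
    simp only [mg]
    split_ifs with hw <;> simp [hw]
  · rw [disjoint_filter]
    intro w _ h1 h2
    exact h (h1.symm.trans h2)

lemma mg_cc (κ : Fin n → Fin n) {u v i : Fin n} (h1 : i ≠ κ u) (h2 : i ≠ κ v) :
    cc (mg κ u v) i = cc κ i := by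
  unfold cc
  congr 2
  ext w
  simp only [mem_filter, mem_univ, true_and]
  simp only [mg]
  split_ifs with hw
  · rw [hw]; exact ⟨fun h => absurd h.symm h1, fun h => absurd h.symm h2⟩
  · rfl

lemma mg_PP (κ : Fin n → Fin n) {u v : Fin n} (h : κ u ≠ κ v) :
    PP (mg κ u v) = PP κ * (1 / cc κ (κ u) + 1 / cc κ (κ v)) := by
  have hu := cc_pos κ u
  have hv := cc_pos κ v
  unfold PP
  rw [mg_image κ h, ← mul_prod_erase (univ.image κ) _ (mem_image_of_mem κ (mem_univ v)),
    ← mul_prod_erase ((univ.image κ).erase (κ v)) (cc κ) (a := κ u) (by simp [h]),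
    ← mul_prod_erase ((univ.image κ).erase (κ v)) (cc (mg κ u v)) (a := κ u) (by simp [h]),
    mg_cc_u κ h]
  rw [prod_congr rfl (g := cc κ)]
  · field_simp
    ring
  · intro i hi
    simp only [mem_erase] at hi
    exact mg_cc κ hi.1 hi.2.1

lemma sum_inv (κ : Fin n → Fin n) : ∑ u, 1 / cc κ (κ u) = ((univ.image κ).card : ℚ) := by
  rw [← sum_fiberwise_of_maps_to (s := univ) (t := univ.image κ) (g := κ)
    (fun x _ => mem_image_of_mem κ (mem_univ x))]
  rw [card_eq_sum_ones]; push_cast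
  refine sum_congr rfl fun i hi => ?_
  obtain ⟨w, -, rfl⟩ := mem_image.1 hi
  have := cc_pos κ w
  rw [sum_congr rfl (g := fun _ => 1 / cc κ (κ w))]
  · rw [sum_const, nsmul_eq_mul]
    change cc κ (κ w) * _ = 1
    field_simp
  · intro x hx
    rw [(mem_filter.1 hx).2]

lemma sum_half (κ : Fin n → Fin n) :
    ∑ u, ∑ v, (if κ u ≠ κ v then 1 / cc κ (κ u) else 0) = n * (((univ.image κ).card : ℚ) - 1) := by
  have : ∀ u, ∑ v, (if κ u ≠ κ v then 1 / cc κ (κ u) else 0) = n * (1 / cc κ (κ u)) - 1 := by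
    intro u
    have hu := cc_pos κ u
    have h1 : ∀ v, (if κ u ≠ κ v then 1 / cc κ (κ u) else 0) =
        1 / cc κ (κ u) - (if κ v = κ u then 1 else 0) * (1 / cc κ (κ u)) := by
      intro v
      by_cases h : κ u = κ v
      · simp [h]
      · simp [h, Ne.symm h]
    rw [sum_congr rfl fun v _ => h1 v, sum_sub_distrib, ← sum_mul]
    have h2 : ∑ v, (if κ v = κ u then (1:ℚ) else 0) = cc κ (κ u) := by simp [cc]
    rw [h2]; simp
    field_simp
  rw [sum_congr rfl fun u _ => this u, sum_sub_distrib, ← mul_sum, sum_inv]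
  simp; ring

lemma sum_both (κ : Fin n → Fin n) :
    ∑ u, ∑ v, (if κ u ≠ κ v then 1 / cc κ (κ u) + 1 / cc κ (κ v) else 0)
      = 2 * n * (((univ.image κ).card : ℚ) - 1) := by
  have h1 := sum_half κ
  have h2 := h1
  rw [sum_comm] at h2
  have : ∑ u, ∑ v, (if κ u ≠ κ v then 1 / cc κ (κ u) + 1 / cc κ (κ v) else 0) =
    ∑ u, ∑ v, (if κ u ≠ κ v then 1 / cc κ (κ u) else 0) +
    ∑ u, ∑ v, (if κ v ≠ κ u then 1 / cc κ (κ v) else 0) := by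
    simp only [← sum_add_distrib]
    refine sum_congr rfl fun u _ => sum_congr rfl fun v _ => ?_
    by_cases h : κ u = κ v
    · simp [h]
    · simp [h, Ne.symm h]
  rw [this, h1, h2]; ring

lemma DD_edge (F : SimpleGraph (Fin n)) {u v : Fin n} (h : ¬ F.Adj u v) (hne : u ≠ v) :
    DD (F ⊔ SimpleGraph.edge u v) = DD F + 2 := by
  have h' : ¬ F.Adj v u := fun h1 => h h1.symm
  obtain ⟨G, hG⟩ : ∃ G, G = F ⊔ SimpleGraph.edge u v := ⟨_, rfl⟩
  rw [← hG]
  have : ∀ a b, (if G.Adj a b then (1:ℚ) else 0) =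
      (if F.Adj a b then 1 else 0) + (if a = u then (if b = v then 1 else 0) else 0)
       + (if a = v then (if b = u then 1 else 0) else 0) := by
    intro a b
    simp only [hG, SimpleGraph.sup_adj, SimpleGraph.edge_adj]
    by_cases h1 : a = u <;> by_cases h2 : b = v <;> by_cases h3 : a = v <;> by_cases h4 : b = u <;>
      simp_all
  unfold DD
  simp only [this, sum_add_distrib]
  simp
  ring

lemma good_mg {F : SimpleGraph (Fin n)} {κ : Fin n → Fin n} (hG : Good F κ) {u v : Fin n}
    (h : κ u ≠ κ v) : Good (F ⊔ SimpleGraph.edge u v) (mg κ u v) := by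
  obtain ⟨hr, hd⟩ := hG
  have hne : u ≠ v := fun e => h (by rw [e])
  constructor
  · intro a b
    have hF : ∀ x y, κ x = κ y → (F ⊔ SimpleGraph.edge u v).Reachable x y := fun x y e =>
      ((hr x y).2 e).mono le_sup_left
    have huv : (F ⊔ SimpleGraph.edge u v).Reachable u v := by
      apply SimpleGraph.Adj.reachable
      simp [SimpleGraph.edge_adj, hne]
    constructor
    · rintro ⟨p⟩
      induction p with
      | nil => rfl
      | cons hadj p ih =>
        rw [← ih]
        rw [SimpleGraph.sup_adj, SimpleGraph.edge_adj] at hadj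
        rcases hadj with hadj | ⟨⟨rfl, rfl⟩ | ⟨rfl, rfl⟩, -⟩
        · have := (hr _ _).1 hadj.reachable
          simp [mg, this]
        · simp [mg]
        · simp [mg]
    · intro e
      simp only [mg] at e
      split_ifs at e with h1 h2 h2
      · exact hF _ _ (h1.trans h2.symm)
      · exact (hF _ _ h1).trans (huv.symm.trans (hF _ _ e))
      · exact (hF _ _ e).trans (huv.trans (hF _ _ h2.symm))
      · exact hF _ _ e
  · rw [mg_image κ h, DD_edge F (fun ha => h ((hr _ _).1 ha.reachable)) hne,
      cast_card_erase_of_mem (mem_image_of_mem κ (mem_univ v))]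
    linarith

lemma tree_DD {T : SimpleGraph (Fin n)} (hT : T.IsTree) : DD T = 2 * n - 2 := by
  rw [DD_eq]
  have := hT.card_edgeFinset
  rw [Nat.card_eq_fintype_card, ← Set.toFinset_card]
  change 2 * ((#T.edgeFinset : ℕ) : ℚ) = _
  have h2 : ((#T.edgeFinset : ℕ) : ℚ) + 1 = n := by
    rw [Fintype.card_fin] at this
    exact_mod_cast this
  linarith

lemma tree_adj {T F : SimpleGraph (Fin n)} (hT : T.IsTree) (hF : F ≤ T) {u v : Fin n}
    (h : T.Adj u v) (hr : F.Reachable u v) : F.Adj u v := by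
  by_contra hn
  have := (SimpleGraph.isAcyclic_iff_forall_adj_isBridge.1 hT.2) h
  rw [SimpleGraph.isBridge_iff] at this
  refine this (hr.mono ?_)
  intro a b hab
  rw [SimpleGraph.deleteEdges_adj]
  refine ⟨hF hab, ?_⟩
  intro h1
  rw [Set.mem_singleton_iff, Sym2.eq_iff] at h1
  rcases h1 with ⟨rfl, rfl⟩ | ⟨rfl, rfl⟩
  · exact hn hab
  · exact hn hab.symm

lemma tree_count {T F : SimpleGraph (Fin n)} {κ : Fin n → Fin n} (hG : Good F κ)
    (hT : T.IsTree) (hF : F ≤ T) :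
    ∑ u, ∑ v, (if κ u ≠ κ v ∧ T.Adj u v then (1:ℚ) else 0) =
      2 * (((univ.image κ).card : ℚ) - 1) := by
  have : ∀ u v, (if κ u ≠ κ v ∧ T.Adj u v then (1:ℚ) else 0) =
      (if T.Adj u v then 1 else 0) - (if F.Adj u v then 1 else 0) := by
    intro u v
    by_cases h : κ u = κ v
    · have hiff : T.Adj u v ↔ F.Adj u v :=
        ⟨fun h1 => tree_adj hT hF h1 ((hG.1 _ _).2 h), fun h1 => hF h1⟩
      simp [h, hiff]
    · have : ¬ F.Adj u v := fun ha => h ((hG.1 _ _).1 ha.reachable)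
      simp [h, this]
  simp only [this, sum_sub_distrib]
  change DD T - DD F = _
  rw [tree_DD hT]
  linarith [hG.2]

lemma Nt_rec {F : SimpleGraph (Fin n)} {κ : Fin n → Fin n} (hG : Good F κ) :
    2 * (((univ.image κ).card : ℚ) - 1) * Nt F =
      ∑ u, ∑ v, if κ u ≠ κ v then Nt (F ⊔ SimpleGraph.edge u v) else 0 := by
  have h1 : ∀ u v, (if κ u ≠ κ v then Nt (F ⊔ SimpleGraph.edge u v) else 0) =
      ∑ T : SimpleGraph (Fin n), (if T.IsTree ∧ F ≤ T then 1 else 0) *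
        (if κ u ≠ κ v ∧ T.Adj u v then (1:ℚ) else 0) := by
    intro u v
    by_cases h : κ u = κ v
    · simp [h]
    · have hne : u ≠ v := fun e => h (by rw [e])
      simp only [ne_eq, h, not_false_eq_true, if_true, true_and, Nt]
      refine sum_congr rfl fun T _ => ?_
      have : F ⊔ SimpleGraph.edge u v ≤ T ↔ F ≤ T ∧ T.Adj u v := by
        rw [sup_le_iff, SimpleGraph.edge_le_iff]
        simp [hne]
      by_cases h1 : T.IsTree <;> by_cases h2 : F ≤ T <;> by_cases h3 : T.Adj u v <;>
        simp [this, h1, h2, h3]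
  simp only [h1]
  rw [sum_congr rfl fun u _ => sum_comm, sum_comm, Nt, mul_sum]
  refine sum_congr rfl fun T _ => ?_
  simp only [← mul_sum]
  split_ifs with h
  · rw [tree_count hG h.1 h.2]; ring
  · simp

lemma Nt_main (m : ℕ) : ∀ (F : SimpleGraph (Fin n)) (κ : Fin n → Fin n), Good F κ →
    (univ.image κ).card = m + 1 → Nt F * (n:ℚ) ^ 2 = (n:ℚ) ^ (m + 1) * PP κ := by
  induction m with
  | zero =>
    intro F κ hG hc
    obtain ⟨i, hi⟩ := card_eq_one.1 hc
    have hκ : ∀ w, κ w = i := fun w => by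
      have := mem_image_of_mem κ (mem_univ w)
      rw [hi] at this; simpa using this
    have hP : PP κ = n := by
      simp [PP, hi, cc, hκ]
    have hT : F.IsTree := by
      rw [SimpleGraph.isTree_iff_connected_and_card]
      constructor
      · have : Nonempty (Fin n) := ⟨i⟩
        exact SimpleGraph.Connected.mk fun a b => (hG.1 a b).2 ((hκ a).trans (hκ b).symm)
      · have := hG.2
        rw [DD_eq, hc] at this
        rw [Nat.card_fin]
        have h3 : ((Nat.card F.edgeSet : ℕ) : ℚ) + 1 = n := by push_cast at this; linarith
        exact_mod_cast h3
    have hN : Nt F = 1 := by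
      unfold Nt
      rw [sum_eq_single F]
      · simp [hT]
      · intro T _ hne
        rw [if_neg]
        rintro ⟨h1, h2⟩
        apply hne
        refine le_antisymm ?_ h2
        intro a b hab
        exact tree_adj h1 h2 hab ((hG.1 a b).2 ((hκ a).trans (hκ b).symm))
      · simp
    rw [hN, hP]; ring
  | succ m ih =>
    intro F κ hG hc
    have h1 := Nt_rec hG
    have h2 := sum_both κ
    rw [hc] at h1 h2
    push_cast at h1 h2
    have h3 : (∑ u, ∑ v, if κ u ≠ κ v then Nt (F ⊔ SimpleGraph.edge u v) else 0) * (n:ℚ)^2 =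
       (n:ℚ) ^ (m+1) * PP κ * ∑ u, ∑ v, (if κ u ≠ κ v then 1 / cc κ (κ u) + 1 / cc κ (κ v) else 0) := by
      simp only [sum_mul, mul_sum]
      refine sum_congr rfl fun u _ => sum_congr rfl fun v _ => ?_
      by_cases h : κ u = κ v
      · simp [h]
      · simp only [ne_eq, h, not_false_eq_true, if_true]
        rw [ih _ _ (good_mg hG h), mg_PP κ h]
        · ring
        · rw [mg_image κ h, card_erase_of_mem (mem_image_of_mem κ (mem_univ v)), hc]; rfl
    rw [← h1, h2] at h3
    have hm : (2 * ((m:ℚ) + 1)) ≠ 0 := by positivity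
    apply mul_left_cancel₀ hm
    rw [pow_succ (n:ℚ) (m + 1)]
    linarith

lemma good_bot : Good (⊥ : SimpleGraph (Fin n)) id := by
  constructor
  · intro a b; simp
  · simp [DD]

lemma Nt_good {F : SimpleGraph (Fin n)} {κ : Fin n → Fin n} (hG : Good F κ) (hn : 0 < n) :
    Nt F * (n:ℚ) ^ 2 = (n:ℚ) ^ (univ.image κ).card * PP κ := by
  have : 0 < (univ.image κ).card := card_pos.2 ⟨κ ⟨0, hn⟩, mem_image_of_mem κ (mem_univ _)⟩
  have := Nt_main ((univ.image κ).card - 1) F κ hG (by omega)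
  rwa [Nat.sub_add_cancel (by omega)] at this


lemma cc_id (w : Fin n) : cc id w = 1 := by
  have : #(univ.filter fun x : Fin n => id x = w) = 1 := card_eq_one.2 ⟨w, by ext; simp⟩
  unfold cc
  exact_mod_cast this

lemma mg_id_cc {u v : Fin n} (h : u ≠ v) (a : Fin n) :
    cc (mg id u v) (mg id u v a) = if a = u ∨ a = v then 2 else 1 := by
  have hid : ∀ w : Fin n, cc id w = 1 := cc_id
  have h' : id u ≠ id v := h
  have hu := mg_cc_u id h'
  rw [hid, hid] at hu
  have e : mg id u v a = if a = v then u else a := rfl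
  rw [e]
  by_cases h1 : a = v
  · simp only [h1, if_true, or_true]
    refine hu.trans (by norm_num)
  · by_cases h2 : a = u
    · subst h2
      simp only [h1, if_false, true_or, if_true]
      refine hu.trans (by norm_num)
    · simp only [h1, h2, if_false, or_self]
      rw [mg_cc id (by simpa using h2) (by simpa using h1), hid]

lemma mg_id_PP {u v : Fin n} (h : u ≠ v) : PP (mg id u v) = 2 := by
  rw [mg_PP id (by simpa using h)]
  simp [PP, cc_id]; norm_num

lemma mg_id_card {u v : Fin n} (h : u ≠ v) : (univ.image (mg id u v)).card = n - 1 := by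
  rw [mg_image id (by simpa using h), card_erase_of_mem (by simp)]
  simp

noncomputable def xx (T : SimpleGraph (Fin n)) (q : Fin n × Fin n) : ℚ :=
  if T.Adj q.1 q.2 then 1 else 0
noncomputable def tt (T : SimpleGraph (Fin n)) : ℚ := if T.IsTree then 1 else 0

noncomputable def g1 (q : Fin n × Fin n) : ℚ := if q.1 = q.2 then 0 else 2
noncomputable def g2 (q r : Fin n × Fin n) : ℚ :=
  if q.1 = q.2 ∨ r.1 = r.2 then 0 else
  if r.1 = q.1 ∨ r.1 = q.2 then (if r.2 = q.1 ∨ r.2 = q.2 then 2 * n else 3)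
  else (if r.2 = q.1 ∨ r.2 = q.2 then 3 else 4)

lemma Nt_one (hn : 2 ≤ n) {u v : Fin n} (h : u ≠ v) :
    Nt (⊥ ⊔ SimpleGraph.edge u v) * (n:ℚ) ^ 2 = (n:ℚ) ^ (n - 2) * (2 * n) := by
  rw [Nt_good (good_mg good_bot (by simpa using h)) (by omega), mg_id_PP h, mg_id_card h]
  obtain ⟨k, rfl⟩ := Nat.exists_eq_add_of_le' hn
  rw [show k + 2 - 1 = k + 1 by omega, show k + 2 - 2 = k by omega]
  ring

lemma Nt_two (hn : 2 ≤ n) {u v a b : Fin n} (h : u ≠ v) (hab : mg id u v a ≠ mg id u v b) :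
    Nt (⊥ ⊔ SimpleGraph.edge u v ⊔ SimpleGraph.edge a b) * (n:ℚ) ^ 2 =
      (n:ℚ) ^ (n - 2) * (2 * (1 / (if a = u ∨ a = v then 2 else 1) +
        1 / (if b = u ∨ b = v then 2 else 1))) := by
  rw [Nt_good (good_mg (good_mg good_bot (by simpa using h)) hab) (by omega), mg_PP _ hab,
    mg_id_PP h, mg_image _ hab, card_erase_of_mem (mem_image_of_mem _ (mem_univ b)), mg_id_card h,
    mg_id_cc h, mg_id_cc h]
  rfl

lemma M1 (hn : 2 ≤ n) (q : Fin n × Fin n) :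
    (∑ T, tt T * xx T q) * (n:ℚ) ^ 2 = (n:ℚ) ^ (n - 2) * (n * g1 q) := by
  obtain ⟨u, v⟩ := q
  by_cases h : u = v
  · simp [xx, g1, h]
  · have := Nt_one hn h
    have e : ∑ T, tt T * xx T (u, v) = Nt (⊥ ⊔ SimpleGraph.edge u v) := by
      unfold Nt
      refine sum_congr rfl fun T _ => ?_
      have : ⊥ ⊔ SimpleGraph.edge u v ≤ T ↔ T.Adj u v := by
        rw [sup_le_iff, SimpleGraph.edge_le_iff]
        simp [h]
      by_cases h1 : T.IsTree <;> by_cases h3 : T.Adj u v <;> simp [h, h1, h3, tt, xx]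
    rw [e, this]; simp [g1, h]; left; ring

lemma M2 (hn : 2 ≤ n) (q r : Fin n × Fin n) :
    (∑ T, tt T * (xx T q * xx T r)) * (n:ℚ) ^ 2 = (n:ℚ) ^ (n - 2) * g2 q r := by
  obtain ⟨u, v⟩ := q
  obtain ⟨a, b⟩ := r
  by_cases h : u = v
  · simp [xx, g2, h]
  by_cases hab : a = b
  · simp [xx, g2, hab]
  by_cases hs : (a = u ∨ a = v) ∧ (b = u ∨ b = v)
  · have e : ∀ T : SimpleGraph (Fin n), xx T (u, v) * xx T (a, b) = xx T (u, v) := by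
      intro T
      have : T.Adj a b ↔ T.Adj u v := by
        rcases hs with ⟨rfl | rfl, rfl | rfl⟩
        · exact absurd rfl hab
        · rfl
        · exact T.adj_comm _ _
        · exact absurd rfl hab
      simp only [xx, this]
      split_ifs <;> simp
    simp only [e, M1 hn, g1, g2, h, hab, hs.1, hs.2, if_true, if_false, or_self]
    ring
  · have hne : mg id u v a ≠ mg id u v b := by
      simp only [mg, id]
      split_ifs <;> grind
    have := Nt_two hn h hne
    have e : ∑ T, tt T * (xx T (u, v) * xx T (a, b)) =
        Nt (⊥ ⊔ SimpleGraph.edge u v ⊔ SimpleGraph.edge a b) := by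
      unfold Nt
      refine sum_congr rfl fun T _ => ?_
      have : ⊥ ⊔ SimpleGraph.edge u v ⊔ SimpleGraph.edge a b ≤ T ↔ T.Adj u v ∧ T.Adj a b := by
        rw [sup_le_iff, sup_le_iff, SimpleGraph.edge_le_iff, SimpleGraph.edge_le_iff]
        simp [h, hab]
      by_cases h1 : T.IsTree <;> by_cases h3 : T.Adj u v <;> by_cases h4 : T.Adj a b <;>
        simp [h, hab, h1, h3, h4, tt, xx]
    rw [e, this]
    congr 1
    by_cases h1 : a = u ∨ a = v <;> by_cases h2 : b = u ∨ b = v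
    · exact absurd ⟨h1, h2⟩ hs
    all_goals
      simp only [g2, h, hab, h1, h2, if_true, if_false, or_self]
      norm_num

lemma sum_g1 : ∑ q : Fin n × Fin n, g1 q ^ 2 = 4 * n * ((n:ℚ) - 1) := by
  rw [Fintype.sum_prod_type]
  have : ∀ a b : Fin n, g1 (a, b) ^ 2 = 4 - if a = b then 4 else 0 := by
    intro a b
    simp only [g1]; split_ifs <;> norm_num
  simp only [this, sum_sub_distrib]
  simp
  ring

lemma sum_g2 (q : Fin n × Fin n) : ∑ r : Fin n × Fin n, g2 q r ^ 2 =
    if q.1 = q.2 then 0 else 24 * (n:ℚ) ^ 2 - 44 * n + 24 := by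
  obtain ⟨u, v⟩ := q
  by_cases h : u = v
  · simp [g2, h]
  rw [Fintype.sum_prod_type]
  obtain ⟨s, hs⟩ : ∃ s : Fin n → ℚ, s = fun a => (if a = u then 1 else 0) + (if a = v then 1 else 0) :=
    ⟨_, rfl⟩
  have key : ∀ a b : Fin n, g2 (u, v) (a, b) ^ 2 =
      (16 - 7 * s a - 7 * s b + (4 * n ^ 2 - 2) * (s a * s b)) -
      (if a = b then 16 - 14 * s a + (4 * n ^ 2 - 2) * s a else 0) := by
    intro a b
    have h' := Ne.symm h
    have hsa : s a = if a = u ∨ a = v then 1 else 0 := by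
      rw [hs]; by_cases h1 : a = u <;> by_cases h2 : a = v <;> simp_all
    have hsb : s b = if b = u ∨ b = v then 1 else 0 := by
      rw [hs]; by_cases h1 : b = u <;> by_cases h2 : b = v <;> simp_all
    by_cases hab : a = b
    · subst hab
      rw [hsa]
      by_cases h1 : a = u ∨ a = v <;> simp [g2, h1] <;> ring
    · rw [hsa, hsb]
      by_cases h1 : a = u ∨ a = v <;> by_cases h2 : b = u ∨ b = v <;>
        simp only [g2, h, hab, h1, h2, if_true, if_false, or_self] <;> ring
  have S1 : ∑ a, s a = 2 := by
    rw [hs]; simp [sum_add_distrib]; norm_num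
  simp only [key, sum_sub_distrib, sum_add_distrib, ← mul_sum, sum_ite_eq, mem_univ, if_true, S1,
    ← sum_mul]
  simp [h, ← mul_sum, S1]
  ring

lemma sum_sum_g2 : ∑ q : Fin n × Fin n, ∑ r : Fin n × Fin n, g2 q r ^ 2 =
    n * ((n:ℚ) - 1) * (24 * (n:ℚ) ^ 2 - 44 * n + 24) := by
  simp only [sum_g2]
  rw [Fintype.sum_prod_type]
  have : ∀ a b : Fin n, (if a = b then 0 else 24 * (n:ℚ) ^ 2 - 44 * n + 24) =
      (24 * (n:ℚ) ^ 2 - 44 * n + 24) - if a = b then (24 * (n:ℚ) ^ 2 - 44 * n + 24) else 0 := by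
    intro a b
    split_ifs <;> ring
  simp only [this, sum_sub_distrib, sum_ite_eq, mem_univ, if_true]
  simp
  ring

lemma card_inf (T₁ T₂ : SimpleGraph (Fin n)) :
    (Nat.card (T₁ ⊓ T₂).edgeSet : ℚ) = (∑ q, xx T₁ q * xx T₂ q) / 2 := by
  have := DD_eq (T₁ ⊓ T₂)
  have h2 : DD (T₁ ⊓ T₂) = ∑ q, xx T₁ q * xx T₂ q := by
    rw [Fintype.sum_prod_type]
    unfold DD
    refine sum_congr rfl fun u _ => sum_congr rfl fun v _ => ?_
    by_cases h1 : T₁.Adj u v <;> by_cases h2 : T₂.Adj u v <;> simp [xx, h1, h2]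
  rw [← h2, this]; ring

lemma moment1 (hn : 2 ≤ n) : commonEdgesMomentQ n 1 = 2 * ((n:ℚ) - 1) / n := by
  have hn0 : (n:ℚ) ≠ 0 := by positivity
  have e : (∑ p : SimpleGraph (Fin n) × SimpleGraph (Fin n),
      if p.1.IsTree ∧ p.2.IsTree then (Nat.card (p.1 ⊓ p.2).edgeSet : ℚ) ^ 1 else 0) =
      (∑ q : Fin n × Fin n, (∑ T, tt T * xx T q) ^ 2) / 2 := by
    have : ∀ T₁ T₂ : SimpleGraph (Fin n),
        (if T₁.IsTree ∧ T₂.IsTree then (Nat.card (T₁ ⊓ T₂).edgeSet : ℚ) ^ 1 else 0) =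
        ∑ q, (tt T₁ * xx T₁ q) * (tt T₂ * xx T₂ q) / 2 := by
      intro T₁ T₂
      rw [card_inf]
      by_cases h1 : T₁.IsTree <;> by_cases h2 : T₂.IsTree <;> simp [tt, h1, h2, sum_div]
    rw [Fintype.sum_prod_type]
    simp only [this]
    rw [sum_congr rfl fun T₁ _ => sum_comm, sum_comm, sum_div]
    refine sum_congr rfl fun q _ => ?_
    rw [sq, sum_mul_sum, sum_div]
    simp only [sum_div]
  have hM : ∀ q : Fin n × Fin n, (∑ T, tt T * xx T q) ^ 2 =
      ((n:ℚ) ^ (n - 2)) ^ 2 / n ^ 2 * g1 q ^ 2 := by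
    intro q
    have := M1 hn q
    have h3 : (∑ T, tt T * xx T q) = (n:ℚ) ^ (n - 2) * (n * g1 q) / n ^ 2 := by
      rw [← this]; field_simp
    rw [h3]; field_simp
  unfold commonEdgesMomentQ
  rw [e]
  simp only [hM, ← mul_sum, sum_g1]
  rw [mul_comm 2 (n - 2), pow_mul]
  have : ((n:ℚ) ^ (n - 2)) ≠ 0 := pow_ne_zero _ hn0
  field_simp
  ring

lemma moment2 (hn : 2 ≤ n) : commonEdgesMomentQ n 2 =
    ((n:ℚ) - 1) * (6 * (n:ℚ) ^ 2 - 11 * n + 6) / n ^ 3 := by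
  have hn0 : (n:ℚ) ≠ 0 := by positivity
  have e : (∑ p : SimpleGraph (Fin n) × SimpleGraph (Fin n),
      if p.1.IsTree ∧ p.2.IsTree then (Nat.card (p.1 ⊓ p.2).edgeSet : ℚ) ^ 2 else 0) =
      (∑ q : Fin n × Fin n, ∑ r, (∑ T, tt T * (xx T q * xx T r)) ^ 2) / 4 := by
    have : ∀ T₁ T₂ : SimpleGraph (Fin n),
        (if T₁.IsTree ∧ T₂.IsTree then (Nat.card (T₁ ⊓ T₂).edgeSet : ℚ) ^ 2 else 0) =
        ∑ s : (Fin n × Fin n) × (Fin n × Fin n),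
          (tt T₁ * (xx T₁ s.1 * xx T₁ s.2)) * (tt T₂ * (xx T₂ s.1 * xx T₂ s.2)) / 4 := by
      intro T₁ T₂
      rw [Fintype.sum_prod_type, card_inf, div_pow, sq, sum_mul_sum]
      by_cases h1 : T₁.IsTree <;> by_cases h2 : T₂.IsTree <;> simp [tt, h1, h2, sum_div]
      refine Finset.sum_congr rfl fun q _ => Finset.sum_congr rfl fun r _ => (?_ : (_ : ℚ) = _)
      ring
    rw [Fintype.sum_prod_type]
    simp only [this]
    rw [sum_congr rfl fun T₁ _ => sum_comm, sum_comm, Fintype.sum_prod_type, sum_div]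
    refine sum_congr rfl fun q _ => ?_
    rw [sum_div]
    refine sum_congr rfl fun r _ => ?_
    rw [sq, sum_mul_sum, sum_div]
    simp only [sum_div]
  have hM : ∀ q r : Fin n × Fin n, (∑ T, tt T * (xx T q * xx T r)) ^ 2 =
      ((n:ℚ) ^ (n - 2)) ^ 2 / n ^ 4 * g2 q r ^ 2 := by
    intro q r
    have := M2 hn q r
    have h3 : (∑ T, tt T * (xx T q * xx T r)) = (n:ℚ) ^ (n - 2) * g2 q r / n ^ 2 := by
      rw [← this]; field_simp
    rw [h3]; field_simp
  unfold commonEdgesMomentQ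
  rw [e]
  simp only [hM, ← mul_sum, sum_sum_g2]
  rw [mul_comm 2 (n - 2), pow_mul]
  have : ((n:ℚ) ^ (n - 2)) ≠ 0 := pow_ne_zero _ hn0
  field_simp
  ring

end CE

/-- For every `n ≥ 2`, the variance `E(Xₙ²) - E(Xₙ)²` of the number
of common edges of two independent uniformly random spanning trees of `K_n` equals
exactly `(n-1)(n-2)(2n-3)/n³`. -/
theorem variance_common_edges (n : ℕ) (hn : 2 ≤ n) :
    commonEdgesMomentQ n 2 - (commonEdgesMomentQ n 1) ^ 2 =
      ((n : ℚ) - 1) * ((n : ℚ) - 2) * (2 * (n : ℚ) - 3) / (n : ℚ) ^ 3 := by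
  have hn0 : (n:ℚ) ≠ 0 := by positivity
  rw [CE.moment1 hn, CE.moment2 hn]
  field_simp
  ring
end

section
/- For every n ≥ 2, the total variation distance between the law of X_n and the Poisson distribution with mean 2 − 2/n is at most 50/n; consequently, the total variation distance between the law of X_n and the Poisson distribution with mean 2 is at most 52/n. Here the total variation distance between the law of X_n and a Poisson law with mean λ is (1/2) Σ_{m≥0} |P(X_n = m) − e^{−λ} λ^m / m!|. -/
/-- The total variation distance between the law of `Xₙ` and the Poisson distribution
with mean `lam`: `(1/2) Σ_{m≥0} |P(Xₙ = m) − e^(−lam) lam^m / m!|`. -/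
noncomputable def tvDistPoisson (n : ℕ) (lam : ℝ) : ℝ :=
  (1 / 2) * ∑' m : ℕ,
    |probCommonEdgesEq n m - Real.exp (-lam) * lam ^ m / m.factorial|


namespace TVTree

open Finset Matrix

/-- `f` is the parent function of a tree rooted at `r`. -/
def IsPar {V : Type*} (r : V) (f : V → V) : Prop :=
  f r = r ∧ ∀ i, ∃ k, f^[k] i = r

/-- The graph of a parent function. -/
def parG {V : Type*} (f : V → V) : SimpleGraph V := SimpleGraph.fromRel (fun i j => f i = j)

lemma parG_adj {V : Type*} (f : V → V) (i j : V) :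
    (parG f).Adj i j ↔ i ≠ j ∧ (f i = j ∨ f j = i) := by
  simp [parG, SimpleGraph.fromRel_adj]

lemma IsPar.no_two {V : Type*} {r : V} {f : V → V} (hf : IsPar r f) {i j : V}
    (h1 : f i = j) (h2 : f j = i) : i = r ∧ j = r := by
  have key : ∀ k, (f^[k] i = i ∨ f^[k] i = j) := by
    intro k
    induction k with
    | zero => simp
    | succ k ih =>
      rw [Function.iterate_succ_apply']
      rcases ih with h | h <;> rw [h] <;> simp [h1, h2]
  obtain ⟨k, hk⟩ := hf.2 i
  have hr := hf.1
  rcases key k with h | h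
  · rw [hk] at h
    subst h
    exact ⟨rfl, by rw [← h1, hr]⟩
  · rw [hk] at h
    subst h
    exact ⟨by rw [← h2, hr], rfl⟩

lemma IsPar.ne {V : Type*} {r : V} {f : V → V} (hf : IsPar r f) {i : V}
    (hi : i ≠ r) : f i ≠ i := fun h => hi (hf.no_two h h).1

lemma IsPar.card_inf {V : Type*} [Fintype V] [DecidableEq V] {r : V} {f : V → V} (hf : IsPar r f)
    (G : SimpleGraph V) [DecidableRel G.Adj] :
    Nat.card (parG f ⊓ G).edgeSet = #{i ∈ univ.erase r | G.Adj i (f i)} := by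
  have himg : (parG f ⊓ G).edgeSet =
      ((({i ∈ univ.erase r | G.Adj i (f i)} : Finset V).image (fun i => s(i, f i)) :
        Finset (Sym2 V)) : Set (Sym2 V)) := by
    ext e
    induction e using Sym2.ind with
    | _ a b =>
      simp only [SimpleGraph.mem_edgeSet, SimpleGraph.inf_adj, parG_adj, coe_image, coe_filter,
        Set.mem_image, Set.mem_ofPred_eq, mem_erase, mem_univ, and_true]
      constructor
      · rintro ⟨⟨hab, h | h⟩, hG⟩
        · refine ⟨a, ⟨?_, by rwa [h]⟩, by rw [h]⟩
          rintro rfl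
          exact hab (hf.1 ▸ h)
        · refine ⟨b, ⟨?_, by rw [h]; exact hG.symm⟩, by rw [h]; exact Sym2.eq_swap⟩
          rintro rfl
          exact hab (h.symm.trans hf.1)
      · rintro ⟨i, ⟨hi, hG⟩, he⟩
        rw [Sym2.eq_iff] at he
        rcases he with ⟨rfl, rfl⟩ | ⟨rfl, rfl⟩
        · exact ⟨⟨(hf.ne hi).symm, Or.inl rfl⟩, hG⟩
        · exact ⟨⟨hf.ne hi, Or.inr rfl⟩, hG.symm⟩
  rw [himg, Nat.card_eq_card_toFinset, Finset.toFinset_coe, Finset.card_image_of_injOn]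
  intro i hi j hj hij
  simp only [coe_filter, Set.mem_ofPred_eq, mem_erase, mem_univ, and_true] at hi hj
  simp only [Sym2.eq_iff] at hij
  rcases hij with h | h
  · exact h.1
  · exact absurd (hf.no_two h.2 h.1.symm).1 hi.1

lemma IsPar.isTree {V : Type*} [Fintype V] [DecidableEq V] {r : V} {f : V → V} (hf : IsPar r f) :
    (parG f).IsTree := by
  classical
  rw [SimpleGraph.isTree_iff_connected_and_card]
  constructor
  · have hreach : ∀ k i, f^[k] i = r → (parG f).Reachable i r := by
      intro k
      induction k with
      | zero => intro i h; simp at h; subst h; exact SimpleGraph.Reachable.refl _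
      | succ k ih =>
        intro i h
        by_cases hi : i = r
        · subst hi; exact SimpleGraph.Reachable.refl _
        · refine SimpleGraph.Reachable.trans (SimpleGraph.Adj.reachable ?_) (ih (f i) h)
          rw [parG_adj]
          exact ⟨(hf.ne hi).symm, Or.inl rfl⟩
    have : Nonempty V := ⟨r⟩
    refine ⟨fun a b => ?_⟩
    obtain ⟨k, hk⟩ := hf.2 a
    obtain ⟨l, hl⟩ := hf.2 b
    exact (hreach k a hk).trans (hreach l b hl).symm
  · have := hf.card_inf (⊤ : SimpleGraph V)
    rw [inf_top_eq] at this
    rw [this]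
    have h2 : ({i ∈ univ.erase r | (⊤ : SimpleGraph V).Adj i (f i)} : Finset V) = univ.erase r := by
      apply Finset.filter_true_of_mem
      intro i hi
      simp only [mem_erase, mem_univ, and_true] at hi
      simpa using (hf.ne hi).symm
    rw [h2, Finset.card_erase_add_one (mem_univ _)]
    simp

lemma IsPar.inj {V : Type*} {r : V} {f g : V → V} (hf : IsPar r f) (hg : IsPar r g)
    (h : parG f = parG g) : f = g := by
  have key : ∀ k i, g^[k] i = r → f i = g i := by
    intro k
    induction k with
    | zero => intro i hi; simp at hi; subst hi; rw [hf.1, hg.1]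
    | succ k ih =>
      intro i hi
      have h1 := ih (g i) hi
      by_cases hir : i = r
      · subst hir; rw [hf.1, hg.1]
      · have hadj : (parG f).Adj i (g i) := by
          rw [h, parG_adj]; exact ⟨(hg.ne hir).symm, Or.inl rfl⟩
        rw [parG_adj] at hadj
        rcases hadj.2 with h2 | h2
        · exact h2
        · exact absurd (hg.no_two rfl (h1.symm.trans h2)).1 hir
  funext i
  obtain ⟨k, hk⟩ := hg.2 i
  exact key k i hk

lemma exists_par {V : Type*} [Fintype V] [DecidableEq V] (r : V) {T : SimpleGraph V}
    (hT : T.IsTree) : ∃ f, IsPar r f ∧ parG f = T := by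
  have hstep : ∀ i, i ≠ r → ∃ j, T.Adj i j ∧ T.dist i r = T.dist j r + 1 := by
    intro i hi
    obtain ⟨p, hp⟩ := hT.1.exists_walk_length_eq_dist i r
    cases p with
    | nil => exact absurd rfl hi
    | cons hadj q =>
      rename_i j
      refine ⟨j, hadj, ?_⟩
      simp only [SimpleGraph.Walk.length_cons] at hp
      have h1 := SimpleGraph.dist_le q
      have h2 := hT.1.dist_triangle (u := i) (v := j) (w := r)
      have h3 : T.dist i j = 1 := SimpleGraph.dist_eq_one_iff_adj.2 hadj
      omega
  choose! g hg using hstep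
  let f : V → V := fun i => if i = r then r else g i
  have hfr : f r = r := by simp [f]
  have hfi : ∀ i, i ≠ r → f i = g i := fun i hi => by simp [f, hi]
  have hf : IsPar r f := by
    refine ⟨hfr, ?_⟩
    have : ∀ d i, T.dist i r = d → f^[d] i = r := by
      intro d
      induction d with
      | zero =>
        intro i hi
        simpa using (hT.1.dist_eq_zero_iff.1 hi)
      | succ d ih =>
        intro i hi
        have hir : i ≠ r := by rintro rfl; simp at hi
        rw [Function.iterate_succ_apply]
        apply ih
        rw [hfi i hir]
        have := (hg i hir).2
        omega
    exact fun i => ⟨_, this _ i rfl⟩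
  refine ⟨f, hf, ?_⟩
  have hle : parG f ≤ T := by
    intro a b hab
    rw [parG_adj] at hab
    have aux : ∀ a b, a ≠ b → f a = b → T.Adj a b := by
      intro a b hne h
      have har : a ≠ r := by rintro rfl; exact hne (hfr ▸ h)
      rw [← h, hfi a har]
      exact (hg a har).1
    rcases hab.2 with h | h
    · exact aux a b hab.1 h
    · exact (aux b a hab.1.symm h).symm
  have hc1 := (SimpleGraph.isTree_iff_connected_and_card.1 hf.isTree).2
  have hc2 := (SimpleGraph.isTree_iff_connected_and_card.1 hT).2
  rw [← SimpleGraph.edgeSet_inj]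
  apply Set.eq_of_subset_of_ncard_le (SimpleGraph.edgeSet_subset_edgeSet.2 hle)
  rw [← Nat.card_coe_set_eq, ← Nat.card_coe_set_eq]
  omega

/-- Rows `e_i - e_{f i}` off the root, `e_r` at the root. -/
noncomputable def parM {V : Type*} [DecidableEq V] (r : V) (f : V → V) : Matrix V V ℝ :=
  fun i => if i = r then Pi.single r 1 else Pi.single i 1 - Pi.single (f i) 1

lemma det_parM_of_par {V : Type*} [Fintype V] [DecidableEq V] {r : V} {f : V → V}
    (hf : IsPar r f) : (parM r f).det = 1 := by
  classical
  let d : V → ℕ := fun i => Nat.find (hf.2 i)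
  have hd : ∀ i, i ≠ r → d (f i) < d i := by
    intro i hi
    have h0 : f^[d i] i = r := Nat.find_spec (hf.2 i)
    obtain ⟨m, hm⟩ : ∃ m, d i = m + 1 := by
      apply Nat.exists_eq_succ_of_ne_zero
      intro h
      rw [h] at h0
      exact hi h0
    rw [hm, Function.iterate_succ_apply] at h0
    have : d (f i) ≤ m := Nat.find_min' _ h0
    omega
  have hz : ∀ i j, i ≠ j → d i ≤ d j → parM r f i j = 0 := by
    intro i j hij hdj
    unfold parM
    by_cases hi : i = r
    · subst hi
      simp [hij.symm]
    · have : j ≠ f i := by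
        rintro rfl
        exact absurd (hd i hi) (by omega)
      simp [hi, hij.symm, this]
  have hdiag : ∀ i, parM r f i i = 1 := by
    intro i
    unfold parM
    by_cases hi : i = r
    · subst hi; simp
    · simp [hi, (hf.ne hi).symm]
  have hbt : BlockTriangular (parM r f)ᵀ d := by
    intro i j hij
    rw [transpose_apply]
    exact hz j i (by rintro rfl; omega) (by omega)
  rw [← det_transpose, hbt.det]
  apply Finset.prod_eq_one
  intro a _
  have : ((parM r f)ᵀ).toSquareBlock d a = 1 := by
    ext ⟨i, hi⟩ ⟨j, hj⟩
    simp only [toSquareBlock_def, of_apply, transpose_apply]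
    by_cases hij : i = j
    · subst hij; simp [hdiag]
    · rw [hz j i (Ne.symm hij) (by omega)]
      rw [one_apply_ne]
      simpa using hij
  rw [this, det_one]

lemma det_parM_of_not_par {V : Type*} [Fintype V] [DecidableEq V] {r : V} {f : V → V}
    (hr : f r = r) (hf : ¬ IsPar r f) : (parM r f).det = 0 := by
  classical
  have : ∃ i0, ∀ k, f^[k] i0 ≠ r := by
    by_contra! h
    exact hf ⟨hr, h⟩
  obtain ⟨i0, hi0⟩ := this
  rw [← Matrix.exists_mulVec_eq_zero_iff]
  refine ⟨fun i => if ∀ k, f^[k] i ≠ r then 1 else 0, ?_, ?_⟩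
  · intro h
    have := congrFun h i0
    simp [hi0] at this
  · funext i
    unfold parM
    by_cases hi : i = r
    · subst hi
      simp only [mulVec, if_true, single_dotProduct, Pi.zero_apply, one_mul]
      rw [if_neg]
      intro h
      exact h 0 rfl
    · simp only [mulVec, hi, if_false, sub_dotProduct, single_dotProduct, Pi.zero_apply, one_mul]
      have : (∀ k, f^[k] i ≠ r) ↔ (∀ k, f^[k] (f i) ≠ r) := by
        constructor
        · intro h k; exact h (k + 1)
        · intro h k
          cases k with
          | zero => exact hi
          | succ k => exact h k
      simp only [this, sub_self]

open Classical in
/-- Weighted matrix tree theorem, parent function form. -/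
lemma det_weighted {V : Type*} [Fintype V] [DecidableEq V] (r : V) (w : V → V → ℝ) :
    Matrix.det (Matrix.of (fun i => if i = r then Pi.single r 1 else
        ∑ k, w i k • ((Pi.single i 1 : V → ℝ) - Pi.single k 1)) : Matrix V V ℝ) =
      ∑ f : V → V with IsPar r f, ∏ i ∈ univ.erase r, w i (f i) := by
  have h1 : (fun i => if i = r then Pi.single r 1 else
        ∑ k, w i k • ((Pi.single i 1 : V → ℝ) - Pi.single k 1) : V → V → ℝ) =
      fun i => ∑ k ∈ (if i = r then {r} else univ : Finset V),
        (if i = r then 1 else w i k) •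
          (if i = r then Pi.single r 1 else (Pi.single i 1 : V → ℝ) - Pi.single k 1) := by
    funext i
    by_cases hi : i = r <;> simp [hi]
  have h2 := (Matrix.detRowAlternating (n := V) (R := ℝ)).toMultilinearMap.map_sum_finset
    (fun i k => (if i = r then 1 else w i k) •
          (if i = r then Pi.single r 1 else (Pi.single i 1 : V → ℝ) - Pi.single k 1))
    (fun i => (if i = r then {r} else univ : Finset V))
  have h3 : ∀ M : Matrix V V ℝ, M.det = (Matrix.detRowAlternating (n := V) (R := ℝ)).toMultilinearMap M :=
    fun _ => rfl
  refine (h3 _).trans ?_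
  refine (congrArg _ h1).trans ?_
  refine h2.trans ?_
  have h4 : ∀ f : V → V, (Matrix.detRowAlternating (n := V) (R := ℝ)).toMultilinearMap
      (fun i => (if i = r then 1 else w i (f i)) •
          (if i = r then Pi.single r 1 else (Pi.single i 1 : V → ℝ) - Pi.single (f i) 1)) =
      (∏ i ∈ univ.erase r, w i (f i)) * (parM r f).det := by
    intro f
    rw [MultilinearMap.map_smul_univ, smul_eq_mul]
    congr 1
    rw [← Finset.mul_prod_erase univ _ (mem_univ r)]
    simp only [if_true, one_mul]
    apply Finset.prod_congr rfl
    intro i hi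
    rw [if_neg (Finset.ne_of_mem_erase hi)]
  rw [Finset.sum_congr rfl (fun f _ => h4 f)]
  symm
  apply Finset.sum_subset_zero_on_sdiff
  · intro f hf
    simp only [mem_filter, mem_univ, true_and] at hf
    rw [Fintype.mem_piFinset]
    intro i
    by_cases hi : i = r
    · subst hi; simp [hf.1]
    · simp [hi]
  · intro f hf
    simp only [mem_sdiff, Fintype.mem_piFinset, mem_filter, mem_univ, true_and] at hf
    have hr := hf.1 r
    simp at hr
    rw [det_parM_of_not_par hr hf.2, mul_zero]
  · intro f hf
    simp only [mem_filter, mem_univ, true_and] at hf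
    rw [det_parM_of_par hf, mul_one]

open Classical in
/-- Generating function of the number of edges that a spanning tree shares with `G`. -/
lemma tree_gf {V : Type*} [Fintype V] [DecidableEq V] [Nonempty V]
    (G : SimpleGraph V) (x : ℝ) :
    (Fintype.card V : ℝ) ^ 2 * ∑ T : SimpleGraph V with T.IsTree, x ^ Nat.card (T ⊓ G).edgeSet =
      Matrix.det ((Fintype.card V : ℝ) • (1 : Matrix V V ℝ) + (x - 1) • G.lapMatrix ℝ) := by
  obtain ⟨r⟩ := ‹Nonempty V›
  set N : ℝ := (Fintype.card V : ℝ) with hN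
  let w : V → V → ℝ := fun i j => if G.Adj i j then x else 1
  set M : Matrix V V ℝ := N • (1 : Matrix V V ℝ) + (x - 1) • G.lapMatrix ℝ with hM
  let A : Matrix V V ℝ := fun i => ∑ k, w i k • ((Pi.single i 1 : V → ℝ) - Pi.single k 1)
  -- trees and parent functions
  have hsum : ∑ T : SimpleGraph V with T.IsTree, x ^ Nat.card (T ⊓ G).edgeSet =
      ∑ f : V → V with IsPar r f, ∏ i ∈ univ.erase r, w i (f i) := by
    symm
    apply Finset.sum_bij (fun f _ => parG f)
    · intro f hf
      simp only [mem_filter, mem_univ, true_and] at hf ⊢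
      exact hf.isTree
    · intro f hf g hg h
      simp only [mem_filter, mem_univ, true_and] at hf hg
      exact hf.inj hg h
    · intro T hT
      simp only [mem_filter, mem_univ, true_and] at hT
      obtain ⟨f, hf, h⟩ := exists_par r hT
      exact ⟨f, by simpa using hf, h⟩
    · intro f hf
      simp only [mem_filter, mem_univ, true_and] at hf
      rw [hf.card_inf G, Finset.prod_ite]
      simp
  have hdet := det_weighted r w
  have hA : (Matrix.of (fun i => if i = r then Pi.single r 1 else
        ∑ k, w i k • ((Pi.single i 1 : V → ℝ) - Pi.single k 1)) : Matrix V V ℝ) =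
      A.updateRow r (Pi.single r 1) := by
    ext i j
    by_cases hi : i = r
    · subst hi; simp
    · rw [Matrix.of_apply, Matrix.updateRow_ne hi, if_neg hi]
  rw [hA, ← hsum] at hdet
  rw [← hdet]
  -- entries
  have hMA : ∀ i j, M i j = A i j + 1 := by
    intro i j
    have hw : ∑ k, w i k = N + (x - 1) * G.degree i := by
      have : ∀ k, w i k = 1 + (x - 1) * (if G.Adj i k then 1 else 0) := by
        intro k; by_cases h : G.Adj i k <;> simp [w, h]
      rw [Finset.sum_congr rfl (fun k _ => this k), Finset.sum_add_distrib, ← Finset.mul_sum,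
        ← G.degree_eq_sum_if_adj]
      simp [N]
    have hAij : A i j = (if i = j then ∑ k, w i k else 0) - w i j := by
      simp only [A, Finset.sum_apply, Pi.smul_apply, Pi.sub_apply, smul_eq_mul, mul_sub,
        Finset.sum_sub_distrib]
      congr 1
      · by_cases h : i = j
        · subst h; simp
        · simp [h, Ne.symm h]
      · simp [Pi.single_apply]
    rw [hAij, hw]
    simp only [hM, SimpleGraph.lapMatrix, SimpleGraph.degMatrix, Matrix.add_apply,
      Matrix.smul_apply, Matrix.sub_apply, SimpleGraph.adjMatrix_apply, smul_eq_mul]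
    by_cases h : i = j
    · subst h
      simp [w]
    · by_cases h2 : G.Adj i j <;> (simp [h, h2, w]; try ring)
  have hrow : ∀ i, ∑ j, A i j = 0 := by
    intro i
    simp only [A, Finset.sum_apply, Pi.smul_apply, Pi.sub_apply, smul_eq_mul]
    rw [Finset.sum_comm]
    apply Finset.sum_eq_zero
    intro k _
    rw [← Finset.mul_sum]
    simp
  have hAsymm : ∀ i j, A i j = A j i := by
    intro i j
    have h1 := hMA i j
    have h2 := hMA j i
    have h3 : M i j = M j i := by
      have hs : M.IsSymm := by
        rw [hM]
        exact (Matrix.isSymm_one.smul _).add ((G.isSymm_lapMatrix ℝ).smul _)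
      exact (hs.apply i j).symm
    linarith
  -- step 1
  have s1 : M.det = N * (M.updateRow r 1).det := by
    have := Matrix.det_updateRow_sum M r 1
    have h2 : (∑ k, (1 : V → ℝ) k • M k) = N • (1 : V → ℝ) := by
      funext j
      have h5 : (∑ k, (1 : V → ℝ) k • M k) j = ∑ k, M k j := by
        rw [Finset.sum_apply (M := fun _ => ℝ) j univ (fun k => (1 : V → ℝ) k • M k)]
        simp
      rw [h5]
      simp only [Pi.smul_apply, Pi.one_apply, smul_eq_mul, mul_one]
      rw [Finset.sum_congr rfl (fun k _ => (hMA k j).trans (by rw [hAsymm k j])),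
        Finset.sum_add_distrib, hrow j]
      simp [N]
    rw [h2, Matrix.det_updateRow_smul] at this
    simpa using this.symm
  have s2 : (M.updateRow r 1).det = (A.updateRow r 1).det := by
    apply Matrix.det_eq_of_forall_row_eq_smul_add_const (fun i => if i = r then 0 else 1) r
    · simp
    · intro i j
      by_cases hi : i = r
      · subst hi; simp
      · simp [hi, hMA]
  have s3 : (A.updateRow r 1).det = N * (A.updateRow r (Pi.single r 1)).det := by
    set B := A.updateRow r 1 with hB
    have hB1 : B *ᵥ (1 : V → ℝ) = N • (Pi.single r 1 : V → ℝ) := by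
      funext i
      by_cases hi : i = r
      · subst hi; simp [hB, mulVec, dotProduct, N]
      · simp [hB, mulVec, dotProduct, hi, hrow]
    have h := congrFun (congrArg (fun v => B.adjugate *ᵥ v) hB1) r
    simp only [mulVec_mulVec, adjugate_mul, smul_mulVec, one_mulVec, Pi.smul_apply, Pi.one_apply,
      smul_eq_mul, mul_one, mulVec_smul, mulVec_single_one, col_apply] at h
    rw [h, adjugate_apply, hB]
    congr 2
    funext i
    by_cases hi : i = r
    · subst hi; simp
    · simp [hi]
  rw [s1, s2, s3]
  ring

lemma spec_aux {V : Type*} [Fintype V] [DecidableEq V] {A : Matrix V V ℝ} (hA : A.IsHermitian) :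
    (∀ a y : ℝ, (a • (1 : Matrix V V ℝ) + y • A).det = ∏ i, (a + y * hA.eigenvalues i)) ∧
    A.trace = ∑ i, hA.eigenvalues i ∧ (A * A).trace = ∑ i, hA.eigenvalues i ^ 2 := by
  set U : Matrix V V ℝ := (hA.eigenvectorUnitary : Matrix V V ℝ) with hU
  set D : Matrix V V ℝ := diagonal hA.eigenvalues with hD
  have h1 : U * star U = 1 := Unitary.coe_mul_star_self hA.eigenvectorUnitary
  have h2 : star U * U = 1 := Unitary.coe_star_mul_self hA.eigenvectorUnitary
  have hspec : A = U * D * star U := by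
    have := hA.spectral_theorem
    rw [Unitary.conjStarAlgAut_apply] at this
    exact this
  refine ⟨?_, ?_, ?_⟩
  · intro a y
    have : a • (1 : Matrix V V ℝ) + y • A = U * (a • (1 : Matrix V V ℝ) + y • D) * star U := by
      rw [Matrix.mul_add, Matrix.add_mul, Matrix.mul_smul, Matrix.mul_one, Matrix.smul_mul, h1,
        Matrix.mul_smul, Matrix.smul_mul, ← hspec]
    rw [this, Matrix.det_mul_comm, ← Matrix.mul_assoc, h2, Matrix.one_mul]
    have hd : a • (1 : Matrix V V ℝ) + y • D = diagonal (fun i => a + y * hA.eigenvalues i) := by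
      ext i j
      by_cases h : i = j
      · subst h; simp [hD]
      · simp [hD, h]
    rw [hd, det_diagonal]
  · simpa using hA.trace_eq_sum_eigenvalues
  · have : A * A = U * (D * D) * star U := by
      calc A * A = (U * D * star U) * (U * D * star U) := by rw [← hspec]
        _ = U * D * (star U * U) * D * star U := by simp only [Matrix.mul_assoc]
        _ = _ := by rw [h2]; simp only [Matrix.mul_assoc, Matrix.one_mul]
    rw [this, Matrix.trace_mul_comm, ← Matrix.mul_assoc, h2, Matrix.one_mul, hD,
      diagonal_mul_diagonal, trace_diagonal]
    simp only [sq]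

open Classical in
lemma trace_lap {V : Type*} [Fintype V] [DecidableEq V] (G : SimpleGraph V) :
    (G.lapMatrix ℝ).trace = ∑ v, (G.degree v : ℝ) := by
  simp [Matrix.trace, SimpleGraph.lapMatrix, SimpleGraph.degMatrix]

open Classical in
lemma trace_lap_sq {V : Type*} [Fintype V] [DecidableEq V] (G : SimpleGraph V) :
    (G.lapMatrix ℝ * G.lapMatrix ℝ).trace = ∑ v, ((G.degree v : ℝ) ^ 2 + G.degree v) := by
  simp only [Matrix.trace, diag_apply, mul_apply]
  apply Finset.sum_congr rfl
  intro v _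
  have : ∀ j, G.lapMatrix ℝ v j * G.lapMatrix ℝ j v =
      (if v = j then (G.degree v : ℝ) ^ 2 else 0) + (if G.Adj v j then 1 else 0) := by
    intro j
    rw [(G.isSymm_lapMatrix ℝ).apply v j]
    simp only [SimpleGraph.lapMatrix, SimpleGraph.degMatrix, Matrix.sub_apply,
      SimpleGraph.adjMatrix_apply]
    by_cases h : v = j
    · subst h; simp [sq]
    · by_cases h2 : G.Adj v j <;> simp [h, h2]
  rw [Finset.sum_congr rfl (fun j _ => this j), Finset.sum_add_distrib, ← G.degree_eq_sum_if_adj]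
  simp

open Polynomial in
open Classical in
/-- The edge-overlap of a uniform spanning tree with a fixed graph is Poisson binomial. -/
lemma exists_bernoulli {n : ℕ} (hn : 2 ≤ n) (G : SimpleGraph (Fin n)) :
    ∃ p : Fin n → ℝ, (∀ i, 0 ≤ p i ∧ p i ≤ 1) ∧
      (∑ T : SimpleGraph (Fin n) with T.IsTree, (X : ℝ[X]) ^ Nat.card (T ⊓ G).edgeSet =
        C ((n : ℝ) ^ (n - 2)) * ∏ i, (C (1 - p i) + C (p i) * X)) ∧
      (∑ i, p i = (∑ v, (G.degree v : ℝ)) / n) ∧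
      (∑ i, p i ^ 2 = (∑ v, ((G.degree v : ℝ) ^ 2 + G.degree v)) / n ^ 2) := by
  have : Nonempty (Fin n) := ⟨⟨0, by omega⟩⟩
  have hn0 : (0 : ℝ) < n := by positivity
  have hA := G.isHermitian_lapMatrix ℝ
  obtain ⟨h1, h2, h3⟩ := spec_aux hA
  have hev : ∀ x : ℝ, ∑ T : SimpleGraph (Fin n) with T.IsTree, x ^ Nat.card (T ⊓ G).edgeSet =
      (n : ℝ) ^ (n - 2) * ∏ i, ((1 - hA.eigenvalues i / n) + hA.eigenvalues i / n * x) := by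
    intro x
    have h := tree_gf G x
    rw [h1, Fintype.card_fin] at h
    have h4 : ∏ i, ((n : ℝ) + (x - 1) * hA.eigenvalues i) =
        (n : ℝ) ^ n * ∏ i, ((1 - hA.eigenvalues i / n) + hA.eigenvalues i / n * x) := by
      have : (n : ℝ) ^ n = ∏ _i : Fin n, (n : ℝ) := by simp
      rw [this, ← Finset.prod_mul_distrib]
      apply Finset.prod_congr rfl
      intro i _
      field_simp
      ring
    rw [h4] at h
    have h5 : (n : ℝ) ^ n = n ^ 2 * n ^ (n - 2) := by rw [← pow_add]; congr 1; omega
    rw [h5, mul_assoc] at h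
    exact mul_left_cancel₀ (by positivity) h
  have hpos : ∀ x : ℝ, 0 < x →
      0 < ∑ T : SimpleGraph (Fin n) with T.IsTree, x ^ Nat.card (T ⊓ G).edgeSet := by
    intro x hx
    apply Finset.sum_pos
    · intro T _; positivity
    · by_contra hne
      rw [Finset.not_nonempty_iff_eq_empty] at hne
      have h6 := hev 1
      rw [hne, Finset.sum_empty] at h6
      simp only [mul_one, sub_add_cancel, Finset.prod_const_one] at h6
      exact absurd h6.symm (by positivity)
  refine ⟨fun i => hA.eigenvalues i / n, ?_, ?_, ?_, ?_⟩
  · intro i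
    by_contra hcon
    set q := hA.eigenvalues i / n with hq
    have hqq : q < 0 ∨ 1 < q := by
      by_contra! h
      exact hcon h
    have hq0 : q ≠ 0 := by rcases hqq with h | h <;> linarith
    have hx : 0 < (q - 1) / q := by
      rcases hqq with h | h
      · exact div_pos_of_neg_of_neg (by linarith) h
      · exact div_pos (by linarith) (by linarith)
    have hp := hpos _ hx
    rw [hev, Finset.prod_eq_zero (mem_univ i), mul_zero] at hp
    · exact lt_irrefl _ hp
    · rw [← hq]; field_simp; ring
  · apply Polynomial.funext
    intro x
    simp only [eval_finsetSum, eval_pow, eval_X, eval_mul, eval_C, eval_prod, eval_add]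
    exact hev x
  · rw [← trace_lap, h2, Finset.sum_div]
  · rw [← trace_lap_sq, h3, Finset.sum_div]
    simp only [div_pow]

/-- Poisson weights. -/
noncomputable def poi (μ : ℝ) (m : ℕ) : ℝ := Real.exp (-μ) * μ ^ m / m.factorial

/-- Convolution of sequences. -/
noncomputable def cv (f g : ℕ → ℝ) (m : ℕ) : ℝ := ∑ k ∈ HasAntidiagonal.antidiagonal m, f k.1 * g k.2

lemma poi_nonneg {μ : ℝ} (h : 0 ≤ μ) (m : ℕ) : 0 ≤ poi μ m := by unfold poi; positivity

lemma poi_hasSum (μ : ℝ) : HasSum (poi μ) 1 := by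
  have h := (NormedSpace.expSeries_div_hasSum_exp (𝔸 := ℝ) μ).mul_left (Real.exp (-μ))
  rw [← Real.exp_eq_exp_ℝ, ← Real.exp_add] at h
  simp only [neg_add_cancel, Real.exp_zero, ← mul_div_assoc] at h
  exact h

lemma poi_add (μ ν : ℝ) : poi (μ + ν) = cv (poi μ) (poi ν) := by
  funext m
  unfold poi cv
  rw [(Commute.all μ ν).add_pow', Finset.mul_sum, Finset.sum_div]
  apply Finset.sum_congr rfl
  rintro ⟨i, j⟩ hij
  rw [HasAntidiagonal.mem_antidiagonal] at hij
  simp only at hij ⊢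
  subst hij
  have hc : ((i + j).choose i : ℝ) * i.factorial * j.factorial = (i + j).factorial := by
    rw [Nat.choose_symm_add]
    exact_mod_cast Nat.add_choose_mul_factorial_mul_factorial i j
  have h1 : (i.factorial : ℝ) ≠ 0 := by positivity
  have h2 : (j.factorial : ℝ) ≠ 0 := by positivity
  have h3 : ((i + j).factorial : ℝ) ≠ 0 := by positivity
  rw [nsmul_eq_mul, neg_add, Real.exp_add]
  field_simp
  rw [← hc]
  ring

lemma cv_l1 {f g : ℕ → ℝ} (hf : Summable fun m => |f m|) (hg : Summable fun m => |g m|) :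
    (Summable fun m => |cv f g m|) ∧ ∑' m, |cv f g m| ≤ (∑' m, |f m|) * ∑' m, |g m| := by
  have hf' : Summable fun m => ‖|f m|‖ := by simpa only [Real.norm_eq_abs, abs_abs] using hf
  have hg' : Summable fun m => ‖|g m|‖ := by simpa only [Real.norm_eq_abs, abs_abs] using hg
  have hf2 : Summable fun m => ‖f m‖ := by simpa only [Real.norm_eq_abs] using hf
  have hg2 : Summable fun m => ‖g m‖ := by simpa only [Real.norm_eq_abs] using hg
  have h := tsum_mul_tsum_eq_tsum_sum_antidiagonal_of_summable_norm hf' hg'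
  have hs : Summable fun m => |cv f g m| := by
    have h0 := summable_norm_sum_mul_antidiagonal_of_summable_norm hf2 hg2
    simp only [Real.norm_eq_abs] at h0
    exact h0
  have hs2 := (summable_norm_sum_mul_antidiagonal_of_summable_norm hf' hg').of_norm
  refine ⟨hs, ?_⟩
  rw [h]
  apply Summable.tsum_le_tsum _ hs hs2
  intro m
  unfold cv
  refine (Finset.abs_sum_le_sum_abs _ _).trans (le_of_eq ?_)
  simp only [abs_mul]

lemma poi_abs {μ : ℝ} (h : 0 ≤ μ) : HasSum (fun m => |poi μ m|) 1 := by
  have : (fun m => |poi μ m|) = poi μ := by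
    funext m; exact abs_of_nonneg (poi_nonneg h m)
  rw [this]; exact poi_hasSum μ

lemma poi_zero (μ : ℝ) : poi μ 0 = Real.exp (-μ) := by simp [poi]
lemma poi_one (μ : ℝ) : poi μ 1 = Real.exp (-μ) * μ := by simp [poi]

open Polynomial in
lemma bern_poi {p : ℝ} (h0 : 0 ≤ p) :
    (Summable fun m => |(C (1 - p) + C p * X : ℝ[X]).coeff m - poi p m|) ∧
      ∑' m, |(C (1 - p) + C p * X : ℝ[X]).coeff m - poi p m| ≤ 2 * p ^ 2 := by
  have hc0 : (C (1 - p) + C p * X : ℝ[X]).coeff 0 = 1 - p := by simp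
  have hc1 : (C (1 - p) + C p * X : ℝ[X]).coeff 1 = p := by
    rw [coeff_add, coeff_C_mul, coeff_C, coeff_X]; simp
  have hc2 : ∀ m, (C (1 - p) + C p * X : ℝ[X]).coeff (m + 2) = 0 := by
    intro m; rw [coeff_add, coeff_C_mul, coeff_C, coeff_X]; simp
  have htail : HasSum (fun m => poi p (m + 2)) (1 - (Real.exp (-p) + Real.exp (-p) * p)) := by
    have := (hasSum_nat_add_iff' 2).2 (poi_hasSum p)
    simpa [Finset.sum_range_succ, poi_zero, poi_one] using this
  have htail' : HasSum (fun m => |(C (1 - p) + C p * X : ℝ[X]).coeff (m + 2) - poi p (m + 2)|)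
      (1 - (Real.exp (-p) + Real.exp (-p) * p)) := by
    convert htail using 2 with m
    rw [hc2, zero_sub, abs_neg, abs_of_nonneg (poi_nonneg h0 _)]
  have hall := (hasSum_nat_add_iff (f := fun m => |(C (1 - p) + C p * X : ℝ[X]).coeff m - poi p m|)
    2).1 htail'
  refine ⟨hall.summable, ?_⟩
  rw [hall.tsum_eq]
  simp only [Finset.sum_range_succ, Finset.sum_range_zero, zero_add, hc0, hc1, poi_zero, poi_one]
  have he : 1 - p ≤ Real.exp (-p) := by have := Real.add_one_le_exp (-p); linarith
  have he1 : Real.exp (-p) ≤ 1 := Real.exp_le_one_iff.2 (by linarith)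
  rw [abs_of_nonpos (by linarith), abs_of_nonneg (by nlinarith)]
  nlinarith

open Polynomial in
lemma bern_abs {p : ℝ} (h0 : 0 ≤ p) (h1 : p ≤ 1) :
    HasSum (fun m => |(C (1 - p) + C p * X : ℝ[X]).coeff m|) 1 := by
  have hc0 : (C (1 - p) + C p * X : ℝ[X]).coeff 0 = 1 - p := by simp
  have hc1 : (C (1 - p) + C p * X : ℝ[X]).coeff 1 = p := by
    rw [coeff_add, coeff_C_mul, coeff_C, coeff_X]; simp
  have h := hasSum_sum_of_ne_finset_zero (L := SummationFilter.unconditional ℕ) (s := range 2)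
    (f := fun m => |(C (1 - p) + C p * X : ℝ[X]).coeff m|) (by
      intro m hm
      obtain ⟨k, rfl⟩ : ∃ k, m = k + 2 := ⟨m - 2, by simp at hm; omega⟩
      rw [coeff_add, coeff_C_mul, coeff_C, coeff_X]; simp)
  simp only [Finset.sum_range_succ, Finset.sum_range_zero, hc0, hc1] at h
  rw [abs_of_nonneg h0, abs_of_nonneg (by linarith)] at h
  simpa using h

open Polynomial in
/-- Inequality of Le Cam. -/
lemma le_cam {ι : Type*} [DecidableEq ι] (p : ι → ℝ) (s : Finset ι)
    (hp : ∀ i, 0 ≤ p i ∧ p i ≤ 1) :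
    (Summable fun m => |(∏ i ∈ s, (C (1 - p i) + C (p i) * X) : ℝ[X]).coeff m -
        poi (∑ i ∈ s, p i) m|) ∧
      ∑' m, |(∏ i ∈ s, (C (1 - p i) + C (p i) * X) : ℝ[X]).coeff m - poi (∑ i ∈ s, p i) m| ≤
        2 * ∑ i ∈ s, p i ^ 2 := by
  induction s using Finset.induction_on with
  | empty =>
    have : ∀ m, |(∏ i ∈ (∅ : Finset ι), (C (1 - p i) + C (p i) * X) : ℝ[X]).coeff m -
        poi (∑ i ∈ (∅ : Finset ι), p i) m| = 0 := by
      intro m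
      cases m with
      | zero => simp [poi]
      | succ m => simp [poi, coeff_one]
    simp only [this]
    refine ⟨summable_zero, by simp⟩
  | insert a s ha ih =>
    obtain ⟨ihs, ihb⟩ := ih
    rw [Finset.prod_insert ha, Finset.sum_insert ha, Finset.sum_insert ha]
    set P : ℝ[X] := ∏ i ∈ s, (C (1 - p i) + C (p i) * X) with hP
    set μ := ∑ i ∈ s, p i with hμ
    have hμ0 : 0 ≤ μ := Finset.sum_nonneg (fun i _ => (hp i).1)
    set B : ℝ[X] := C (1 - p a) + C (p a) * X with hB
    obtain ⟨hb1, hb2⟩ := bern_poi (hp a).1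
    have hb3 := bern_abs (hp a).1 (hp a).2
    rw [← hB] at hb1 hb2 hb3
    have hpo := poi_abs hμ0
    obtain ⟨c1, c2⟩ := cv_l1 (f := B.coeff) (g := fun m => P.coeff m - poi μ m) hb3.summable ihs
    obtain ⟨d1, d2⟩ := cv_l1 (f := fun m => B.coeff m - poi (p a) m) (g := poi μ) hb1 hpo.summable
    rw [hb3.tsum_eq, one_mul] at c2
    rw [hpo.tsum_eq, mul_one] at d2
    have hle : ∀ m, |(B * P).coeff m - poi (p a + μ) m| ≤
        |cv B.coeff (fun m => P.coeff m - poi μ m) m| +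
          |cv (fun m => B.coeff m - poi (p a) m) (poi μ) m| := by
      intro m
      refine le_trans (le_of_eq ?_) (abs_add_le _ _)
      congr 1
      rw [poi_add, coeff_mul]
      unfold cv
      rw [← Finset.sum_sub_distrib, ← Finset.sum_add_distrib]
      apply Finset.sum_congr rfl
      intro k _
      ring
    have hsum : Summable fun m => |(B * P).coeff m - poi (p a + μ) m| :=
      Summable.of_nonneg_of_le (fun _ => abs_nonneg _) hle (c1.add d1)
    refine ⟨hsum, ?_⟩
    refine (Summable.tsum_le_tsum hle hsum (c1.add d1)).trans ?_
    rw [Summable.tsum_add c1 d1]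
    linarith

lemma poi_shift {a b : ℝ} (ha : 0 ≤ a) (hb : 0 ≤ b) :
    (Summable fun m => |poi a m - poi (b + a) m|) ∧
      ∑' m, |poi a m - poi (b + a) m| ≤ 2 * b := by
  let δ : ℕ → ℝ := fun m => if m = 0 then 1 else 0
  have htail : HasSum (fun m => |δ (m + 1) - poi b (m + 1)|) (1 - Real.exp (-b)) := by
    have := (hasSum_nat_add_iff' 1).2 (poi_hasSum b)
    rw [Finset.sum_range_one, poi_zero] at this
    have e : (fun m => |δ (m + 1) - poi b (m + 1)|) = fun m => poi b (m + 1) := by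
      funext m
      rw [show δ (m + 1) = 0 from rfl, zero_sub, abs_neg, abs_of_nonneg (poi_nonneg hb _)]
    rw [e]
    exact this
  have hall := (hasSum_nat_add_iff (f := fun m => |δ m - poi b m|) 1).1 htail
  have hpo := poi_abs ha
  obtain ⟨d1, d2⟩ := cv_l1 (f := fun m => δ m - poi b m) (g := poi a) hall.summable hpo.summable
  have heq : ∀ m, cv (fun m => δ m - poi b m) (poi a) m = poi a m - poi (b + a) m := by
    intro m
    rw [poi_add]
    unfold cv
    simp only [sub_mul, Finset.sum_sub_distrib]
    congr 1
    rw [Finset.sum_eq_single (0, m)]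
    · simp [δ]
    · rintro ⟨i, j⟩ hij hne
      rw [HasAntidiagonal.mem_antidiagonal] at hij
      have : i ≠ 0 := by
        rintro rfl
        apply hne
        simp at hij
        simp [hij]
      simp [δ, this]
    · intro h; simp at h
  simp only [heq] at d1 d2
  refine ⟨d1, d2.trans ?_⟩
  rw [hpo.tsum_eq, hall.tsum_eq, mul_one, Finset.sum_range_one, poi_zero]
  have he : 1 - b ≤ Real.exp (-b) := by have := Real.add_one_le_exp (-b); linarith
  have he1 : Real.exp (-b) ≤ 1 := Real.exp_le_one_iff.2 (by linarith)
  simp only [δ, if_true]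
  rw [abs_of_nonneg (by linarith)]
  linarith

open Polynomial in
/-- Second factorial moment of a Poisson binomial law. -/
lemma moment {ι : Type*} [DecidableEq ι] (p : ι → ℝ) (s : Finset ι) :
    (∏ i ∈ s, (C (1 - p i) + C (p i) * X) : ℝ[X]).eval 1 = 1 ∧
    (derivative (∏ i ∈ s, (C (1 - p i) + C (p i) * X) : ℝ[X])).eval 1 = ∑ i ∈ s, p i ∧
    (derivative (derivative (∏ i ∈ s, (C (1 - p i) + C (p i) * X) : ℝ[X]))).eval 1 ≤
      (∑ i ∈ s, p i) ^ 2 := by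
  induction s using Finset.induction_on with
  | empty => simp
  | insert a s ha ih =>
    obtain ⟨i1, i2, i3⟩ := ih
    rw [Finset.prod_insert ha, Finset.sum_insert ha]
    set P : ℝ[X] := ∏ i ∈ s, (C (1 - p i) + C (p i) * X) with hP
    simp only [derivative_mul, derivative_add, derivative_C, derivative_X, eval_add, eval_mul,
      eval_C, eval_X, i1, i2, zero_mul, zero_add, mul_one]
    refine ⟨by ring, by ring, ?_⟩
    nlinarith [sq_nonneg (p a)]

open Classical in
/-- The finset of spanning trees. -/
noncomputable def trees (n : ℕ) : Finset (SimpleGraph (Fin n)) := {T | T.IsTree}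

lemma mem_trees {n : ℕ} {T : SimpleGraph (Fin n)} : T ∈ trees n ↔ T.IsTree := by
  classical
  simp [trees]

open Classical in
lemma sum_degree_tree {n : ℕ} (hn : 2 ≤ n) {T : SimpleGraph (Fin n)} (hT : T.IsTree) :
    ∑ v, (T.degree v : ℝ) = 2 * (n - 1) := by
  have h1 := T.sum_degrees_eq_twice_card_edges
  have h2 := hT.card_edgeFinset
  rw [Fintype.card_fin] at h2
  have h3 : (#T.edgeFinset : ℝ) + 1 = n := by exact_mod_cast h2
  have h4 : ∑ v, (T.degree v : ℝ) = 2 * (#T.edgeFinset : ℝ) := by exact_mod_cast h1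
  rw [h4]
  linarith

/-- Cayley formula. -/
lemma card_trees {n : ℕ} (hn : 2 ≤ n) : (#(trees n) : ℝ) = (n : ℝ) ^ (n - 2) := by
  classical
  obtain ⟨p, -, h, -, -⟩ := exists_bernoulli hn (⊥ : SimpleGraph (Fin n))
  have h2 := congrArg (Polynomial.eval 1) h
  rw [Polynomial.eval_mul, (moment p univ).1] at h2
  simpa [Polynomial.eval_finsetSum, trees] using h2

lemma isPar_const {V : Type*} (v : V) : IsPar v (fun _ => v) :=
  ⟨rfl, fun _ => ⟨1, rfl⟩⟩

open Classical in
lemma deg_bound {n : ℕ} (hn : 2 ≤ n) (v : Fin n) :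
    ∑ T ∈ trees n, ((T.degree v : ℝ) * (T.degree v - 1)) ≤ 4 * (n : ℝ) ^ (n - 2) := by
  have hn0 : (0 : ℝ) < n := by positivity
  have hS := (isPar_const v).isTree
  obtain ⟨p, -, h, hs, -⟩ := exists_bernoulli hn (parG (fun _ : Fin n => v))
  rw [sum_degree_tree hn hS] at hs
  have hcard : ∀ T : SimpleGraph (Fin n),
      Nat.card (T ⊓ parG (fun _ : Fin n => v)).edgeSet = T.degree v := by
    intro T
    rw [inf_comm, (isPar_const v).card_inf T, ← SimpleGraph.card_neighborFinset_eq_degree]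
    congr 1
    ext i
    simp only [mem_filter, mem_erase, mem_univ, and_true, SimpleGraph.mem_neighborFinset]
    exact ⟨fun h => h.2.symm, fun h => ⟨h.ne', h.symm⟩⟩
  have h2 := congrArg
    (fun P => Polynomial.eval 1 (Polynomial.derivative (Polynomial.derivative P))) h
  simp only [hcard, Polynomial.derivative_sum, Polynomial.derivative_X_pow,
    Polynomial.derivative_C_mul, Polynomial.derivative_C, zero_mul, zero_add,
    Polynomial.eval_finsetSum, Polynomial.eval_mul, Polynomial.eval_C, Polynomial.eval_pow,
    Polynomial.eval_X, one_pow, mul_one] at h2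
  have h3 : ∑ T ∈ trees n, ((T.degree v : ℝ) * (T.degree v - 1)) =
      (n : ℝ) ^ (n - 2) * Polynomial.eval 1 (Polynomial.derivative (Polynomial.derivative
        (∏ i, (Polynomial.C (1 - p i) + Polynomial.C (p i) * Polynomial.X)))) := by
    rw [← h2]
    apply Finset.sum_congr rfl
    intro T _
    rcases Nat.eq_zero_or_pos (T.degree v) with h0 | h0
    · simp [h0]
    · rw [Nat.cast_sub h0]; simp
  rw [h3, mul_comm]
  apply mul_le_mul_of_nonneg_right _ (by positivity)
  refine (moment p univ).2.2.trans ?_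
  rw [hs]
  have h5 : 2 * ((n : ℝ) - 1) / n ≤ 2 := by
    rw [div_le_iff₀ hn0]; linarith
  have h6 : 0 ≤ 2 * ((n : ℝ) - 1) / n := by
    have : (2 : ℝ) ≤ n := by exact_mod_cast hn
    apply div_nonneg <;> linarith
  nlinarith

open Classical in
lemma deg_sum_bound {n : ℕ} (hn : 2 ≤ n) :
    ∑ T ∈ trees n, ∑ v, ((T.degree v : ℝ) ^ 2 + T.degree v) ≤ 8 * n * (n : ℝ) ^ (n - 2) := by
  have h1 : ∀ T ∈ trees n, ∑ v, ((T.degree v : ℝ) ^ 2 + T.degree v) =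
      ∑ v, ((T.degree v : ℝ) * (T.degree v - 1)) + 2 * (2 * ((n : ℝ) - 1)) := by
    intro T hT
    rw [← sum_degree_tree hn (mem_trees.1 hT), Finset.mul_sum, ← Finset.sum_add_distrib]
    apply Finset.sum_congr rfl
    intro v _
    ring
  rw [Finset.sum_congr rfl h1, Finset.sum_add_distrib, Finset.sum_comm, Finset.sum_const,
    nsmul_eq_mul, card_trees hn]
  have h2 : ∑ v : Fin n, ∑ T ∈ trees n, ((T.degree v : ℝ) * (T.degree v - 1)) ≤
      ∑ _v : Fin n, 4 * (n : ℝ) ^ (n - 2) := Finset.sum_le_sum (fun v _ => deg_bound hn v)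
  rw [Finset.sum_const, Finset.card_univ, Fintype.card_fin, nsmul_eq_mul] at h2
  have : (0 : ℝ) ≤ (n : ℝ) ^ (n - 2) := by positivity
  nlinarith

open Classical in
lemma prob_eq (n m : ℕ) : probCommonEdgesEq n m =
    (∑ T ∈ trees n, (#{S ∈ trees n | Nat.card (S ⊓ T).edgeSet = m} : ℝ)) /
      (n : ℝ) ^ (2 * (n - 2)) := by
  unfold probCommonEdgesEq
  congr 1
  rw [Nat.card_eq_fintype_card, Fintype.card_subtype, Finset.card_filter]
  push_cast
  rw [Fintype.sum_prod_type]
  unfold trees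
  rw [Finset.sum_filter]
  apply Finset.sum_congr rfl
  intro T _
  by_cases hT : T.IsTree
  · rw [if_pos hT, Finset.card_filter, Finset.sum_filter]
    push_cast
    apply Finset.sum_congr rfl
    intro S _
    rw [inf_comm]
    by_cases hS : S.IsTree <;> simp [hT, hS]
  · rw [if_neg hT]
    apply Finset.sum_eq_zero
    intro S _
    simp [hT]

lemma tv_main {n : ℕ} (hn : 2 ≤ n) :
    (Summable fun m => |probCommonEdgesEq n m - poi (2 - 2 / n) m|) ∧
      ∑' m, |probCommonEdgesEq n m - poi (2 - 2 / n) m| ≤ 16 / n := by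
  classical
  have hn0 : (0 : ℝ) < n := by positivity
  set τ : ℝ := (n : ℝ) ^ (n - 2) with hτ
  have hτ0 : 0 < τ := by positivity
  choose p hp hpoly hs hs2 using fun G : SimpleGraph (Fin n) => exists_bernoulli hn G
  let q : SimpleGraph (Fin n) → ℕ → ℝ := fun T m =>
    (∏ i, (Polynomial.C (1 - p T i) + Polynomial.C (p T i) * Polynomial.X)).coeff m
  have hq : ∀ T m, (#{S ∈ trees n | Nat.card (S ⊓ T).edgeSet = m} : ℝ) = τ * q T m := by
    intro T m
    have h := congrArg (fun P => Polynomial.coeff P m) (hpoly T)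
    simp only [Polynomial.finsetSum_coeff, Polynomial.coeff_X_pow, Polynomial.coeff_C_mul] at h
    rw [Finset.card_filter]
    push_cast
    refine Eq.trans ?_ h
    apply Finset.sum_congr rfl
    intro S _
    simp only [eq_comm]
  have hprob : ∀ m, probCommonEdgesEq n m - poi (2 - 2 / n) m =
      (∑ T ∈ trees n, (q T m - poi (2 - 2 / n) m)) / τ := by
    intro m
    rw [prob_eq, Finset.sum_sub_distrib, Finset.sum_const, nsmul_eq_mul, card_trees hn,
      Finset.sum_congr rfl (fun T _ => hq T m), ← Finset.mul_sum]
    have : (n : ℝ) ^ (2 * (n - 2)) = τ * τ := by rw [hτ, ← pow_add]; congr 1; omega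
    rw [this, ← hτ]
    field_simp
  have hcam : ∀ T ∈ trees n, (Summable fun m => |q T m - poi (2 - 2 / n) m|) ∧
      ∑' m, |q T m - poi (2 - 2 / n) m| ≤
        2 * ((∑ v, ((T.degree v : ℝ) ^ 2 + T.degree v)) / n ^ 2) := by
    intro T hT
    have h := le_cam (p T) univ (hp T)
    rw [hs2 T, hs T, sum_degree_tree hn (mem_trees.1 hT)] at h
    have hmean : 2 * ((n : ℝ) - 1) / n = 2 - 2 / n := by field_simp
    rw [hmean] at h
    exact h
  have hle : ∀ m, |probCommonEdgesEq n m - poi (2 - 2 / n) m| ≤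
      (∑ T ∈ trees n, |q T m - poi (2 - 2 / n) m|) / τ := by
    intro m
    rw [hprob, abs_div, abs_of_pos hτ0]
    gcongr
    exact Finset.abs_sum_le_sum_abs _ _
  have hsum1 : Summable fun m => ∑ T ∈ trees n, |q T m - poi (2 - 2 / n) m| :=
    summable_sum (fun T hT => (hcam T hT).1)
  have hsum := Summable.of_nonneg_of_le (fun _ => abs_nonneg _) hle (hsum1.div_const τ)
  refine ⟨hsum, (Summable.tsum_le_tsum hle hsum (hsum1.div_const τ)).trans ?_⟩
  rw [tsum_div_const, Summable.tsum_finsetSum (fun T hT => (hcam T hT).1)]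
  have h1 := Finset.sum_le_sum (fun T hT => (hcam T hT).2)
  rw [← Finset.mul_sum, ← Finset.sum_div] at h1
  have h2 := deg_sum_bound hn
  rw [← hτ] at h2
  rw [div_le_iff₀ hτ0]
  refine h1.trans ?_
  rw [← mul_div_assoc, div_le_iff₀ (by positivity)]
  have h3 : 16 / (n : ℝ) * τ * n ^ 2 = 2 * (8 * n * τ) := by
    field_simp
    ring
  rw [h3]
  linarith

end TVTree

/-- For every `n ≥ 2`, the total variation distance between the law
of `Xₙ` and the Poisson distribution with mean `2 − 2/n` is at most `50/n`;
consequently, the total variation distance between the law of `Xₙ` and the Poisson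
distribution with mean `2` is at most `52/n`. -/
theorem tv_distance_bound (n : ℕ) (hn : 2 ≤ n) :
    tvDistPoisson n (2 - 2 / n) ≤ 50 / n ∧ tvDistPoisson n 2 ≤ 52 / n := by
  classical
  have hn0 : (0 : ℝ) < n := by positivity
  have hn2 : (2 : ℝ) ≤ n := by exact_mod_cast hn
  have h16 : (0 : ℝ) ≤ 1 / n := by positivity
  obtain ⟨h1, h2⟩ := TVTree.tv_main hn
  constructor
  · have h3 : tvDistPoisson n (2 - 2 / n) =
        (1 / 2) * ∑' m, |probCommonEdgesEq n m - TVTree.poi (2 - 2 / n) m| := rfl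
    rw [h3]
    have : (16 : ℝ) / n = 16 * (1 / n) := by ring
    have : (50 : ℝ) / n = 50 * (1 / n) := by ring
    linarith
  · have h3 : tvDistPoisson n 2 =
        (1 / 2) * ∑' m, |probCommonEdgesEq n m - TVTree.poi 2 m| := rfl
    have h4 : (0 : ℝ) ≤ 2 - 2 / n := by
      rw [sub_nonneg, div_le_iff₀ hn0]; linarith
    have h5 : (0 : ℝ) ≤ 2 / n := by positivity
    obtain ⟨s1, s2⟩ := TVTree.poi_shift h4 h5
    have h6 : (2 : ℝ) / n + (2 - 2 / n) = 2 := by ring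
    rw [h6] at s1 s2
    have hle : ∀ m, |probCommonEdgesEq n m - TVTree.poi 2 m| ≤
        |probCommonEdgesEq n m - TVTree.poi (2 - 2 / n) m| +
          |TVTree.poi (2 - 2 / n) m - TVTree.poi 2 m| := fun m => abs_sub_le _ _ _
    have hs := Summable.of_nonneg_of_le (fun _ => abs_nonneg _) hle (h1.add s1)
    have h7 := Summable.tsum_le_tsum hle hs (h1.add s1)
    rw [Summable.tsum_add h1 s1] at h7
    rw [h3]
    have : (16 : ℝ) / n = 16 * (1 / n) := by ring
    have : (2 : ℝ) / n = 2 * (1 / n) := by ring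
    have : (52 : ℝ) / n = 52 * (1 / n) := by ring
    linarith
end
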